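/- With high probability, the random colored digraph Γ described in the context contains a rainbow directed Hamilton cycle, i.e., a directed Hamilton cycle all of whose edges have pairwise distinct colors. -/

import Mathlib

open MeasureTheory Filter

/-- The Bernoulli measure on `Bool` with success probability `p` (clamped into `[0,1]`;
for `0 ≤ p ≤ 1` this is the genuine Bernoulli measure). -/
noncomputable def bernoulliM (p : ℝ) : Measure Bool :=
  (PMF.bernoulli (min (Real.toNNReal p) 1) (min_le_right _ _)).toMeasure

instance (p : ℝ) : IsProbabilityMeasure (bernoulliM p) := by
  unfold bernoulliM; infer_instance

instance {α : Type*} : MeasurableSpace (Finset α) := ⊤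

/-- The uniform probability measure on a finite set (zero measure if the set is empty). -/
noncomputable def uniformOn {α : Type*} [MeasurableSpace α] (s : Finset α) : Measure α :=
  if h : s.Nonempty then (PMF.uniformOfFinset s h).toMeasure else 0

instance {α : Type*} [MeasurableSpace α] (s : Finset α) : SigmaFinite (uniformOn s) := by
  unfold uniformOn
  split
  · infer_instance
  · infer_instance

/-- `θ₁ = θ₃ = min(θ/3, ε₂/4)` where `ε₂ = ε/3`. -/
noncomputable def th1 (ε θ : ℝ) : ℝ := min (θ / 3) (ε / 3 / 4)

/-- `L = max(15·e^{40/(ε₃θ₃)}, 7/θ₁)` where `ε₃ = ε/3` and `θ₃ = θ₁`. -/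
noncomputable def Lparam (ε θ : ℝ) : ℝ :=
  max (15 * Real.exp (40 / (ε / 3 * th1 ε θ))) (7 / th1 ε θ)

/-- The collection of admissible neighbor sets for vertex `k`: subsets of the other
`r - 1` vertices of size exactly `d`. -/
def validSets (r d : ℕ) (k : Fin r) : Finset (Finset (Fin r)) :=
  Finset.univ.filter fun S => S.card = d ∧ k ∉ S

/-- The sample space of the auxiliary colored digraph `Γ` on `Fin r`: for each vertex a
pair (out-neighbor set, in-neighbor set); a color in `Fin C` for each potential directed
edge; and a deletion coin for each potential directed edge. -/
abbrev GammaSpace (r C : ℕ) : Type :=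
  (∀ _ : Fin r, Finset (Fin r) × Finset (Fin r)) ×
    ((Fin r × Fin r) → Fin C) × ((Fin r × Fin r) → Bool)

/-- The law of the random colored digraph `Γ`: independently for each vertex `k`, a
uniformly random set of `δ⁺ k` out-neighbors and a uniformly random set of `δ⁻ k`
in-neighbors among the other `r - 1` vertices; independently a uniformly random color
from `Fin C` for each potential directed edge; and independently a deletion coin with
success probability `q₀` for each potential directed edge (used only on edges of
`E₁ \ F₁`). -/
noncomputable def gammaM (r C : ℕ) (δp δm : Fin r → ℕ) (q₀ : ℝ) :
    Measure (GammaSpace r C) :=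
  (Measure.pi fun k =>
      (uniformOn (validSets r (δp k) k)).prod (uniformOn (validSets r (δm k) k))).prod
    ((Measure.pi fun _ : Fin r × Fin r => uniformOn (Finset.univ : Finset (Fin C))).prod
      (Measure.pi fun _ : Fin r × Fin r => bernoulliM q₀))

/-- The directed edge `e` lies in `E₁`: it was generated as an out-choice of its tail or
as an in-choice of its head. -/
def memE1 {r C : ℕ} (ω : GammaSpace r C) (e : Fin r × Fin r) : Prop :=
  e.2 ∈ (ω.1 e.1).1 ∨ e.1 ∈ (ω.1 e.2).2

/-- The directed edge `e` lies in `F₁`: it was doubly generated, both as an out-choice of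
its tail and as an in-choice of its head. -/
def memF1 {r C : ℕ} (ω : GammaSpace r C) (e : Fin r × Fin r) : Prop :=
  e.2 ∈ (ω.1 e.1).1 ∧ e.1 ∈ (ω.1 e.2).2

/-- The directed edge `e` is an edge of `Γ`: it lies in `E₁` and, if it is not doubly
generated, it survives the independent deletion coin. -/
def memGamma {r C : ℕ} (ω : GammaSpace r C) (e : Fin r × Fin r) : Prop :=
  memE1 ω e ∧ (memF1 ω e ∨ ω.2.2 e = false)

/-- `Γ` contains a rainbow directed Hamilton cycle: a cyclic ordering `f` of all `r`
vertices such that each consecutive directed edge is an edge of `Γ` and the colors of the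
`r` cycle edges are pairwise distinct. -/
def HasRainbowDirHamCycle {r C : ℕ} (ω : GammaSpace r C) : Prop :=
  ∃ f : ZMod r → Fin r, Function.Bijective f ∧
    (∀ i : ZMod r, memGamma ω (f i, f (i + 1))) ∧
    Function.Injective fun i : ZMod r => ω.2.1 (f i, f (i + 1))

/-!
Sample the choices of every vertex with replacement and split them into `G` groups. A pattern
prescribes one group for each vertex as a tail and one for each vertex as a head. With high
probability Hall's theorem, applied first to the colours and then to the targets, turns a pattern
into a rainbow permutation `M` of the vertices that only uses choices of the prescribed groups, and
two of its arcs can be switched to give a rainbow permutation of the opposite sign.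

Renaming the heads of all arcs by a uniform permutation `φ` preserves the law of the model, so it is
enough that `φ * M` is a full cycle for one of these permutations `M`, and this follows from the
second moment method. By Boccara's formula the number of full cycles `φ` on `n` points for which
`β * φ` is a full cycle equals `(n - 1)! ∫₀¹ det ((1 - x) I + x P_β) dx`, and Hadamard's inequality
bounds the determinant when `β` moves many points. Pairs of opposite sign contribute nothing, which
compensates a factor two in the contribution of the pairs of equal sign; and two patterns rarely
produce permutations that agree at many points.

Markov kernels between finite probability spaces finally turn sampling with replacement into
uniform neighbour sets, and marks into a colour and a deletion coin.
-/

section FullCycle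

open Equiv

/-- A permutation is a full cycle if all points lie in a single orbit. -/
def IsFullCycle {α : Type*} (σ : Perm α) : Prop := σ.IsCycleOn Set.univ

lemma isFullCycle_iff {α : Type*} {σ : Perm α} : IsFullCycle σ ↔ ∀ x y, σ.SameCycle x y := by
  simp [IsFullCycle, Perm.IsCycleOn, Set.bijOn_univ, σ.bijective]

lemma isFullCycle_conj {α : Type*} {σ : Perm α} (hσ : IsFullCycle σ) (τ : Perm α) :
    IsFullCycle (τ * σ * τ⁻¹) := by
  simpa [IsFullCycle, Set.image_univ, τ.surjective.range_eq] using hσ.conj (g := τ)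

lemma sameCycle_map {α β : Type*} {σ : Perm α} {π : Perm β} (f : β → α)
    (h : ∀ y, σ.SameCycle (f y) (f (π y))) {a b : β} (hab : π.SameCycle a b) :
    σ.SameCycle (f a) (f b) := by
  obtain ⟨i, rfl⟩ := hab
  induction i using Int.induction_on with
  | zero => simpa using Perm.SameCycle.refl σ (f a)
  | succ i ih =>
    rw [add_comm, zpow_add, Perm.mul_apply, zpow_one]
    exact ih.trans (h _)
  | pred i ih =>
    have hstep : π ((π ^ (-(i : ℤ) - 1)) a) = (π ^ (-(i : ℤ))) a := by
      rw [← Perm.mul_apply, ← zpow_one_add]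
      congr 2
      ring
    exact ih.trans (hstep ▸ h _).symm

lemma sameCycle_of_decomposeFin_symm {n : ℕ} {q : Fin (n + 1)} {σ : Perm (Fin (n + 1))}
    {x y : Fin (n + 1)}
    (h : (Perm.decomposeFin.symm (q.succ, σ)).SameCycle x.succ y.succ) : σ.SameCycle x y := by
  let contract : Fin (n + 2) → Fin (n + 1) := Fin.cases q id
  suffices key : ∀ z, σ.SameCycle (contract z)
      (contract (Perm.decomposeFin.symm (q.succ, σ) z)) from
    sameCycle_map contract key h
  intro z
  cases z using Fin.cases with
  | zero => simp [contract, Perm.SameCycle.refl]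
  | succ z =>
    rw [Perm.decomposeFin_symm_apply_succ]
    by_cases hz : σ z = q
    · exact ⟨1, by simp [contract, hz]⟩
    · rw [swap_apply_of_ne_of_ne (Fin.succ_ne_zero _) (by simpa using hz)]
      exact ⟨1, by simp [contract]⟩

lemma sameCycle_decomposeFin_symm_succ {n : ℕ} (p : Fin (n + 2)) {σ : Perm (Fin (n + 1))}
    {x y : Fin (n + 1)} (h : σ.SameCycle x y) :
    (Perm.decomposeFin.symm (p, σ)).SameCycle x.succ y.succ := by
  refine sameCycle_map Fin.succ (fun z => ?_) h
  by_cases hz : (σ z).succ = p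
  · exact ⟨2, by rw [zpow_two]; simp [hz]⟩
  · exact ⟨1, by simp [swap_apply_of_ne_of_ne (Fin.succ_ne_zero _) hz]⟩

lemma isFullCycle_decomposeFin_symm_iff {n : ℕ} (p : Fin (n + 2)) (σ : Perm (Fin (n + 1))) :
    IsFullCycle (Perm.decomposeFin.symm (p, σ)) ↔ p ≠ 0 ∧ IsFullCycle σ := by
  simp only [isFullCycle_iff]
  constructor
  · intro hfull
    have hp : p ≠ 0 := by
      rintro rfl
      exact absurd ((hfull 0 1).eq_of_left (by simp [Function.IsFixedPt])) (by simp)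
    obtain ⟨q, rfl⟩ := Fin.exists_succ_eq.mpr hp
    exact ⟨hp, fun x y => sameCycle_of_decomposeFin_symm (hfull x.succ y.succ)⟩
  · rintro ⟨hp, hσ⟩
    obtain ⟨q, rfl⟩ := Fin.exists_succ_eq.mpr hp
    have hzero (x : Fin (n + 1)) :
        (Perm.decomposeFin.symm (q.succ, σ)).SameCycle 0 x.succ :=
      (show Perm.SameCycle _ 0 q.succ from ⟨1, by simp⟩).trans
        (sameCycle_decomposeFin_symm_succ q.succ (hσ q x))
    intro x y
    cases x using Fin.cases <;> cases y using Fin.cases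
    · exact Perm.SameCycle.refl _ _
    · exact hzero _
    · exact (hzero _).symm
    · exact sameCycle_decomposeFin_symm_succ q.succ (hσ _ _)

open Classical in
/-- The number of full cycles `φ` for which `β * φ` is a full cycle as well. -/
noncomputable def bicyclicCount {n : ℕ} (β : Perm (Fin n)) : ℕ :=
  (Finset.univ.filter fun φ : Perm (Fin n) => IsFullCycle φ ∧ IsFullCycle (β * φ)).card

/-- The permutation of the nonzero points that remains when `p` is moved to the front of `β` and
the resulting preimage `0` of `β p` is removed; see `mul_swap_zero_eq_decomposeFin_symm`. -/
def reduceAt {n : ℕ} (β : Perm (Fin (n + 2))) (p : Fin (n + 2)) : Perm (Fin (n + 1)) :=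
  (Perm.decomposeFin (β * swap 0 p)).2

lemma mul_swap_zero_eq_decomposeFin_symm {n : ℕ} (β : Perm (Fin (n + 2))) (p : Fin (n + 2)) :
    β * swap 0 p = Perm.decomposeFin.symm (β p, reduceAt β p) := by
  have hfst : (Perm.decomposeFin (β * swap 0 p)).1 = β p := by
    rw [← Perm.decomposeFin_symm_apply_zero (Perm.decomposeFin (β * swap 0 p)).1 (reduceAt β p),
      reduceAt, Prod.mk.eta, Equiv.symm_apply_apply, Perm.mul_apply, swap_apply_left]
  rw [← hfst, reduceAt, Prod.mk.eta, Equiv.symm_apply_apply]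

lemma mul_decomposeFin_symm {n : ℕ} (β : Perm (Fin (n + 2))) (p : Fin (n + 2))
    (σ : Perm (Fin (n + 1))) :
    β * Perm.decomposeFin.symm (p, σ) =
      Perm.decomposeFin.symm (β p, reduceAt β p * σ) := by
  have hswap : Perm.decomposeFin.symm (p, σ) =
      swap 0 p * Perm.decomposeFin.symm (0, σ) := by
    ext x : 1
    cases x using Fin.cases <;> simp
  rw [hswap, ← mul_assoc, mul_swap_zero_eq_decomposeFin_symm]
  ext x : 1
  cases x using Fin.cases <;> simp

lemma bicyclicCount_eq_sum {n : ℕ} (β : Perm (Fin (n + 2))) :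
    bicyclicCount β = ∑ p with p ≠ 0 ∧ β p ≠ 0, bicyclicCount (reduceAt β p) := by
  classical
  have hsplit (p : Fin (n + 2)) (σ : Perm (Fin (n + 1))) :
      (IsFullCycle (Perm.decomposeFin.symm (p, σ)) ∧
        IsFullCycle (β * Perm.decomposeFin.symm (p, σ))) ↔
      ((p ≠ 0 ∧ β p ≠ 0) ∧ IsFullCycle σ ∧ IsFullCycle (reduceAt β p * σ)) := by
    rw [mul_decomposeFin_symm, isFullCycle_decomposeFin_symm_iff,
      isFullCycle_decomposeFin_symm_iff]
    tauto
  simp only [bicyclicCount]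
  rw [Finset.card_filter, ← Equiv.sum_comp Perm.decomposeFin.symm, Fintype.sum_prod_type,
    Finset.sum_filter]
  refine Finset.sum_congr rfl fun p _ => ?_
  simp only [hsplit, Finset.card_filter]
  split_ifs with hp
  · simp only [hp, true_and, ne_eq, not_false_eq_true]
  · simp only [hp, false_and, if_false, Finset.sum_const_zero]

end FullCycle

section PermPencil

open Equiv Matrix

lemma det_updateRow_updateRow_comm {ι R : Type*} [Fintype ι] [DecidableEq ι] [CommRing R]
    (A : Matrix ι ι R) {i j : ι} (hij : i ≠ j) (u v : ι → R) :
    ((A.updateRow i u).updateRow j v).det = -((A.updateRow i v).updateRow j u).det := by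
  have hrows : (A.updateRow i u).updateRow j v =
      ((A.updateRow i v).updateRow j u).submatrix (swap i j) id := by
    ext k l
    by_cases hi : k = i
    · subst hi
      simp [updateRow_ne hij]
    by_cases hj : k = j
    · subst hj
      simp [updateRow_ne hij]
    simp [updateRow_apply, hi, hj, swap_apply_of_ne_of_ne hi hj]
  rw [hrows, det_permute, Perm.sign_swap hij]
  simp

/-- The matrix `a I + b P_β`. -/
def permPencil {ι R : Type*} [DecidableEq ι] [CommRing R] (a b : R) (β : Perm ι) :
    Matrix ι ι R :=
  a • 1 + b • β.permMatrix R

variable {ι R : Type*} [DecidableEq ι] [CommRing R]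

lemma permPencil_row (a b : R) (β : Perm ι) (i : ι) :
    permPencil a b β i = a • Pi.single i 1 + b • Pi.single (β i) 1 := by
  ext j
  simp [permPencil, Perm.permMatrix, PEquiv.toMatrix_apply, Matrix.one_apply, Pi.single_apply,
    eq_comm]

lemma permPencil_apply (a b : R) (β : Perm ι) (i j : ι) :
    permPencil a b β i j = a * (if j = i then 1 else 0) + b * (if j = β i then 1 else 0) := by
  simp [permPencil_row, Pi.single_apply]

lemma adjugate_mulVec_one [Fintype ι] {A : Matrix ι ι R} (hA : A *ᵥ 1 = 1) :
    A.adjugate *ᵥ 1 = A.det • 1 := by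
  conv_lhs => rw [← hA, mulVec_mulVec, adjugate_mul, smul_mulVec, one_mulVec]

lemma one_vecMul_adjugate [Fintype ι] {A : Matrix ι ι R} (hA : 1 ᵥ* A = 1) :
    1 ᵥ* A.adjugate = A.det • 1 := by
  conv_lhs => rw [← hA, vecMul_vecMul, mul_adjugate, vecMul_smul, vecMul_one]

lemma permPencil_mulVec_one [Fintype ι] {a b : R} (hab : a + b = 1) (β : Perm ι) :
    permPencil a b β *ᵥ 1 = 1 := by
  rw [permPencil, add_mulVec, smul_mulVec, smul_mulVec, one_mulVec, permMatrix_mulVec,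
    Pi.one_comp, ← add_smul, hab, one_smul]

lemma one_vecMul_permPencil [Fintype ι] {a b : R} (hab : a + b = 1) (β : Perm ι) :
    1 ᵥ* permPencil a b β = 1 := by
  rw [permPencil, vecMul_add, vecMul_smul, vecMul_smul, vecMul_one, vecMul_permMatrix,
    Pi.one_comp, ← add_smul, hab, one_smul]

lemma sum_erase_adjugate_col_permPencil [Fintype ι] {a b : R} (hab : a + b = 1) (β : Perm ι)
    (i : ι) :
    ∑ z ∈ Finset.univ.erase i, (permPencil a b β).adjugate z i =
      (permPencil a b β).det - (permPencil a b β).adjugate i i := by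
  have hsum := congrFun (one_vecMul_adjugate (one_vecMul_permPencil hab β)) i
  simp only [vecMul, dotProduct, Pi.one_apply, one_mul, Pi.smul_apply, smul_eq_mul,
    mul_one] at hsum
  rw [← hsum, Finset.sum_erase_eq_sub (Finset.mem_univ i)]

lemma sum_erase_adjugate_row_permPencil [Fintype ι] {a b : R} (hab : a + b = 1) (β : Perm ι)
    (i : ι) :
    ∑ z ∈ Finset.univ.erase i, (permPencil a b β).adjugate i z =
      (permPencil a b β).det - (permPencil a b β).adjugate i i := by
  have hsum := congrFun (adjugate_mulVec_one (permPencil_mulVec_one hab β)) i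
  simp only [mulVec, dotProduct, Pi.one_apply, mul_one, Pi.smul_apply, smul_eq_mul] at hsum
  rw [← hsum, Finset.sum_erase_eq_sub (Finset.mem_univ i)]

lemma det_updateRow_permPencil_decomposeFin {n : ℕ} (a b : R) {p : Fin (n + 2)} (hp : p ≠ 0)
    (τ : Perm (Fin (n + 1))) :
    ((permPencil a b (Perm.decomposeFin.symm (p, τ))).updateRow 0
      (Pi.single p 1 - Pi.single 0 1)).det = -(permPencil a b τ).det := by
  set B := (permPencil a b (Perm.decomposeFin.symm (p, τ))).updateRow 0
    (Pi.single p 1 - Pi.single 0 1) with hB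
  set B' := B.updateCol p fun k => B k p + B k 0 with hB'
  have hrow : B' 0 = -Pi.single 0 1 := by
    ext j
    by_cases hj : j = p <;> simp [hB', hB, hj, hp, hp.symm]
  have hminor : B'.submatrix Fin.succ (Fin.succAbove 0) = permPencil a b τ := by
    ext i j
    simp only [submatrix_apply, Fin.succAbove_zero, hB', updateCol_apply, hB, permPencil_apply,
      updateRow_apply, Fin.succ_ne_zero, if_false, Perm.decomposeFin_symm_apply_succ]
    by_cases ht : (τ i).succ = p
    · rw [ht, swap_apply_right, ← ht]
      by_cases hj : j = τ i <;> simp [hj, (Fin.succ_ne_zero _).symm]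
    · rw [swap_apply_of_ne_of_ne (Fin.succ_ne_zero _) ht]
      by_cases hj : j.succ = p
      · have hne : j ≠ τ i := by
          rintro rfl
          exact ht hj
        simp [← hj, hne, (Fin.succ_ne_zero _).symm]
      · simp [hj]
  rw [← det_updateCol_add_self B hp, ← hB', det_succ_row_zero, Finset.sum_eq_single 0]
  · rw [hminor, hrow]
    simp
  · intro j _ hj
    simp [hrow, hj]
  · simp

lemma det_updateRow_updateRow_permPencil {n : ℕ} (a b : R) (β : Perm (Fin (n + 2)))
    {z : Fin (n + 2)} (hz : z ≠ 0) :
    (((permPencil a b β).updateRow 0 (a • Pi.single z 1 + b • Pi.single (β 0) 1)).updateRow z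
      (b • Pi.single (β z) 1 - b • Pi.single 0 1)).det =
      if β z ≠ 0 then b * (permPencil a b (reduceAt β z)).det else 0 := by
  have hrows : ((permPencil a b β).updateRow 0
      (b • Pi.single (β z) 1 - b • Pi.single 0 1)).updateRow z
        (a • Pi.single z 1 + b • Pi.single (β 0) 1) =
      (permPencil a b (β * swap 0 z)).updateRow 0 (b • (Pi.single (β z) 1 - Pi.single 0 1)) := by
    ext i : 1
    by_cases h0 : i = 0
    · simp [h0, updateRow_ne hz.symm, smul_sub]
    by_cases hi : i = z
    · simp [hi, updateRow_ne hz, permPencil_row]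
    · simp [updateRow_ne, h0, hi, permPencil_row, swap_apply_of_ne_of_ne h0 hi]
  rw [det_updateRow_updateRow_comm _ hz.symm, hrows, det_updateRow_smul]
  split_ifs with hβz
  · rw [mul_swap_zero_eq_decomposeFin_symm, det_updateRow_permPencil_decomposeFin a b hβz]
    ring
  · rw [not_not.mp hβz, sub_self, det_eq_zero_of_row_eq_zero 0 (by simp)]
    simp

lemma det_updateRow_updateRow_expand [Fintype ι] (A : Matrix ι ι R) {a b : R} (hab : a + b = 1)
    {i j : ι} (hij : i ≠ j) :
    ((A.updateRow i (A i + a • (Pi.single j 1 - Pi.single i 1))).updateRow j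
      (A j - a • Pi.single j 1 - b • Pi.single i 1)).det =
    A.det + a * A.adjugate j i - a * A.adjugate i i - a * A.adjugate j j - b * A.adjugate i j
      + a * (A.updateRow i (Pi.single i 1)).adjugate j j := by
  have hrow_j (u : ι → R) :
      ((A.updateRow i u).updateRow j (A j - a • Pi.single j 1 - b • Pi.single i 1)).det =
        (A.updateRow i u).det - a * ((A.updateRow i u).updateRow j (Pi.single j 1)).det
          - b * ((A.updateRow i u).updateRow j (Pi.single i 1)).det := by
    have hself : (A.updateRow i u).updateRow j (A j) = A.updateRow i u := by
      rw [← updateRow_ne (M := A) (b := u) hij.symm, updateRow_eq_self]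
    rw [sub_eq_add_neg, sub_eq_add_neg, ← neg_smul, ← neg_smul, det_updateRow_add,
      det_updateRow_add, det_updateRow_smul, det_updateRow_smul, hself]
    ring
  have hrow_i (B : Matrix ι ι R) (hB : B i = A i) :
      (B.updateRow i (A i + a • (Pi.single j 1 - Pi.single i 1))).det =
        B.det + a * (B.updateRow i (Pi.single j 1)).det
          - a * (B.updateRow i (Pi.single i 1)).det := by
    rw [smul_sub, ← add_sub_assoc, sub_eq_add_neg, ← neg_smul, det_updateRow_add,
      det_updateRow_add, det_updateRow_smul, det_updateRow_smul, ← hB, updateRow_eq_self]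
    ring
  have hcomm (u v : ι → R) :
      (A.updateRow j v).updateRow i u = (A.updateRow i u).updateRow j v :=
    updateRow_comm A hij.symm v u
  have hrepeat (u : ι → R) : ((A.updateRow i u).updateRow j u).det = 0 :=
    det_zero_of_row_eq hij (by simp [updateRow_ne hij])
  rw [hrow_j, hrow_i A rfl, ← hcomm, ← hcomm, hrow_i _ (updateRow_ne hij),
    hrow_i _ (updateRow_ne hij), hcomm, hcomm, hcomm, hcomm, hrepeat, hrepeat,
    det_updateRow_updateRow_comm A hij (Pi.single j 1)]
  obtain rfl : b = 1 - a := by rw [← hab]; ring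
  simp only [adjugate_apply]
  ring

lemma det_permPencil_reduceAt {n : ℕ} {a b : R} (hab : a + b = 1) (β : Perm (Fin (n + 2)))
    {z : Fin (n + 2)} (hz : z ≠ 0) :
    (if β z ≠ 0 then b * (permPencil a b (reduceAt β z)).det else 0) =
      (permPencil a b β).det + a * (permPencil a b β).adjugate z 0
        - a * (permPencil a b β).adjugate 0 0 - a * (permPencil a b β).adjugate z z
        - b * (permPencil a b β).adjugate 0 z
        + a * ((permPencil a b β).updateRow 0 (Pi.single 0 1)).adjugate z z := by
  rw [← det_updateRow_updateRow_expand _ hab hz.symm,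
    ← det_updateRow_updateRow_permPencil a b β hz]
  congr 2
  · rw [permPencil_row]
    congr 1
    module
  · rw [permPencil_row]
    module

lemma sum_erase_adjugate_diag [Fintype ι] (A : Matrix ι ι R) (i : ι) :
    ∑ z ∈ Finset.univ.erase i, A.adjugate z z = A.adjugate.trace - A.adjugate i i := by
  rw [Finset.sum_erase_eq_sub (Finset.mem_univ i)]
  rfl

lemma sum_det_permPencil_reduceAt {n : ℕ} {a b : R} (hab : a + b = 1)
    (β : Perm (Fin (n + 2))) {A A₀ : Matrix (Fin (n + 2)) (Fin (n + 2)) R}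
    (hA : A = permPencil a b β) (hA₀ : A₀ = A.updateRow 0 (Pi.single 0 1)) :
    b * ∑ z with z ≠ 0 ∧ β z ≠ 0, (permPencil a b (reduceAt β z)).det =
      (n + 1) * A.det + a * (A.det - A₀.det) - a * (n + 1) * A₀.det
        - a * (A.adjugate.trace - A₀.det) - b * (A.det - A₀.det)
        + a * (A₀.adjugate.trace - A₀.det) := by
  have hadj : A.adjugate 0 0 = A₀.det := by rw [hA₀, adjugate_apply]
  have hadj₀ : A₀.adjugate 0 0 = A₀.det := by rw [hA₀, adjugate_apply, updateRow_idem]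
  have hterm (z : Fin (n + 2)) (hz : z ∈ Finset.univ.erase 0) :
      b * (if z ≠ 0 ∧ β z ≠ 0 then (permPencil a b (reduceAt β z)).det else 0) =
        A.det + a * A.adjugate z 0 - a * A.adjugate 0 0 - a * A.adjugate z z
          - b * A.adjugate 0 z + a * A₀.adjugate z z := by
    rw [hA₀, hA, ← det_permPencil_reduceAt hab β (Finset.ne_of_mem_erase hz)]
    simp [Finset.ne_of_mem_erase hz]
  have hcol := sum_erase_adjugate_col_permPencil hab β 0
  have hrow := sum_erase_adjugate_row_permPencil hab β 0
  rw [← hA] at hcol hrow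
  rw [Finset.sum_filter, Finset.mul_sum, ← Finset.add_sum_erase _ _ (Finset.mem_univ 0),
    Finset.sum_congr rfl hterm]
  simp only [Finset.sum_add_distrib, Finset.sum_sub_distrib, ← Finset.mul_sum, hcol, hrow,
    sum_erase_adjugate_diag, hadj, hadj₀, Finset.sum_const, nsmul_eq_mul,
    Finset.card_erase_of_mem (Finset.mem_univ (0 : Fin (n + 2))), Finset.card_univ,
    Fintype.card_fin, ne_eq, not_true_eq_false, false_and, if_false, mul_zero, zero_add]
  push_cast
  ring

end PermPencil

section BoccaraFormula

open Equiv Matrix Polynomial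

lemma derivative_det {ι R : Type*} [Fintype ι] [DecidableEq ι] [CommRing R]
    (A : Matrix ι ι R[X]) :
    derivative A.det = (A.adjugate * A.map derivative).trace := by
  have hdet (B : Matrix ι ι R[X]) :
      B.det = ∑ σ : Perm ι, ((Perm.sign σ : ℤ) : R[X]) * ∏ i, B i (σ i) := by
    rw [← det_transpose, det_apply']
    simp
  have htrace : (A.adjugate * A.map derivative).trace =
      ∑ z, (A.updateRow z fun j => derivative (A z j)).det := by
    rw [trace_mul_comm, trace]
    refine Finset.sum_congr rfl fun z _ => ?_
    rw [← cramer_transpose_apply, cramer_eq_adjugate_mulVec, ← adjugate_transpose]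
    simp [mul_apply, mulVec, dotProduct, mul_comm]
  simp only [htrace, hdet, derivative_sum]
  rw [Finset.sum_comm]
  refine Finset.sum_congr rfl fun σ _ => ?_
  rw [derivative_mul, derivative_intCast, zero_mul, zero_add, derivative_prod_finset,
    Finset.mul_sum]
  refine Finset.sum_congr rfl fun z _ => ?_
  rw [← Finset.mul_prod_erase _ _ (Finset.mem_univ z), updateRow_self, mul_comm (derivative _)]
  congr 2
  exact Finset.prod_congr rfl fun i hi => by rw [updateRow_ne (Finset.ne_of_mem_erase hi)]

lemma X_mul_derivative_det {ι R : Type*} [Fintype ι] [DecidableEq ι] [CommRing R]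
    {A : Matrix ι ι R[X]} (hA : (X : R[X]) • A.map derivative = A - 1) :
    X * derivative A.det = (Fintype.card ι : R[X]) * A.det - A.adjugate.trace := by
  rw [derivative_det, ← smul_eq_mul, ← trace_smul, ← mul_smul_comm, hA, mul_sub, mul_one,
    adjugate_mul, trace_sub, trace_smul, trace_one, smul_eq_mul, mul_comm]

/-- The matrix `(1 - X) I + X P_β`. -/
noncomputable def polyPencil {n : ℕ} (β : Perm (Fin n)) : Matrix (Fin n) (Fin n) ℝ[X] :=
  permPencil (1 - X) X β

/-- `polyPencil β` with its first row replaced by that of the identity matrix, so that its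
determinant is the principal minor of `polyPencil β` without the first row and column. -/
noncomputable def minorPencil {n : ℕ} (β : Perm (Fin (n + 1))) :
    Matrix (Fin (n + 1)) (Fin (n + 1)) ℝ[X] :=
  (polyPencil β).updateRow 0 (Pi.single 0 1)

lemma X_smul_derivative_polyPencil {n : ℕ} (β : Perm (Fin n)) :
    (X : ℝ[X]) • (polyPencil β).map derivative = polyPencil β - 1 := by
  ext1 i j
  simp only [polyPencil, Matrix.smul_apply, map_apply, Matrix.sub_apply, permPencil_apply,
    Matrix.one_apply, eq_comm (a := i), smul_eq_mul]
  split_ifs <;> simp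

lemma X_smul_derivative_minorPencil {n : ℕ} (β : Perm (Fin (n + 1))) :
    (X : ℝ[X]) • (minorPencil β).map derivative = minorPencil β - 1 := by
  ext1 i j
  obtain rfl | hi := eq_or_ne i 0
  · simp only [minorPencil, Matrix.smul_apply, map_apply, Matrix.sub_apply, updateRow_self,
      Pi.single_apply, Matrix.one_apply, eq_comm (a := (0 : Fin (n + 1)))]
    split_ifs <;> simp
  · simpa [minorPencil, updateRow_ne hi] using
      congrFun (congrFun (X_smul_derivative_polyPencil β) i) j

lemma sum_det_polyPencil_reduceAt {n : ℕ} (β : Perm (Fin (n + 2))) :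
    ∑ z with z ≠ 0 ∧ β z ≠ 0, (polyPencil (reduceAt β z)).det =
      ((n + 1 : ℕ) : ℝ[X]) * (polyPencil β).det +
        derivative ((1 - X) * ((polyPencil β).det - (minorPencil β).det)) := by
  apply mul_left_cancel₀ (X_ne_zero (R := ℝ))
  have hsum := sum_det_permPencil_reduceAt (A := polyPencil β) (A₀ := minorPencil β)
    (by ring : (1 - X : ℝ[X]) + X = 1) β rfl rfl
  have hdet := X_mul_derivative_det (X_smul_derivative_polyPencil β)
  have hminor := X_mul_derivative_det (X_smul_derivative_minorPencil β)
  refine hsum.trans ?_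
  simp only [derivative_mul, derivative_sub, derivative_X, derivative_one, Fintype.card_fin]
    at hdet hminor ⊢
  push_cast at hdet hminor ⊢
  linear_combination (1 - X : ℝ[X]) * hminor - (1 - X : ℝ[X]) * hdet

/-- The integral of a polynomial over the unit interval. -/
noncomputable def unitIntegral : ℝ[X] →ₗ[ℝ] ℝ where
  toFun p := ∫ x in (0 : ℝ)..1, p.eval x
  map_add' p q := by
    simp only [eval_add]
    exact intervalIntegral.integral_add (p.continuous.intervalIntegrable _ _)
      (q.continuous.intervalIntegrable _ _)
  map_smul' c p := by simp

lemma unitIntegral_apply (p : ℝ[X]) : unitIntegral p = ∫ x in (0 : ℝ)..1, p.eval x := rfl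

lemma unitIntegral_derivative (p : ℝ[X]) :
    unitIntegral (derivative p) = p.eval 1 - p.eval 0 :=
  intervalIntegral.integral_eq_sub_of_hasDerivAt (fun x _ => p.hasDerivAt x)
    ((derivative p).continuous.intervalIntegrable _ _)

lemma eval_det_polyPencil {n : ℕ} (β : Perm (Fin n)) (x : ℝ) :
    (polyPencil β).det.eval x = (permPencil (1 - x) x β).det := by
  rw [← coe_evalRingHom, RingHom.map_det]
  congr 1
  ext i j
  rw [RingHom.mapMatrix_apply, map_apply, polyPencil, permPencil_apply, permPencil_apply]
  split_ifs <;> simp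

lemma eval_zero_det_of_X_smul_derivative {n : ℕ} {A : Matrix (Fin n) (Fin n) ℝ[X]}
    (hA : (X : ℝ[X]) • A.map derivative = A - 1) : A.det.eval 0 = 1 := by
  have hone : (evalRingHom (0 : ℝ)).mapMatrix A = 1 := by
    have heval := congrArg (evalRingHom (0 : ℝ)).mapMatrix hA
    rw [map_sub, map_one, eq_comm, sub_eq_iff_eq_add] at heval
    rw [heval]
    ext i j
    simp
  rw [← coe_evalRingHom, RingHom.map_det, hone, det_one]

lemma bicyclicCount_fin_one (β : Perm (Fin 1)) : bicyclicCount β = 1 := by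
  simp [bicyclicCount, IsFullCycle, Perm.isCycleOn_of_subsingleton]

theorem boccara_formula {n : ℕ} (β : Perm (Fin (n + 1))) :
    (bicyclicCount β : ℝ) = n.factorial * unitIntegral (polyPencil β).det := by
  induction n with
  | zero =>
    have hdet (x : ℝ) : (polyPencil β).det.eval x = 1 := by
      rw [eval_det_polyPencil, det_fin_one, permPencil_apply]
      simp [Fin.fin_one_eq_zero (β 0)]
    simp only [unitIntegral_apply, hdet]
    simp [bicyclicCount_fin_one]
  | succ n ih =>
    have hint := congrArg unitIntegral (sum_det_polyPencil_reduceAt β)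
    rw [map_sum, map_add, unitIntegral_derivative, ← nsmul_eq_mul, map_nsmul, nsmul_eq_mul] at hint
    simp only [eval_mul, eval_sub, eval_one, eval_X, sub_self, zero_mul, mul_zero, add_zero,
      eval_zero_det_of_X_smul_derivative (X_smul_derivative_polyPencil β),
      eval_zero_det_of_X_smul_derivative (X_smul_derivative_minorPencil β)] at hint
    rw [bicyclicCount_eq_sum, Nat.factorial_succ, Nat.cast_sum, Nat.cast_mul,
      mul_comm ((n + 1 : ℕ) : ℝ), mul_assoc, ← hint, Finset.mul_sum]
    exact Finset.sum_congr rfl fun z _ => ih _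

end BoccaraFormula

section BicyclicCountBounds

open Equiv Matrix Polynomial

lemma abs_det_le_prod_sqrt_sum_sq {n : ℕ} (A : Matrix (Fin n) (Fin n) ℝ) :
    |A.det| ≤ ∏ i, √(∑ j, A i j ^ 2) := by
  have : Fact (Module.finrank ℝ (EuclideanSpace ℝ (Fin n)) = n) := ⟨by simp⟩
  let stdBasis := EuclideanSpace.basisFun (Fin n) ℝ
  let o := stdBasis.toBasis.orientation
  let rows : Fin n → EuclideanSpace ℝ (Fin n) := fun i => WithLp.toLp 2 (A i)
  have hdet : stdBasis.toBasis.det rows = A.det := by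
    rw [Module.Basis.det_apply, ← det_transpose]
    congr 1
  have hvol := o.abs_volumeForm_apply_le rows
  rw [o.volumeForm_robust' stdBasis rows, hdet] at hvol
  simpa [rows, EuclideanSpace.norm_eq] using hvol

lemma sqrt_sum_sq_permPencil_le {n : ℕ} (β : Perm (Fin n)) (x : ℝ) (i : Fin n) :
    √(∑ j, permPencil (1 - x) x β i j ^ 2) ≤
      if i ∈ β.support then Real.exp (-(x * (1 - x))) else 1 := by
  split_ifs with hi
  · have hne : i ≠ β i := (Perm.mem_support.mp hi).symm
    have hentry (j : Fin n) : permPencil (1 - x) x β i j ^ 2 =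
        (1 - x) ^ 2 * (if j = i then 1 else 0) + x ^ 2 * (if j = β i then 1 else 0) := by
      rw [permPencil_apply]
      by_cases hj : j = i <;> simp [hj, hne]
    have hnorm : ∑ j, permPencil (1 - x) x β i j ^ 2 = 2 * -(x * (1 - x)) + 1 := by
      simp only [hentry, Finset.sum_add_distrib, mul_ite, mul_one, mul_zero,
        Finset.sum_ite_eq', Finset.mem_univ, if_true]
      ring
    rw [hnorm, Real.sqrt_le_left (Real.exp_pos _).le, ← Real.exp_nat_mul, Nat.cast_two]
    exact Real.add_one_le_exp _
  · have hfix : β i = i := by simpa using hi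
    have hentry (j : Fin n) : permPencil (1 - x) x β i j ^ 2 = if j = i then 1 else 0 := by
      rw [permPencil_apply, hfix]
      split_ifs <;> simp
    simp [hentry]

lemma eval_det_polyPencil_le {n : ℕ} (β : Perm (Fin n)) (x : ℝ) :
    (polyPencil β).det.eval x ≤ Real.exp (-(β.support.card * (x * (1 - x)))) := by
  calc (polyPencil β).det.eval x ≤ |(permPencil (1 - x) x β).det| := by
        rw [eval_det_polyPencil]
        exact le_abs_self _
    _ ≤ ∏ i, √(∑ j, permPencil (1 - x) x β i j ^ 2) := abs_det_le_prod_sqrt_sum_sq _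
    _ ≤ ∏ i, if i ∈ β.support then Real.exp (-(x * (1 - x))) else 1 :=
        Finset.prod_le_prod (fun _ _ => Real.sqrt_nonneg _)
          fun i _ => sqrt_sum_sq_permPencil_le β x i
    _ = Real.exp (-(β.support.card * (x * (1 - x)))) := by
        rw [Finset.prod_ite_mem, Finset.univ_inter, Finset.prod_const, ← Real.exp_nat_mul,
          mul_neg]

lemma exp_neg_mul_quadratic_le {s η x : ℝ} (hs : 0 ≤ s) (hx : x ∈ Set.Icc (0 : ℝ) 1) :
    Real.exp (-(s * (x * (1 - x)))) ≤
      Real.exp (-(s * η / 2)) +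
        (Real.exp (-(s * (1 - η) * x)) + Real.exp (-(s * (1 - η) * (1 - x)))) := by
  obtain ⟨hx0, hx1⟩ := hx
  have hmid := Real.exp_pos (-(s * η / 2))
  have hleft := Real.exp_pos (-(s * (1 - η) * x))
  have hright := Real.exp_pos (-(s * (1 - η) * (1 - x)))
  rcases le_or_gt x η with hxη | hxη
  · have hexp : Real.exp (-(s * (x * (1 - x)))) ≤ Real.exp (-(s * (1 - η) * x)) := by
      rw [Real.exp_le_exp, mul_assoc]
      have : (1 - η) * x ≤ x * (1 - x) := by nlinarith
      nlinarith
    linarith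
  rcases le_or_gt (1 - x) η with hxη' | hxη'
  · have hexp : Real.exp (-(s * (x * (1 - x)))) ≤ Real.exp (-(s * (1 - η) * (1 - x))) := by
      rw [Real.exp_le_exp, mul_assoc]
      have : (1 - η) * (1 - x) ≤ x * (1 - x) := by nlinarith
      nlinarith
    linarith
  · have hexp : Real.exp (-(s * (x * (1 - x)))) ≤ Real.exp (-(s * η / 2)) := by
      rw [Real.exp_le_exp]
      have : η / 2 ≤ x * (1 - x) := by nlinarith
      nlinarith
    linarith

lemma integral_exp_neg_mul_le {c : ℝ} (hc : 0 < c) :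
    ∫ x in (0 : ℝ)..1, Real.exp (-(c * x)) ≤ 1 / c := by
  simp only [← neg_mul]
  rw [intervalIntegral.integral_comp_mul_left (f := Real.exp) (neg_ne_zero.mpr hc.ne'),
    integral_exp]
  simp only [smul_eq_mul, mul_one, mul_zero, Real.exp_zero, inv_neg, neg_mul, ← mul_neg, neg_sub]
  rw [one_div]
  exact mul_le_of_le_one_right (inv_nonneg.mpr hc.le) (by linarith [Real.exp_pos (-c)])

lemma integral_exp_neg_mul_one_sub_le {c : ℝ} (hc : 0 < c) :
    ∫ x in (0 : ℝ)..1, Real.exp (-(c * (1 - x))) ≤ 1 / c := by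
  rw [intervalIntegral.integral_comp_sub_left (fun x => Real.exp (-(c * x)))]
  simpa using integral_exp_neg_mul_le hc

lemma unitIntegral_det_polyPencil_le {n : ℕ} (β : Perm (Fin n)) {s η : ℝ} (hs : 0 < s)
    (hsupport : s ≤ β.support.card) (hη : η < 1) :
    unitIntegral (polyPencil β).det ≤ 2 / (s * (1 - η)) + Real.exp (-(s * η / 2)) := by
  set c := s * (1 - η)
  have hcpos : 0 < c := mul_pos hs (by linarith)
  have hpointwise (x : ℝ) (hx : x ∈ Set.Icc (0 : ℝ) 1) : (polyPencil β).det.eval x ≤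
      Real.exp (-(s * η / 2)) + (Real.exp (-(c * x)) + Real.exp (-(c * (1 - x)))) := by
    refine (eval_det_polyPencil_le β x).trans
      (le_trans ?_ (exp_neg_mul_quadratic_le hs.le hx))
    have hx' : 0 ≤ x * (1 - x) := mul_nonneg hx.1 (sub_nonneg.mpr hx.2)
    gcongr
  have hmono : unitIntegral (polyPencil β).det ≤ ∫ x in (0 : ℝ)..1,
      (Real.exp (-(s * η / 2)) + (Real.exp (-(c * x)) + Real.exp (-(c * (1 - x))))) :=
    intervalIntegral.integral_mono_on zero_le_one
      ((polyPencil β).det.continuous.intervalIntegrable _ _)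
      (Continuous.intervalIntegrable (by fun_prop) _ _) hpointwise
  rw [intervalIntegral.integral_add (by simp) (Continuous.intervalIntegrable (by fun_prop) _ _),
    intervalIntegral.integral_add (Continuous.intervalIntegrable (by fun_prop) _ _)
      (Continuous.intervalIntegrable (by fun_prop) _ _), intervalIntegral.integral_const, sub_zero,
    one_smul] at hmono
  have hleft := integral_exp_neg_mul_le hcpos
  have hright := integral_exp_neg_mul_one_sub_le hcpos
  have htwo : 2 / c = 1 / c + 1 / c := by ring
  linarith

lemma sign_of_isFullCycle {n : ℕ} {σ : Perm (Fin n)} (hσ : IsFullCycle σ) (hn : 2 ≤ n) :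
    Perm.sign σ = -(-1) ^ n := by
  have : Nontrivial (Fin n) := Fin.nontrivial_iff_two_le.mpr hn
  have hmove (x : Fin n) : σ x ≠ x := hσ.apply_ne Set.nontrivial_univ (Set.mem_univ x)
  have hcycle : σ.IsCycle :=
    ⟨⟨0, by lia⟩, hmove _, fun y _ => isFullCycle_iff.mp hσ _ y⟩
  have hsupport : σ.support = Finset.univ := by
    ext x
    simp [hmove x]
  rw [hcycle.sign, hsupport, Finset.card_univ, Fintype.card_fin]

lemma bicyclicCount_eq_zero_of_sign_ne_one {n : ℕ} (hn : 2 ≤ n) {β : Perm (Fin n)}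
    (hβ : Perm.sign β ≠ 1) : bicyclicCount β = 0 := by
  classical
  rw [bicyclicCount, Finset.card_eq_zero, Finset.filter_eq_empty_iff]
  rintro φ _ ⟨hφ, hβφ⟩
  have hsign := sign_of_isFullCycle hβφ hn
  rw [map_mul, sign_of_isFullCycle hφ hn] at hsign
  exact hβ (mul_eq_right.mp hsign)

open Classical in
lemma card_isFullCycle (n : ℕ) :
    (Finset.univ.filter fun φ : Perm (Fin (n + 1)) => IsFullCycle φ).card = n.factorial := by
  have hpencil (x : ℝ) : (polyPencil (1 : Perm (Fin (n + 1)))).det.eval x = 1 := by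
    rw [eval_det_polyPencil, permPencil, permMatrix_one, ← add_smul, sub_add_cancel, one_smul,
      det_one]
  have hcount := boccara_formula (1 : Perm (Fin (n + 1)))
  simp only [unitIntegral_apply, hpencil] at hcount
  simpa [bicyclicCount] using hcount

end BicyclicCountBounds

section UniformProbability

open scoped BigOperators

variable {α β ι X Y Z : Type*}

open Classical in
/-- The real-valued indicator of a proposition. -/
noncomputable def ind (p : Prop) : ℝ := if p then 1 else 0

lemma ind_true {p : Prop} (h : p) : ind p = 1 := if_pos h

lemma ind_false {p : Prop} (h : ¬p) : ind p = 0 := if_neg h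

lemma ind_nonneg (p : Prop) : 0 ≤ ind p := by
  unfold ind
  split_ifs <;> norm_num

lemma ind_le_one (p : Prop) : ind p ≤ 1 := by
  unfold ind
  split_ifs <;> norm_num

lemma ind_mono {p q : Prop} (h : p → q) : ind p ≤ ind q := by
  by_cases hp : p
  · rw [ind_true hp, ind_true (h hp)]
  · rw [ind_false hp]
    exact ind_nonneg q

lemma ind_and (p q : Prop) : ind (p ∧ q) = ind p * ind q := by
  by_cases hp : p <;> by_cases hq : q <;> simp [ind, hp, hq]

lemma ind_or_le (p q : Prop) : ind (p ∨ q) ≤ ind p + ind q := by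
  by_cases hp : p <;> by_cases hq : q <;> simp [ind, hp, hq]

lemma ind_not (p : Prop) : ind (¬p) = 1 - ind p := by
  by_cases hp : p <;> simp [ind, hp]

lemma ind_forall (S : Finset X) (p : X → Prop) : ind (∀ x ∈ S, p x) = ∏ x ∈ S, ind (p x) := by
  by_cases h : ∀ x ∈ S, p x
  · rw [ind_true h, Finset.prod_eq_one fun x hx => ind_true (h x hx)]
  · rw [ind_false h]
    push Not at h
    obtain ⟨x, hx, hp⟩ := h
    exact (Finset.prod_eq_zero hx (ind_false hp)).symm

variable [Fintype α] [Fintype β]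

lemma expect_prod_type (f : α × β → ℝ) : 𝔼 p, f p = 𝔼 a, 𝔼 b, f (a, b) := by
  rw [← Finset.univ_product_univ, Finset.expect_product]

lemma expect_fst [Nonempty β] (f : α → ℝ) : 𝔼 p : α × β, f p.1 = 𝔼 a, f a := by
  simp only [expect_prod_type, Fintype.expect_const]

/-- The probability of the event `p` under the uniform distribution on a finite type (`0` on an
empty type). -/
noncomputable def prob (p : α → Prop) : ℝ := 𝔼 x, ind (p x)

lemma prob_nonneg (p : α → Prop) : 0 ≤ prob p := Finset.expect_nonneg fun _ _ => ind_nonneg _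

lemma prob_mono {p q : α → Prop} (h : ∀ x, p x → q x) : prob p ≤ prob q :=
  Finset.expect_le_expect fun x _ => ind_mono (h x)

lemma prob_le_one (p : α → Prop) : prob p ≤ 1 := by
  cases isEmpty_or_nonempty α
  · simp [prob]
  · exact Finset.expect_le Finset.univ_nonempty fun x _ => ind_le_one (p x)

lemma prob_or_le (p q : α → Prop) : prob (fun x => p x ∨ q x) ≤ prob p + prob q := by
  unfold prob
  rw [← Finset.expect_add_distrib]
  exact Finset.expect_le_expect fun x _ => ind_or_le _ _

lemma prob_not [Nonempty α] (p : α → Prop) : prob (fun x => ¬p x) = 1 - prob p := by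
  unfold prob
  simp only [ind_not]
  rw [Finset.expect_sub_distrib, Fintype.expect_const]

lemma ind_exists_le (s : Finset ι) (p : ι → Prop) : ind (∃ i ∈ s, p i) ≤ ∑ i ∈ s, ind (p i) := by
  by_cases h : ∃ i ∈ s, p i
  · obtain ⟨i, hi, hp⟩ := h
    rw [ind_true ⟨i, hi, hp⟩, ← ind_true hp]
    exact Finset.single_le_sum (f := fun i => ind (p i)) (fun i _ => ind_nonneg _) hi
  · rw [ind_false h]
    exact Finset.sum_nonneg fun i _ => ind_nonneg _

lemma prob_exists_le (s : Finset ι) (p : ι → α → Prop) :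
    prob (fun x => ∃ i ∈ s, p i x) ≤ ∑ i ∈ s, prob (p i) := by
  unfold prob
  rw [← Finset.expect_sum_comm]
  exact Finset.expect_le_expect fun x _ => ind_exists_le s fun i => p i x

lemma prob_equiv (e : α ≃ β) (p : β → Prop) : prob (fun x => p (e x)) = prob p :=
  Fintype.expect_equiv e _ _ fun _ => rfl

lemma prob_prod_type (p : α × β → Prop) : prob p = 𝔼 a, prob fun b => p (a, b) :=
  expect_prod_type _

lemma prob_fst_and_snd (p : α → Prop) (q : β → Prop) :
    prob (fun x : α × β => p x.1 ∧ q x.2) = prob p * prob q := by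
  rw [prob_prod_type]
  simp only [prob, ind_and, ← Finset.mul_expect, ← Finset.expect_mul]

lemma prob_eq_card_filter_div (p : α → Prop) [DecidablePred p] :
    prob p = (Finset.univ.filter p).card / Fintype.card α := by
  have hind (x : α) : ind (p x) = if p x then 1 else 0 := by
    by_cases hx : p x <;> simp [ind, hx]
  simp only [prob, Fintype.expect_eq_sum_div_card, hind, Finset.sum_boole]

lemma prob_mem (B : Finset α) : prob (· ∈ B) = B.card / Fintype.card α := by
  classical
  rw [prob_eq_card_filter_div, Finset.filter_univ_mem]

lemma prob_le_expect_div {f : α → ℝ} (hf : ∀ x, 0 ≤ f x) {t : ℝ} (ht : 0 < t) :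
    prob (fun x => t ≤ f x) ≤ (𝔼 x, f x) / t := by
  rw [le_div_iff₀ ht, prob, Finset.expect_mul]
  refine Finset.expect_le_expect fun x _ => ?_
  by_cases hx : t ≤ f x
  · rwa [ind_true hx, one_mul]
  · rw [ind_false hx, zero_mul]
    exact hf x

lemma sq_expect_le_prob_ne_zero_mul (f : α → ℝ) :
    (𝔼 x, f x) ^ 2 ≤ prob (fun x => f x ≠ 0) * 𝔼 x, f x ^ 2 := by
  have hcs := Finset.expect_mul_sq_le_sq_mul_sq Finset.univ (fun x => ind (f x ≠ 0)) f
  have hmul (x : α) : ind (f x ≠ 0) * f x = f x := by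
    by_cases hx : f x = 0 <;> simp [ind, hx]
  have hsq (x : α) : ind (f x ≠ 0) ^ 2 = ind (f x ≠ 0) := by
    by_cases hx : f x = 0 <;> simp [ind, hx]
  simp only [hmul, hsq] at hcs
  exact hcs

lemma prob_eq_zero_le_div_sq_expect [Nonempty α] {f : α → ℝ} {D : ℝ} (hf : 0 < 𝔼 x, f x)
    (hD : 𝔼 x, f x ^ 2 ≤ (𝔼 x, f x) ^ 2 + D) :
    prob (fun x => f x = 0) ≤ D / (𝔼 x, f x) ^ 2 := by
  have hcs := sq_expect_le_prob_ne_zero_mul f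
  rw [prob_not] at hcs
  set E := 𝔼 x, f x
  set p := prob fun x => f x = 0
  have hp : 0 ≤ p := prob_nonneg _
  have hpE : E ^ 2 ≤ (1 - p) * (E ^ 2 + D) :=
    hcs.trans (mul_le_mul_of_nonneg_left hD (sub_nonneg.mpr (prob_le_one _)))
  have hED : 0 < E ^ 2 + D :=
    pos_of_mul_pos_right ((pow_pos hf 2).trans_le hpE) (sub_nonneg.mpr (prob_le_one _))
  have hD0 : 0 ≤ D := by nlinarith [mul_nonneg hp hED.le]
  rw [le_div_iff₀ (pow_pos hf 2)]
  nlinarith [mul_nonneg hp hD0]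

lemma prob_not_exists_le_div_sq [Nonempty α] (I : Finset ι) (A : ι → α → Prop) {D : ℝ}
    (hpos : 0 < ∑ i ∈ I, prob (A i))
    (hD : ∑ i ∈ I, ∑ j ∈ I, prob (fun x => A i x ∧ A j x) ≤ (∑ i ∈ I, prob (A i)) ^ 2 + D) :
    prob (fun x => ¬∃ i ∈ I, A i x) ≤ D / (∑ i ∈ I, prob (A i)) ^ 2 := by
  have hmean : 𝔼 x, ∑ i ∈ I, ind (A i x) = ∑ i ∈ I, prob (A i) := Finset.expect_sum_comm ..
  have hsquare : 𝔼 x, (∑ i ∈ I, ind (A i x)) ^ 2 =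
      ∑ i ∈ I, ∑ j ∈ I, prob fun x => A i x ∧ A j x := by
    simp only [sq, Finset.sum_mul_sum, ← ind_and, Finset.expect_sum_comm, prob]
  rw [← hmean] at hpos ⊢
  refine le_trans (prob_mono fun x hx => ?_)
    (prob_eq_zero_le_div_sq_expect hpos (hsquare.trans_le (by rwa [hmean])))
  exact Finset.sum_eq_zero fun i hi => ind_false fun hA => hx ⟨i, hi, hA⟩

variable [Fintype X] [Fintype Y] [Fintype Z] [DecidableEq X]

lemma expect_pi_prod (h : X → Y → ℝ) : 𝔼 f : X → Y, ∏ x, h x (f x) = ∏ x, 𝔼 y, h x y := by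
  simp only [Fintype.expect_eq_sum_div_card, Finset.prod_div_distrib, Finset.prod_univ_sum,
    Fintype.piFinset_univ, Fintype.card_fun, Finset.prod_const, Finset.card_univ, Nat.cast_pow]

lemma expect_comp_injective [DecidableEq Z] [Nonempty Y] {i : Z → X} (hi : Function.Injective i)
    (F : (Z → Y) → ℝ) : 𝔼 f : X → Y, F (f ∘ i) = 𝔼 g, F g := by
  classical
  let eX : (Z ⊕ ((Set.range i)ᶜ : Set X)) ≃ X :=
    (Equiv.sumCongr (Equiv.ofInjective i hi) (Equiv.refl _)).trans (Equiv.Set.sumCompl _)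
  let e : (X → Y) ≃ (Z → Y) × (((Set.range i)ᶜ : Set X) → Y) :=
    (Equiv.arrowCongr eX.symm (Equiv.refl Y)).trans (Equiv.sumArrowEquivProdArrow _ _ _)
  have hfst (f : X → Y) : (e f).1 = f ∘ i := by
    funext z
    simp [e, eX]
  rw [← expect_fst (β := ((Set.range i)ᶜ : Set X) → Y) F]
  exact Fintype.expect_equiv e _ _ fun f => by rw [hfst]

lemma prob_comp_injective [DecidableEq Z] [Nonempty Y] {i : Z → X} (hi : Function.Injective i)
    (p : (Z → Y) → Prop) : prob (fun f : X → Y => p (f ∘ i)) = prob p :=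
  expect_comp_injective hi fun g => ind (p g)

lemma prob_fst_comp [Nonempty Z] (p : (X → Y) → Prop) :
    prob (fun f : X → Y × Z => p (Prod.fst ∘ f)) = prob p := by
  have hsplit := prob_equiv (Equiv.arrowProdEquivProdArrow X (fun _ => Y) fun _ => Z)
    fun f => p f.1
  exact hsplit.trans (expect_fst fun f => ind (p f))

lemma expect_prod_comp_injective [Nonempty Y] {i : Z → X} (hi : Function.Injective i)
    (h : Z → Y → ℝ) : 𝔼 f : X → Y, ∏ z, h z (f (i z)) = ∏ z, 𝔼 y, h z y := by
  classical
  rw [← expect_pi_prod]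
  exact expect_comp_injective hi fun g => ∏ z, h z (g z)

lemma expect_prod_finset [Nonempty Y] (S : Finset X) (h : X → Y → ℝ) :
    𝔼 f : X → Y, ∏ x ∈ S, h x (f x) = ∏ x ∈ S, 𝔼 y, h x y := by
  have hcoe := expect_prod_comp_injective (Y := Y) (i := ((↑) : S → X)) Subtype.val_injective
    fun z => h z
  rw [Finset.prod_coe_sort S fun x => 𝔼 y, h x y] at hcoe
  rw [← hcoe]
  exact Finset.expect_congr rfl fun f _ => (Finset.prod_coe_sort S fun x => h x (f x)).symm

lemma prob_forall_mem [Nonempty Y] (S : Finset X) (B : X → Finset Y) :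
    prob (fun f : X → Y => ∀ x ∈ S, f x ∈ B x) = ∏ x ∈ S, ((B x).card : ℝ) / Fintype.card Y := by
  simp only [prob, ind_forall]
  rw [expect_prod_finset S fun x y => ind (y ∈ B x)]
  exact Finset.prod_congr rfl fun x _ => prob_mem (B x)

lemma prob_forall_mem_and [Nonempty Y] {S S' : Finset X} (hdisj : Disjoint S S')
    (B B' : X → Finset Y) :
    prob (fun f : X → Y => (∀ x ∈ S, f x ∈ B x) ∧ ∀ x ∈ S', f x ∈ B' x) =
      prob (fun f : X → Y => ∀ x ∈ S, f x ∈ B x) *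
        prob (fun f : X → Y => ∀ x ∈ S', f x ∈ B' x) := by
  have hS {x : X} (hx : x ∈ S') : x ∉ S := Finset.disjoint_right.mp hdisj hx
  have hunion (f : X → Y) : ((∀ x ∈ S, f x ∈ B x) ∧ ∀ x ∈ S', f x ∈ B' x) ↔
      ∀ x ∈ S ∪ S', f x ∈ if x ∈ S then B x else B' x := by
    rw [Finset.forall_mem_union]
    exact and_congr (forall₂_congr fun x hx => by rw [if_pos hx])
      (forall₂_congr fun x hx => by rw [if_neg (hS hx)])
  simp only [hunion, prob_forall_mem]
  rw [Finset.prod_union hdisj]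
  exact congrArg₂ _ (Finset.prod_congr rfl fun x hx => by rw [if_pos hx])
    (Finset.prod_congr rfl fun x hx => by rw [if_neg (hS hx)])

lemma expect_eq_expect_update [Nonempty Y] (F : (X → Y) → ℝ) (a : X) :
    𝔼 f, F f = 𝔼 f, 𝔼 y, F (Function.update f a y) := by
  let e := Equiv.piSplitAt a fun _ : X => Y
  have hsplit (H : (X → Y) → ℝ) : 𝔼 f, H f = 𝔼 y, 𝔼 g, H (e.symm (y, g)) := by
    rw [← expect_prod_type fun p => H (e.symm p)]
    exact Fintype.expect_equiv e _ _ fun f => by rw [e.symm_apply_apply]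
  have hupdate (y z : Y) (g : {x // x ≠ a} → Y) :
      Function.update (e.symm (y, g)) a z = e.symm (z, g) := by
    funext x
    by_cases hx : x = a
    · subst hx
      simp [e, Equiv.piSplitAt]
    · simp [e, Equiv.piSplitAt, hx]
  rw [hsplit, hsplit]
  simp only [hupdate]
  rw [Fintype.expect_const, Finset.expect_comm]

lemma prob_mem_and_mem_of_update_eq [Nonempty Y] {a b : X} (hab : a ≠ b)
    (B : (X → Y) → Finset Y) (ha : ∀ f y, B (Function.update f a y) = B f)
    (hb : ∀ f y, B (Function.update f b y) = B f) :
    prob (fun f => f a ∈ B f ∧ f b ∈ B f) = 𝔼 f, ((B f).card / Fintype.card Y : ℝ) ^ 2 := by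
  have hmem (f : X → Y) : 𝔼 y, ind (y ∈ B f) = ((B f).card / Fintype.card Y : ℝ) := prob_mem _
  calc prob (fun f => f a ∈ B f ∧ f b ∈ B f)
      = 𝔼 f, ((B f).card / Fintype.card Y : ℝ) * ind (f b ∈ B f) := by
        rw [prob, expect_eq_expect_update _ a]
        simp only [ha, Function.update_self, Function.update_of_ne hab.symm, ind_and,
          ← Finset.expect_mul, hmem]
    _ = 𝔼 f, ((B f).card / Fintype.card Y : ℝ) ^ 2 := by
        rw [expect_eq_expect_update _ b]
        simp only [hb, Function.update_self, ← Finset.mul_expect, hmem, sq]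

lemma prob_apply_eq_and_apply_eq_le [Nonempty Y] (x x' : X) (y : Y) :
    prob (fun f : X → Y => f x = y ∧ f x' = y) ≤
      1 / (Fintype.card Y : ℝ) ^ 2 + if x = x' then 1 / (Fintype.card Y : ℝ) else 0 := by
  have hsingle (z : X) : prob (fun f : X → Y => f z = y) = 1 / Fintype.card Y := by
    simpa using prob_forall_mem {z} fun _ => ({y} : Finset Y)
  by_cases h : x = x'
  · rw [if_pos h]
    have hle : prob (fun f : X → Y => f x = y ∧ f x' = y) ≤ 1 / Fintype.card Y :=
      (prob_mono fun _ hf => hf.1).trans_eq (hsingle x)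
    linarith [show (0 : ℝ) ≤ 1 / (Fintype.card Y : ℝ) ^ 2 by positivity]
  · have hand := prob_forall_mem_and (Finset.disjoint_singleton.mpr h) (fun _ => ({y} : Finset Y))
      fun _ => {y}
    simp only [Finset.mem_singleton, forall_eq, hsingle] at hand
    rw [if_neg h, hand, add_zero, div_mul_div_comm, sq, one_mul]

lemma expect_sq_sum_ind_apply_eq_le [Nonempty Y] (S : Finset X) (y : Y) :
    𝔼 f : X → Y, (∑ x ∈ S, ind (f x = y)) ^ 2 ≤
      (S.card / Fintype.card Y : ℝ) ^ 2 + S.card / Fintype.card Y := by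
  have hsquare (f : X → Y) : (∑ x ∈ S, ind (f x = y)) ^ 2 =
      ∑ x ∈ S, ∑ x' ∈ S, ind (f x = y ∧ f x' = y) := by
    simp only [sq, Finset.sum_mul_sum, ind_and]
  simp only [hsquare, Finset.expect_sum_comm]
  refine (Finset.sum_le_sum fun x _ => Finset.sum_le_sum fun x' _ =>
    prob_apply_eq_and_apply_eq_le x x' y).trans_eq ?_
  simp only [Finset.sum_add_distrib, Finset.sum_const, nsmul_eq_mul]
  rw [Finset.sum_congr rfl fun x hx => (Finset.sum_ite_eq S x _).trans (if_pos hx),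
    Finset.sum_const, nsmul_eq_mul]
  ring

end UniformProbability

section CycleSecondMoment

open Equiv
open scoped BigOperators

variable {n : ℕ}

lemma prob_isFullCycle_mul (M : Perm (Fin (n + 1))) :
    prob (fun φ => IsFullCycle (φ * M)) = 1 / (n + 1) := by
  classical
  refine (prob_equiv (Equiv.mulRight M) IsFullCycle).trans ?_
  rw [prob_eq_card_filter_div, card_isFullCycle, Fintype.card_perm, Fintype.card_fin,
    Nat.factorial_succ]
  push_cast
  field_simp

lemma prob_isFullCycle_mul_and (M M' : Perm (Fin (n + 1))) :
    prob (fun φ => IsFullCycle (φ * M) ∧ IsFullCycle (φ * M')) =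
      bicyclicCount (M⁻¹ * M') / (n + 1).factorial := by
  classical
  set β := M⁻¹ * M' with hβ
  have hconj (φ : Perm (Fin (n + 1))) : IsFullCycle (φ * M') ↔ IsFullCycle (β * (φ * M)) := by
    constructor <;> intro h
    · convert isFullCycle_conj h β using 1
      rw [hβ]
      group
    · convert isFullCycle_conj h β⁻¹ using 1
      rw [hβ]
      group
  simp only [hconj]
  refine (prob_equiv (Equiv.mulRight M) fun ψ => IsFullCycle ψ ∧ IsFullCycle (β * ψ)).trans ?_
  rw [prob_eq_card_filter_div, bicyclicCount, Fintype.card_perm, Fintype.card_fin]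

lemma prob_isFullCycle_mul_and_le {M M' : Perm (Fin (n + 1))} {U : ℝ}
    (hU : unitIntegral (polyPencil (M⁻¹ * M')).det ≤ U) :
    prob (fun φ => IsFullCycle (φ * M) ∧ IsFullCycle (φ * M')) ≤ U / (n + 1) := by
  rw [prob_isFullCycle_mul_and, boccara_formula, Nat.factorial_succ]
  push_cast
  rw [mul_comm ((n : ℝ) + 1), mul_div_mul_left _ _ (by positivity)]
  gcongr

lemma prob_isFullCycle_mul_and_eq_zero (hn : 1 ≤ n) {M M' : Perm (Fin (n + 1))}
    (hsign : Perm.sign M ≠ Perm.sign M') :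
    prob (fun φ => IsFullCycle (φ * M) ∧ IsFullCycle (φ * M')) = 0 := by
  have hβ : Perm.sign (M⁻¹ * M') ≠ 1 := by
    rw [map_mul, map_inv]
    exact fun h => hsign (inv_mul_eq_one.mp h)
  rw [prob_isFullCycle_mul_and, bicyclicCount_eq_zero_of_sign_ne_one (by lia) hβ, Nat.cast_zero,
    zero_div]

lemma sum_prob_isFullCycle_mul_and_le_four (M M' : Bool → Perm (Fin (n + 1))) :
    ∑ e, ∑ e', prob (fun φ => IsFullCycle (φ * M e) ∧ IsFullCycle (φ * M' e')) ≤
      4 / (n + 1) := by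
  have hle (e e' : Bool) :
      prob (fun φ => IsFullCycle (φ * M e) ∧ IsFullCycle (φ * M' e')) ≤ 1 / (n + 1) :=
    (prob_mono fun φ h => h.1).trans_eq (prob_isFullCycle_mul (M e))
  refine (Finset.sum_le_sum fun e _ => Finset.sum_le_sum fun e' _ => hle e e').trans_eq ?_
  simp only [Fintype.sum_bool]
  ring

lemma units_int_eq_of_ne_of_ne {u v w : ℤˣ} (hu : u ≠ w) (hv : v ≠ w) : u = v := by
  rcases Int.units_eq_one_or u with rfl | rfl <;> rcases Int.units_eq_one_or v with rfl | rfl <;>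
    rcases Int.units_eq_one_or w with rfl | rfl <;> simp_all

/-- Of the four sign combinations, the two with different signs contribute nothing. -/
lemma sum_prob_isFullCycle_mul_and_le (hn : 1 ≤ n) {M M' : Bool → Perm (Fin (n + 1))} {U : ℝ}
    (hM : Perm.sign (M false) ≠ Perm.sign (M true))
    (hM' : Perm.sign (M' false) ≠ Perm.sign (M' true))
    (hU : ∀ e e', unitIntegral (polyPencil ((M e)⁻¹ * M' e')).det ≤ U) :
    ∑ e, ∑ e', prob (fun φ => IsFullCycle (φ * M e) ∧ IsFullCycle (φ * M' e')) ≤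
      2 * U / (n + 1) := by
  have hle := fun e e' => prob_isFullCycle_mul_and_le (hU e e')
  have htwo : 2 * U / (n + 1) = U / (n + 1) + U / (n + 1) := by ring
  simp only [Fintype.sum_bool]
  by_cases hsame : Perm.sign (M false) = Perm.sign (M' false)
  · rw [prob_isFullCycle_mul_and_eq_zero hn (M := M false) (M' := M' true) (hsame ▸ hM'),
      prob_isFullCycle_mul_and_eq_zero hn (M := M true) (M' := M' false) (hsame ▸ hM.symm)]
    linarith [hle true true, hle false false]
  · have hother : Perm.sign (M true) ≠ Perm.sign (M' true) := fun h =>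
      hsame (units_int_eq_of_ne_of_ne (h ▸ hM) hM')
    rw [prob_isFullCycle_mul_and_eq_zero hn hsame, prob_isFullCycle_mul_and_eq_zero hn hother]
    linarith [hle true false, hle false true]

variable {P : Type*}

/-- The number of members `M b e` of a family of permutations, with `b ∈ G`, that become a full
cycle after multiplication by `φ`. -/
noncomputable def fullCycleCount (G : Finset P) (M : P → Bool → Perm (Fin (n + 1)))
    (φ : Perm (Fin (n + 1))) : ℝ :=
  ∑ b ∈ G, ∑ e, ind (IsFullCycle (φ * M b e))

lemma expect_fullCycleCount (G : Finset P) (M : P → Bool → Perm (Fin (n + 1))) :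
    𝔼 φ, fullCycleCount G M φ = 2 * G.card / (n + 1) := by
  have hterm (b : P) (e : Bool) : 𝔼 φ, ind (IsFullCycle (φ * M b e)) = 1 / ((n : ℝ) + 1) :=
    prob_isFullCycle_mul (M b e)
  simp only [fullCycleCount, Finset.expect_sum_comm, hterm, Finset.sum_const, Finset.card_univ,
    Fintype.card_bool, nsmul_eq_mul]
  push_cast
  ring

lemma expect_sq_fullCycleCount (G : Finset P) (M : P → Bool → Perm (Fin (n + 1))) :
    𝔼 φ, fullCycleCount G M φ ^ 2 = ∑ b ∈ G, ∑ b' ∈ G, ∑ e, ∑ e',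
      prob (fun φ => IsFullCycle (φ * M b e) ∧ IsFullCycle (φ * M b' e')) := by
  simp only [fullCycleCount, sq, Finset.sum_mul_sum, ← ind_and, Finset.expect_sum_comm, prob]

lemma prob_fullCycleCount_ne_zero_le (G : Finset P) (M : P → Bool → Perm (Fin (n + 1))) :
    prob (fun φ => fullCycleCount G M φ ≠ 0) ≤
      prob (fun φ => ∃ b ∈ G, ∃ e, IsFullCycle (φ * M b e)) := by
  refine prob_mono fun φ hne => ?_
  by_contra! hnone
  exact hne (Finset.sum_eq_zero fun b hb => Finset.sum_eq_zero fun e _ => ind_false (hnone b hb e))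

variable [Fintype P] {G : Finset P} {Bad : P → P → Prop} {κ : ℝ}

lemma sum_sum_ind_le_of_expect_le (hBad : 𝔼 b, 𝔼 b', ind (b ∈ G ∧ b' ∈ G ∧ Bad b b') ≤ κ) :
    ∑ b ∈ G, ∑ b' ∈ G, ind (Bad b b') ≤ κ * Fintype.card P ^ 2 := by
  cases isEmpty_or_nonempty P
  · simp [Finset.eq_empty_of_isEmpty G]
  simp only [Fintype.expect_eq_sum_div_card, ← Finset.sum_div] at hBad
  rw [div_div, div_le_iff₀ (by positivity), ← sq] at hBad
  refine le_trans ?_ hBad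
  calc ∑ b ∈ G, ∑ b' ∈ G, ind (Bad b b')
      = ∑ b ∈ G, ∑ b' ∈ G, ind (b ∈ G ∧ b' ∈ G ∧ Bad b b') :=
        Finset.sum_congr rfl fun b hb => Finset.sum_congr rfl fun b' hb' => by simp [hb, hb']
    _ ≤ ∑ b ∈ G, ∑ b', ind (b ∈ G ∧ b' ∈ G ∧ Bad b b') :=
        Finset.sum_le_sum fun b _ => Finset.sum_le_univ_sum_of_nonneg fun _ => ind_nonneg _
    _ ≤ ∑ b, ∑ b', ind (b ∈ G ∧ b' ∈ G ∧ Bad b b') :=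
        Finset.sum_le_univ_sum_of_nonneg fun _ => Finset.sum_nonneg fun _ _ => ind_nonneg _

lemma expect_sq_fullCycleCount_le (hn : 1 ≤ n) {M : P → Bool → Perm (Fin (n + 1))}
    (hsign : ∀ b ∈ G, Perm.sign (M b false) ≠ Perm.sign (M b true)) {U : ℝ} (hU : 0 ≤ U)
    (hgood : ∀ b ∈ G, ∀ b' ∈ G, ¬Bad b b' →
      ∀ e e', unitIntegral (polyPencil ((M b e)⁻¹ * M b' e')).det ≤ U)
    (hBad : 𝔼 b, 𝔼 b', ind (b ∈ G ∧ b' ∈ G ∧ Bad b b') ≤ κ) :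
    𝔼 φ, fullCycleCount G M φ ^ 2 ≤
      2 * U / (n + 1) * G.card ^ 2 + 4 / (n + 1) * (κ * Fintype.card P ^ 2) := by
  have hpair (b : P) (hb : b ∈ G) (b' : P) (hb' : b' ∈ G) :
      ∑ e, ∑ e', prob (fun φ => IsFullCycle (φ * M b e) ∧ IsFullCycle (φ * M b' e')) ≤
        2 * U / (n + 1) + 4 / (n + 1) * ind (Bad b b') := by
    by_cases hbad : Bad b b'
    · rw [ind_true hbad, mul_one]
      exact (sum_prob_isFullCycle_mul_and_le_four _ _).trans (le_add_of_nonneg_left (by positivity))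
    · rw [ind_false hbad, mul_zero, add_zero]
      exact sum_prob_isFullCycle_mul_and_le hn (hsign b hb) (hsign b' hb')
        (hgood b hb b' hb' hbad)
  rw [expect_sq_fullCycleCount]
  refine (Finset.sum_le_sum fun b hb => Finset.sum_le_sum fun b' hb' => hpair b hb b' hb').trans ?_
  simp only [Finset.sum_add_distrib, ← Finset.mul_sum, Finset.sum_const, nsmul_eq_mul]
  have hsum := mul_le_mul_of_nonneg_left (sum_sum_ind_le_of_expect_le hBad)
    (show 0 ≤ 4 / ((n : ℝ) + 1) by positivity)
  linarith

theorem one_le_prob_exists_isFullCycle_mul [Nonempty P] (hn : 1 ≤ n)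
    {M : P → Bool → Perm (Fin (n + 1))}
    (hsign : ∀ b ∈ G, Perm.sign (M b false) ≠ Perm.sign (M b true)) {U : ℝ} (hU : 0 ≤ U)
    (hgood : ∀ b ∈ G, ∀ b' ∈ G, ¬Bad b b' →
      ∀ e e', unitIntegral (polyPencil ((M b e)⁻¹ * M b' e')).det ≤ U)
    (hG : (Fintype.card P : ℝ) ≤ 2 * G.card)
    (hBad : 𝔼 b, 𝔼 b', ind (b ∈ G ∧ b' ∈ G ∧ Bad b b') ≤ κ) :
    1 ≤ prob (fun φ => ∃ b ∈ G, ∃ e, IsFullCycle (φ * M b e)) *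
      ((n + 1) * U / 2 + 4 * (n + 1) * κ) := by
  set p := prob fun φ => ∃ b ∈ G, ∃ e, IsFullCycle (φ * M b e)
  have hcard : (0 : ℝ) < Fintype.card P := by positivity
  have hGpos : (0 : ℝ) < G.card := by linarith
  have hκ : 0 ≤ κ :=
    (Finset.expect_nonneg fun _ _ => Finset.expect_nonneg fun _ _ => ind_nonneg _).trans hBad
  have hsecond : 𝔼 φ, fullCycleCount G M φ ^ 2 ≤
      2 * U / (n + 1) * G.card ^ 2 + 4 / (n + 1) * (κ * (2 * G.card) ^ 2) :=
    (expect_sq_fullCycleCount_le hn hsign hU hgood hBad).trans (by gcongr)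
  have hfirst : (2 * (G.card : ℝ) / (n + 1)) ^ 2 ≤
      (2 * (G.card : ℝ) / (n + 1)) ^ 2 * (p * ((n + 1) * U / 2 + 4 * (n + 1) * κ)) := by
    calc (2 * (G.card : ℝ) / (n + 1)) ^ 2
        = (𝔼 φ, fullCycleCount G M φ) ^ 2 := by rw [expect_fullCycleCount]
      _ ≤ prob (fun φ => fullCycleCount G M φ ≠ 0) * 𝔼 φ, fullCycleCount G M φ ^ 2 :=
        sq_expect_le_prob_ne_zero_mul _
      _ ≤ p * (2 * U / (n + 1) * G.card ^ 2 + 4 / (n + 1) * (κ * (2 * G.card) ^ 2)) :=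
        mul_le_mul (prob_fullCycleCount_ne_zero_le G M) hsecond
          (Finset.expect_nonneg fun _ _ => sq_nonneg _) (prob_nonneg _)
      _ = _ := by
        field_simp
  exact (le_mul_iff_one_le_right (by positivity)).mp hfirst

end CycleSecondMoment

section RandomHall

variable {X Y V : Type*} {k : ℕ}

/-- The property holds at all indices except possibly one (and there is at least one index). -/
def AllButOne (p : Fin k → Prop) : Prop := ∃ i₀, ∀ i, i ≠ i₀ → p i

lemma allButOne_mono {p q : Fin k → Prop} (h : ∀ i, p i → q i) : AllButOne p → AllButOne q :=
  fun ⟨i₀, hi₀⟩ => ⟨i₀, fun i hi => h i (hi₀ i hi)⟩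

lemma allButOne_of_not_imp_eq (hk : 0 < k) {p : Fin k → Prop}
    (h : ∀ i j, ¬p i → ¬p j → i = j) : AllButOne p := by
  by_cases hp : ∃ i₀, ¬p i₀
  · obtain ⟨i₀, hi₀⟩ := hp
    exact ⟨i₀, fun i hi => not_not.mp fun hpi => hi (h i i₀ hpi hi₀)⟩
  · push Not at hp
    exact ⟨⟨0, hk⟩, fun i _ => hp i⟩

variable [Fintype Y]

/-- A violation of Hall's condition among the small sets, robust under deleting one of the `k`
choices at each vertex: some set `A`, of at most half the size of `Y`, makes almost all of its
choices in a set of size `#A - 1`. -/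
def HallObstruction (f : X × Fin k → Y) : Prop :=
  ∃ (A : Finset X) (B : Finset Y), 1 ≤ A.card ∧ 2 * A.card ≤ Fintype.card Y + 1 ∧
    B.card = A.card - 1 ∧ ∀ x ∈ A, AllButOne fun i => f (x, i) ∈ B

lemma card_le_card_of_not_hallObstruction {f : X × Fin k → Y} (hf : ¬HallObstruction f)
    {A : Finset X} {B : Finset Y} (hA : 2 * A.card ≤ Fintype.card Y + 1)
    (hAB : ∀ x ∈ A, AllButOne fun i => f (x, i) ∈ B) : A.card ≤ B.card := by
  by_contra! hlt
  obtain ⟨C, hBC, hC⟩ := Finset.exists_superset_card_eq (s := B) (n := A.card - 1) (by lia) (by lia)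
  exact hf ⟨A, C, by lia, hA, hC, fun x hx => allButOne_mono (fun i hi => hBC hi) (hAB x hx)⟩

lemma exists_injective_selection [Fintype X] {f : X × Fin k → Y} (hf : ¬HallObstruction f)
    (hcard : 2 * Fintype.card X ≤ Fintype.card Y + 1) {ok : X → Fin k → Prop}
    (hok : ∀ x, AllButOne (ok x)) :
    ∃ s : X → Fin k, (∀ x, ok x (s x)) ∧ Function.Injective fun x => f (x, s x) := by
  classical
  let t : X → Finset Y := fun x => (Finset.univ.filter (ok x)).image fun i => f (x, i)
  have hall (S : Finset X) : S.card ≤ (S.biUnion t).card := by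
    have hS := Finset.card_le_univ S
    refine card_le_card_of_not_hallObstruction hf (by lia) fun x hx =>
      allButOne_mono (fun i hi => ?_) (hok x)
    exact Finset.mem_biUnion.mpr ⟨x, hx, Finset.mem_image_of_mem _ (by simpa using hi)⟩
  obtain ⟨g, hg, hgt⟩ := (Finset.all_card_le_biUnion_card_iff_exists_injective t).mp hall
  have hchoice (x : X) : ∃ i, ok x i ∧ f (x, i) = g x := by
    simpa [t] using hgt x
  choose s hok_s hs using hchoice
  exact ⟨s, hok_s, by simpa only [hs] using hg⟩

/-- Vertices `v` select from their copy on the left, their partners from the copy on the right;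
large sets of left vertices are handled by applying Hall's condition to the complement of their
neighbourhood. -/
lemma exists_perm_selection [Fintype V] {τ : (V ⊕ V) × Fin k → V}
    (hleft : ¬HallObstruction fun p : V × Fin k => τ (Sum.inl p.1, p.2))
    (hright : ¬HallObstruction fun p : V × Fin k => τ (Sum.inr p.1, p.2))
    {ok : V ⊕ V → Fin k → Prop} (hok : ∀ x, AllButOne (ok x)) :
    ∃ M : Equiv.Perm V, ∀ v, (∃ j, ok (Sum.inl v) j ∧ τ (Sum.inl v, j) = M v) ∨
      ∃ j, ok (Sum.inr (M v)) j ∧ τ (Sum.inr (M v), j) = v := by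
  classical
  let adj (v w : V) : Prop := (∃ j, ok (Sum.inl v) j ∧ τ (Sum.inl v, j) = w) ∨
    ∃ j, ok (Sum.inr w) j ∧ τ (Sum.inr w, j) = v
  let t (v : V) : Finset V := Finset.univ.filter (adj v)
  have mem_nbhd {S : Finset V} {v w : V} (hv : v ∈ S) (h : adj v w) : w ∈ S.biUnion t :=
    Finset.mem_biUnion.mpr ⟨v, hv, by simpa [t] using h⟩
  have hall (S : Finset V) : S.card ≤ (S.biUnion t).card := by
    by_cases hS : 2 * S.card ≤ Fintype.card V + 1
    · exact card_le_card_of_not_hallObstruction hleft hS fun v hv =>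
        allButOne_mono (fun i hi => mem_nbhd hv (Or.inl ⟨i, hi, rfl⟩)) (hok (Sum.inl v))
    · by_contra! hlt
      have hS' := Finset.card_le_univ S
      have hcompl := Finset.card_add_card_compl (S.biUnion t)
      obtain ⟨A, hA, hAcard⟩ := Finset.exists_subset_card_eq (s := (S.biUnion t)ᶜ)
        (n := Fintype.card V - S.card + 1) (by lia)
      have hle := card_le_card_of_not_hallObstruction hright (A := A) (B := Sᶜ) (by lia)
        fun w hw => allButOne_mono (fun i hi => Finset.mem_compl.mpr fun hv =>
          Finset.mem_compl.mp (hA hw) (mem_nbhd hv (Or.inr ⟨i, hi, rfl⟩))) (hok (Sum.inr w))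
      rw [Finset.card_compl] at hle
      lia
  obtain ⟨g, hg, hgt⟩ := (Finset.all_card_le_biUnion_card_iff_exists_injective t).mp hall
  refine ⟨Equiv.ofBijective g (Finite.injective_iff_bijective.mp hg), fun v => ?_⟩
  simpa only [t, Finset.mem_filter_univ, Equiv.ofBijective_apply] using hgt v

lemma prob_allButOne_mem_le [Nonempty Y] (k : ℕ) (B : Finset Y) :
    prob (fun h : Fin k → Y => AllButOne fun i => h i ∈ B) ≤
      k * ((B.card : ℝ) / Fintype.card Y) ^ (k - 1) := by
  classical
  calc prob (fun h : Fin k → Y => AllButOne fun i => h i ∈ B)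
      ≤ prob (fun h : Fin k → Y => ∃ i₀ ∈ Finset.univ, ∀ i ∈ Finset.univ.erase i₀, h i ∈ B) :=
        prob_mono fun h ⟨i₀, hi₀⟩ =>
          ⟨i₀, Finset.mem_univ _, fun i hi => hi₀ i (Finset.ne_of_mem_erase hi)⟩
    _ ≤ ∑ i₀, prob (fun h : Fin k → Y => ∀ i ∈ Finset.univ.erase i₀, h i ∈ B) :=
        prob_exists_le _ _
    _ = _ := by
        simp only [prob_forall_mem _ fun _ => B, Finset.prod_const, Finset.sum_const,
          Finset.card_erase_of_mem (Finset.mem_univ _), Finset.card_univ, Fintype.card_fin,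
          nsmul_eq_mul]

lemma prob_forall_allButOne_mem_le [Fintype X] [DecidableEq X] [Nonempty Y] (k : ℕ)
    (A : Finset X) (B : Finset Y) :
    prob (fun f : X × Fin k → Y => ∀ x ∈ A, AllButOne fun i => f (x, i) ∈ B) ≤
      (k * ((B.card : ℝ) / Fintype.card Y) ^ (k - 1)) ^ A.card := by
  rw [← prob_equiv (Equiv.curry X (Fin k) Y).symm]
  simp only [prob, ind_forall, Equiv.curry_symm_apply, Function.uncurry_apply_pair]
  rw [expect_prod_finset A fun _ (h : Fin k → Y) => ind (AllButOne fun i => h i ∈ B),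
    Finset.prod_const]
  exact pow_le_pow_left₀ (prob_nonneg _) (prob_allButOne_mem_le k B) _

lemma choose_le_three_mul_div_pow (y : ℕ) {u : ℕ} (hu : 1 ≤ u) :
    (y.choose u : ℝ) ≤ (3 * y / u) ^ u := by
  have hexp : Real.exp (u : ℝ) ≤ 3 ^ u := by
    rw [← mul_one (u : ℝ), Real.exp_nat_mul]
    exact pow_le_pow_left₀ (Real.exp_pos _).le Real.exp_one_lt_three.le u
  have hfactorial : (u : ℝ) ^ u ≤ 3 ^ u * u.factorial := by
    have h := Real.pow_div_factorial_le_exp (u : ℝ) (Nat.cast_nonneg u) u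
    rw [div_le_iff₀ (by positivity)] at h
    exact h.trans (by gcongr)
  refine (Nat.choose_le_pow_div u y).trans ?_
  rw [div_pow, mul_pow, div_le_div_iff₀ (by positivity) (pow_pos (by exact_mod_cast hu) u)]
  nlinarith [pow_nonneg (Nat.cast_nonneg (α := ℝ) y) u]

lemma choose_pred_le_choose {y u : ℕ} (hu : 1 ≤ u) (h : 2 * u ≤ y + 1) :
    y.choose (u - 1) ≤ y.choose u := by
  obtain ⟨v, rfl⟩ : ∃ v, u = v + 1 := ⟨u - 1, by lia⟩
  rw [Nat.add_sub_cancel]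
  refine Nat.le_of_mul_le_mul_right ?_ v.succ_pos
  rw [Nat.choose_succ_right_eq]
  exact Nat.mul_le_mul_left _ (by lia)

lemma mul_pow_pred_le_of_le {z : ℝ} (hz₀ : 0 ≤ z) (hz : z ≤ 3 / 5) (hk : 40 ≤ k) :
    k * z ^ (k - 1) ≤ 40 * z ^ 39 := by
  induction k, hk using Nat.le_induction with
  | base => norm_num
  | succ m hm ih =>
    refine le_trans ?_ ih
    obtain ⟨l, rfl⟩ : ∃ l, m = l + 1 := ⟨m - 1, by lia⟩
    have hl : (39 : ℝ) ≤ l := by exact_mod_cast (by lia : 39 ≤ l)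
    simp only [Nat.add_sub_cancel, pow_succ, Nat.cast_add, Nat.cast_one]
    have hfactor : (l + 1 + 1) * z ≤ l + 1 := by nlinarith
    nlinarith [mul_le_mul_of_nonneg_left hfactor (pow_nonneg hz₀ l)]

lemma three_div_pow_mul_le {z : ℝ} (hz₀ : 0 < z) (hz : z ≤ 3 / 5) {u : ℕ} (hu : u ≠ 0) :
    (3 / z) ^ u * (3 / z) ^ u * (40 * z ^ 39) ^ u ≤ z * (1 / 4) ^ u := by
  have hbase : 3 / z * (3 / z) * (40 * z ^ 39) = z * (360 * z ^ 36) := by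
    field_simp
    norm_num
  have hsmall : 360 * z ^ 36 ≤ 1 / 4 := by
    calc 360 * z ^ 36 ≤ 360 * (3 / 5) ^ 36 := by gcongr
      _ ≤ 1 / 4 := by norm_num
  rw [← mul_pow, ← mul_pow, hbase, mul_pow]
  gcongr
  exact pow_le_of_le_one hz₀.le (by linarith) hu

lemma hall_union_bound_term {x y u : ℕ} (hxy : x ≤ y) (hy : 5 ≤ y) (hu : 1 ≤ u)
    (huy : 2 * u ≤ y + 1) (hk : 40 ≤ k) :
    (x.choose u : ℝ) * y.choose (u - 1) * (k * (((u - 1 : ℕ) : ℝ) / y) ^ (k - 1)) ^ u ≤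
      (1 / 2) ^ u / y := by
  have hy₀ : (0 : ℝ) < y := by exact_mod_cast (by lia : 0 < y)
  set z : ℝ := u / y with hz
  have hz₀ : 0 < z := div_pos (by exact_mod_cast hu) hy₀
  have hz₁ : z ≤ 3 / 5 := by
    rw [hz, div_le_iff₀ hy₀]
    have huy' : (2 : ℝ) * u ≤ y + 1 := by exact_mod_cast huy
    have hy' : (5 : ℝ) ≤ y := by exact_mod_cast hy
    linarith
  have hchoose : (y.choose u : ℝ) ≤ (3 / z) ^ u := by
    refine (choose_le_three_mul_div_pow y hu).trans_eq ?_
    rw [hz, div_div_eq_mul_div]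
  have hleft : (x.choose u : ℝ) ≤ (3 / z) ^ u :=
    le_trans (by exact_mod_cast Nat.choose_le_choose u hxy) hchoose
  have hright : (y.choose (u - 1) : ℝ) ≤ (3 / z) ^ u :=
    le_trans (by exact_mod_cast choose_pred_le_choose hu huy) hchoose
  have hlast : (k * (((u - 1 : ℕ) : ℝ) / y) ^ (k - 1)) ≤ 40 * z ^ 39 := by
    refine le_trans ?_ (mul_pow_pred_le_of_le hz₀.le hz₁ hk)
    rw [hz]
    gcongr
    exact Nat.sub_le u 1
  calc _ ≤ (3 / z) ^ u * (3 / z) ^ u * (40 * z ^ 39) ^ u := by gcongr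
    _ ≤ z * (1 / 4) ^ u := three_div_pow_mul_le hz₀ hz₁ (by lia)
    _ ≤ (1 / 2) ^ u / y := by
      have hu_pow : (u : ℝ) * (1 / 2) ^ u ≤ 1 := by
        rw [div_pow, one_pow, mul_one_div, div_le_one (by positivity)]
        exact_mod_cast Nat.lt_two_pow_self.le
      have hfour : ((1 : ℝ) / 4) ^ u = (1 / 2) ^ u * (1 / 2) ^ u := by
        rw [← mul_pow]
        norm_num
      rw [hz, div_mul_eq_mul_div, hfour, ← mul_assoc]
      gcongr
      exact mul_le_of_le_one_left (by positivity) hu_pow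

lemma sum_half_pow_le_one (s : Finset ℕ) (hs : ∀ u ∈ s, 1 ≤ u) :
    ∑ u ∈ s, ((1 : ℝ) / 2) ^ u ≤ 1 := by
  have hinj : Set.InjOn (fun u => u - 1) (s : Set ℕ) := fun a ha b hb h => by
    have := hs a ha
    have := hs b hb
    simp only at h
    lia
  calc ∑ u ∈ s, ((1 : ℝ) / 2) ^ u = ∑ v ∈ s.image (· - 1), (1 / 2) ^ v * (1 / 2) := by
        rw [Finset.sum_image hinj]
        exact Finset.sum_congr rfl fun u hu => by
          rw [← pow_succ, Nat.sub_add_cancel (hs u hu)]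
    _ = (∑ v ∈ s.image (· - 1), (1 / 2) ^ v) * (1 / 2) := (Finset.sum_mul ..).symm
    _ ≤ 2 * (1 / 2) := by
        gcongr
        exact (summable_geometric_two.sum_le_tsum _ fun _ _ => by positivity).trans_eq
          tsum_geometric_two
    _ = 1 := by norm_num

lemma prob_exists_hall_pair_le [Fintype X] [DecidableEq X]
    (hXY : Fintype.card X ≤ Fintype.card Y) (hY : 5 ≤ Fintype.card Y) (hk : 40 ≤ k) {u : ℕ}
    (hu : 1 ≤ u) (huY : 2 * u ≤ Fintype.card Y + 1) :
    prob (fun f : X × Fin k → Y => ∃ A ∈ Finset.univ.powersetCard u,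
      ∃ B ∈ (Finset.univ : Finset Y).powersetCard (u - 1),
        ∀ x ∈ A, AllButOne fun i => f (x, i) ∈ B) ≤ (1 / 2) ^ u / Fintype.card Y := by
  have : Nonempty Y := Fintype.card_pos_iff.mp (by lia)
  have hpair (A : Finset X) (hA : A ∈ Finset.univ.powersetCard u)
      (B : Finset Y) (hB : B ∈ (Finset.univ : Finset Y).powersetCard (u - 1)) :
      prob (fun f : X × Fin k → Y => ∀ x ∈ A, AllButOne fun i => f (x, i) ∈ B) ≤
        (k * (((u - 1 : ℕ) : ℝ) / Fintype.card Y) ^ (k - 1)) ^ u := by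
    have hle := prob_forall_allButOne_mem_le k A B
    rwa [(Finset.mem_powersetCard.mp hA).2, (Finset.mem_powersetCard.mp hB).2] at hle
  refine (prob_exists_le _ _).trans ?_
  refine (Finset.sum_le_sum fun A hA =>
    (prob_exists_le _ _).trans (Finset.sum_le_sum fun B hB => hpair A hA B hB)).trans ?_
  simp only [Finset.sum_const, Finset.card_powersetCard, Finset.card_univ, nsmul_eq_mul]
  rw [← mul_assoc]
  exact hall_union_bound_term hXY hY hu huY hk

theorem prob_hallObstruction_le [Fintype X] [DecidableEq X]
    (hXY : Fintype.card X ≤ Fintype.card Y) (hY : 5 ≤ Fintype.card Y) (hk : 40 ≤ k) :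
    prob (fun f : X × Fin k → Y => HallObstruction f) ≤ 1 / Fintype.card Y := by
  set sizes := (Finset.range (Fintype.card Y + 1)).filter
    (fun u => 1 ≤ u ∧ 2 * u ≤ Fintype.card Y + 1) with hsizes
  have hmem {u : ℕ} (hu : u ∈ sizes) : 1 ≤ u ∧ 2 * u ≤ Fintype.card Y + 1 :=
    (Finset.mem_filter.mp hu).2
  calc prob (fun f : X × Fin k → Y => HallObstruction f)
      ≤ prob (fun f : X × Fin k → Y => ∃ u ∈ sizes, ∃ A ∈ Finset.univ.powersetCard u,
          ∃ B ∈ (Finset.univ : Finset Y).powersetCard (u - 1),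
            ∀ x ∈ A, AllButOne fun i => f (x, i) ∈ B) := by
        refine prob_mono fun f ⟨A, B, hA, hAY, hB, hAB⟩ => ⟨A.card, ?_, A, ?_, B, ?_, hAB⟩
        · rw [hsizes, Finset.mem_filter, Finset.mem_range]
          lia
        · simp
        · simp [hB]
    _ ≤ ∑ u ∈ sizes, (1 / 2 : ℝ) ^ u / Fintype.card Y := (prob_exists_le _ _).trans
        (Finset.sum_le_sum fun u hu => prob_exists_hall_pair_le hXY hY hk (hmem hu).1 (hmem hu).2)
    _ = (∑ u ∈ sizes, (1 / 2 : ℝ) ^ u) / Fintype.card Y := (Finset.sum_div ..).symm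
    _ ≤ 1 / Fintype.card Y := by
        gcongr
        exact sum_half_pow_le_one sizes fun u hu => (hmem hu).1

end RandomHall

section Switches

open Equiv

variable {r g : ℕ} {Mk : Type*}

/-- A switch `((v, u), i)` of a permutation `M` replaces the arcs `v → M v` and `u → M u` by
`v → M u` and `u → M v`, drawing both new arcs from the `i`-th spare choices of `v` and `u`. -/
abbrev Switch (r g : ℕ) : Type := (Fin r × Fin r) × Fin g

/-- The spare choices examined by a switch. -/
def switchTails (a : Switch r g) : Finset (Fin r × Fin g) := {(a.1.1, a.2), (a.1.2, a.2)}

/-- The arcs inserted by a switch of `M`. -/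
def switchEdges (M : Perm (Fin r)) (a : Switch r g) : Finset (Fin r × Fin r) :=
  {(a.1.1, M a.1.2), (a.1.2, M a.1.1)}

/-- The spare choices `R` provide both arcs inserted by the switch `a` of `M`. -/
def SparesHit (M : Perm (Fin r)) (a : Switch r g) (R : Fin r × Fin g → Fin r) : Prop :=
  ∀ z ∈ switchTails a, R z ∈ ({M (swap a.1.1 a.1.2 z.1)} : Finset (Fin r))

/-- Both arcs inserted by the switch `a` of `M` carry an admissible mark. -/
def MarksGood (M : Perm (Fin r)) (good : Fin r × Fin r → Finset Mk) (a : Switch r g)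
    (κ : Fin r × Fin r → Mk) : Prop :=
  ∀ e ∈ switchEdges M a, κ e ∈ good e

/-- The switch `a` of `M` is available for the spare choices `ω.1` and the edge marks `ω.2`. -/
def SwitchAvailable (M : Perm (Fin r)) (good : Fin r × Fin r → Finset Mk) (a : Switch r g)
    (ω : (Fin r × Fin g → Fin r) × (Fin r × Fin r → Mk)) : Prop :=
  SparesHit M a ω.1 ∧ MarksGood M good a ω.2

lemma prob_sparesHit (M : Perm (Fin r)) {a : Switch r g} (ha : a.1.1 ≠ a.1.2) :
    prob (SparesHit M a) = 1 / (r : ℝ) ^ 2 := by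
  have : Nonempty (Fin r) := ⟨a.1.1⟩
  unfold SparesHit
  rw [prob_forall_mem (switchTails a) fun z => {M (swap a.1.1 a.1.2 z.1)}, switchTails,
    Finset.prod_pair (by simpa using ha)]
  simp only [Finset.card_singleton, Fintype.card_fin, Nat.cast_one]
  ring

lemma prob_sparesHit_and (M : Perm (Fin r)) {a b : Switch r g}
    (h : Disjoint (switchTails a) (switchTails b)) :
    prob (fun R => SparesHit M a R ∧ SparesHit M b R) =
      prob (SparesHit M a) * prob (SparesHit M b) :=
  have : Nonempty (Fin r) := ⟨a.1.1⟩
  prob_forall_mem_and h (fun z => {M (swap a.1.1 a.1.2 z.1)})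
    fun z => {M (swap b.1.1 b.1.2 z.1)}

lemma disjoint_switchEdges (M : Perm (Fin r)) {a b : Switch r g} (ha : a.1.1 < a.1.2)
    (hb : b.1.1 < b.1.2) (hab : a.1 ≠ b.1) : Disjoint (switchEdges M a) (switchEdges M b) := by
  simp only [switchEdges, Finset.disjoint_insert_left, Finset.disjoint_singleton_left,
    Finset.mem_insert, Finset.mem_singleton, EmbeddingLike.apply_eq_iff_eq, Prod.ext_iff,
    ne_eq, Fin.ext_iff, Fin.lt_def] at ha hb hab ⊢
  lia

/-- A spare choice cannot serve two different pairs, as it would have to hit two different heads. -/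
lemma disjoint_switchTails_of_sparesHit {M : Perm (Fin r)} {a b : Switch r g}
    {R : Fin r × Fin g → Fin r} (ha : a.1.1 < a.1.2) (hb : b.1.1 < b.1.2) (hab : a.1 ≠ b.1)
    (hRa : SparesHit M a R) (hRb : SparesHit M b R) :
    Disjoint (switchTails a) (switchTails b) := by
  rw [Finset.disjoint_left]
  intro z hza hzb
  have hswap : swap a.1.1 a.1.2 z.1 = swap b.1.1 b.1.2 z.1 :=
    M.injective ((Finset.mem_singleton.mp (hRa z hza)).symm.trans
      (Finset.mem_singleton.mp (hRb z hzb)))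
  obtain ⟨⟨v, u⟩, i⟩ := a
  obtain ⟨⟨v', u'⟩, i'⟩ := b
  simp only [switchTails, Finset.mem_insert, Finset.mem_singleton] at hza hzb
  simp only [ne_eq, Prod.mk.injEq] at ha hb hab
  rcases hza with rfl | rfl <;> rcases hzb with h | h <;>
    · obtain ⟨rfl, -⟩ := Prod.mk.inj h
      simp only [swap_apply_left, swap_apply_right] at hswap
      lia

section Pairs

variable [Fintype Mk]

lemma prob_switchAvailable (M : Perm (Fin r)) (good : Fin r × Fin r → Finset Mk)
    (a : Switch r g) :
    prob (SwitchAvailable M good a) = prob (SparesHit M a) * prob (MarksGood M good a) :=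
  prob_fst_and_snd _ _

lemma prob_switchAvailable_and (M : Perm (Fin r)) (good : Fin r × Fin r → Finset Mk)
    (a b : Switch r g) :
    prob (fun ω => SwitchAvailable M good a ω ∧ SwitchAvailable M good b ω) =
      prob (fun R => SparesHit M a R ∧ SparesHit M b R) *
        prob (fun κ => MarksGood M good a κ ∧ MarksGood M good b κ) := by
  rw [← prob_fst_and_snd]
  exact congrArg prob (funext fun ω => propext and_and_and_comm)

lemma prob_switchAvailable_and_le_of_fst_eq (M : Perm (Fin r))
    (good : Fin r × Fin r → Finset Mk) {a b : Switch r g} (ha : a.1.1 ≠ a.1.2)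
    (hfst : a.1 = b.1) (hab : a ≠ b) :
    prob (fun ω => SwitchAvailable M good a ω ∧ SwitchAvailable M good b ω) ≤
      1 / (r : ℝ) ^ 4 := by
  have hsnd : a.2 ≠ b.2 := fun h => hab (Prod.ext hfst h)
  have hdisj : Disjoint (switchTails a) (switchTails b) := by
    simp [switchTails, hsnd.symm]
  rw [prob_switchAvailable_and, prob_sparesHit_and M hdisj, prob_sparesHit M ha,
    prob_sparesHit M (hfst ▸ ha)]
  refine (mul_le_of_le_one_right (by positivity) (prob_le_one _)).trans_eq ?_
  ring

lemma prob_switchAvailable_and_le_mul [Nonempty Mk] (M : Perm (Fin r))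
    (good : Fin r × Fin r → Finset Mk) {a b : Switch r g} (ha : a.1.1 < a.1.2)
    (hb : b.1.1 < b.1.2) (hab : a.1 ≠ b.1) :
    prob (fun ω => SwitchAvailable M good a ω ∧ SwitchAvailable M good b ω) ≤
      prob (SwitchAvailable M good a) * prob (SwitchAvailable M good b) := by
  have hspares : prob (fun R => SparesHit M a R ∧ SparesHit M b R) ≤
      prob (SparesHit M a) * prob (SparesHit M b) := by
    by_cases hdisj : Disjoint (switchTails a) (switchTails b)
    · exact (prob_sparesHit_and M hdisj).le
    · have hnever (R : Fin r × Fin g → Fin r) : ¬(SparesHit M a R ∧ SparesHit M b R) :=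
        fun h => hdisj (disjoint_switchTails_of_sparesHit ha hb hab h.1 h.2)
      simp only [prob, ind_false (hnever _), Finset.expect_const_zero]
      exact mul_nonneg (prob_nonneg _) (prob_nonneg _)
  have hmarks : prob (fun κ => MarksGood M good a κ ∧ MarksGood M good b κ) =
      prob (MarksGood M good a) * prob (MarksGood M good b) :=
    prob_forall_mem_and (disjoint_switchEdges M ha hb hab) good good
  rw [prob_switchAvailable_and, prob_switchAvailable, prob_switchAvailable, hmarks,
    mul_mul_mul_comm]
  exact mul_le_mul_of_nonneg_right hspares (mul_nonneg (prob_nonneg _) (prob_nonneg _))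

lemma prob_switchAvailable_and_le [Nonempty Mk] (M : Perm (Fin r))
    (good : Fin r × Fin r → Finset Mk) {a b : Switch r g} (ha : a.1.1 < a.1.2)
    (hb : b.1.1 < b.1.2) :
    prob (fun ω => SwitchAvailable M good a ω ∧ SwitchAvailable M good b ω) ≤
      prob (SwitchAvailable M good a) * prob (SwitchAvailable M good b) +
        ((if a = b then prob (SwitchAvailable M good a) else 0) +
          if a.1 = b.1 then 1 / (r : ℝ) ^ 4 else 0) := by
  have hmul : 0 ≤ prob (SwitchAvailable M good a) * prob (SwitchAvailable M good b) :=
    mul_nonneg (prob_nonneg _) (prob_nonneg _)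
  have hr : 0 ≤ 1 / (r : ℝ) ^ 4 := by positivity
  by_cases hab : a = b
  · subst hab
    rw [if_pos rfl, if_pos rfl]
    have hle : prob (fun ω => SwitchAvailable M good a ω ∧ SwitchAvailable M good a ω) ≤
        prob (SwitchAvailable M good a) := prob_mono fun _ h => h.1
    linarith
  · by_cases hfst : a.1 = b.1
    · rw [if_neg hab, if_pos hfst]
      linarith [prob_switchAvailable_and_le_of_fst_eq M good ha.ne hfst hab]
    · rw [if_neg hab, if_neg hfst, add_zero, add_zero]
      exact prob_switchAvailable_and_le_mul M good ha hb hfst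

end Pairs

lemma sum_ite_fst_eq_le (P : Finset (Fin r × Fin r)) :
    ∑ a ∈ P ×ˢ (Finset.univ : Finset (Fin g)), ∑ b ∈ P ×ˢ (Finset.univ : Finset (Fin g)),
      (if a.1 = b.1 then 1 / (r : ℝ) ^ 4 else 0) ≤ (g : ℝ) ^ 2 / (r : ℝ) ^ 2 := by
  have hcard : (P.card : ℝ) ≤ (r : ℝ) ^ 2 := by
    have := Finset.card_le_univ P
    rw [Fintype.card_prod, Fintype.card_fin] at this
    rw [sq]
    exact_mod_cast this
  have hinner : ∀ a ∈ P ×ˢ (Finset.univ : Finset (Fin g)),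
      ∑ b ∈ P ×ˢ (Finset.univ : Finset (Fin g)), (if a.1 = b.1 then 1 / (r : ℝ) ^ 4 else 0) =
        g * (1 / (r : ℝ) ^ 4) := fun a ha => by
    rw [Finset.sum_product_right]
    simp only [Finset.sum_ite_eq, if_pos (Finset.mem_product.mp ha).1, Finset.sum_const,
      Finset.card_univ, Fintype.card_fin, nsmul_eq_mul]
  rw [Finset.sum_congr rfl hinner, Finset.sum_const, Finset.card_product, Finset.card_univ,
    Fintype.card_fin, nsmul_eq_mul, Nat.cast_mul]
  calc (P.card : ℝ) * g * (g * (1 / (r : ℝ) ^ 4)) ≤ (r : ℝ) ^ 2 * g * (g * (1 / (r : ℝ) ^ 4)) := by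
        gcongr
    _ = (g : ℝ) ^ 2 / (r : ℝ) ^ 2 := by
        rcases eq_or_ne (r : ℝ) 0 with h | h
        · simp [h]
        · field_simp

variable [Fintype Mk] [Nonempty Mk]

lemma prob_switchAvailable_ge (M : Perm (Fin r)) {good : Fin r × Fin r → Finset Mk}
    (hgood : ∀ e, (1 / 3 : ℝ) ≤ (good e).card / Fintype.card Mk) {a : Switch r g}
    (ha : a.1.1 ≠ a.1.2) : 1 / (r : ℝ) ^ 2 * (1 / 9) ≤ prob (SwitchAvailable M good a) := by
  rw [prob_switchAvailable, prob_sparesHit M ha]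
  unfold MarksGood
  rw [prob_forall_mem, switchEdges, Finset.prod_pair (by simp [ha])]
  gcongr
  calc (1 / 9 : ℝ) = 1 / 3 * (1 / 3) := by norm_num
    _ ≤ _ := mul_le_mul (hgood _) (hgood _) (by norm_num) (by positivity)

lemma sum_prob_switchAvailable_ge (M : Perm (Fin r)) {good : Fin r × Fin r → Finset Mk}
    (hr : 0 < r) (hgood : ∀ e, (1 / 3 : ℝ) ≤ (good e).card / Fintype.card Mk)
    {P : Finset (Fin r × Fin r)} (hP : ∀ p ∈ P, p.1 < p.2) (hcard : (r : ℝ) ^ 2 / 4 ≤ P.card) :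
    (g : ℝ) / 36 ≤ ∑ a ∈ P ×ˢ (Finset.univ : Finset (Fin g)), prob (SwitchAvailable M good a) := by
  have hterm : ∀ a ∈ P ×ˢ (Finset.univ : Finset (Fin g)),
      1 / (r : ℝ) ^ 2 * (1 / 9) ≤ prob (SwitchAvailable M good a) := fun a ha =>
    prob_switchAvailable_ge M hgood (hP _ (Finset.mem_product.mp ha).1).ne
  refine le_trans ?_ (Finset.card_nsmul_le_sum _ _ _ hterm)
  rw [Finset.card_product, Finset.card_univ, Fintype.card_fin, nsmul_eq_mul, Nat.cast_mul]
  have : (0 : ℝ) < r := by exact_mod_cast hr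
  calc (g : ℝ) / 36 = (r : ℝ) ^ 2 / 4 * g * (1 / (r : ℝ) ^ 2 * (1 / 9)) := by
        field_simp
        ring
    _ ≤ P.card * g * (1 / (r : ℝ) ^ 2 * (1 / 9)) := by gcongr

theorem prob_not_exists_switchAvailable_le (M : Perm (Fin r))
    {good : Fin r × Fin r → Finset Mk} (hr : 0 < r) (hg : 0 < g)
    (hgood : ∀ e, (1 / 3 : ℝ) ≤ (good e).card / Fintype.card Mk)
    {P : Finset (Fin r × Fin r)} (hP : ∀ p ∈ P, p.1 < p.2) (hcard : (r : ℝ) ^ 2 / 4 ≤ P.card) :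
    prob (fun ω => ¬∃ a ∈ P ×ˢ (Finset.univ : Finset (Fin g)), SwitchAvailable M good a ω) ≤
      36 / g + 1296 / (r : ℝ) ^ 2 := by
  have : Nonempty (Fin r) := ⟨⟨0, hr⟩⟩
  have hg' : (0 : ℝ) < g := by exact_mod_cast hg
  set I := P ×ˢ (Finset.univ : Finset (Fin g))
  have hlt : ∀ a ∈ I, a.1.1 < a.1.2 := fun a ha => hP _ (Finset.mem_product.mp ha).1
  have hmean : (g : ℝ) / 36 ≤ ∑ a ∈ I, prob (SwitchAvailable M good a) :=
    sum_prob_switchAvailable_ge M hr hgood hP hcard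
  have hpairs : ∑ a ∈ I, ∑ b ∈ I,
      prob (fun ω => SwitchAvailable M good a ω ∧ SwitchAvailable M good b ω) ≤
        (∑ a ∈ I, prob (SwitchAvailable M good a)) ^ 2 +
          (∑ a ∈ I, prob (SwitchAvailable M good a) + (g : ℝ) ^ 2 / (r : ℝ) ^ 2) := by
    refine (Finset.sum_le_sum fun a ha => Finset.sum_le_sum fun b hb =>
      prob_switchAvailable_and_le M good (hlt a ha) (hlt b hb)).trans ?_
    simp only [Finset.sum_add_distrib]
    rw [← Finset.sum_mul_sum, ← sq]
    refine add_le_add le_rfl (add_le_add (Finset.sum_le_sum fun a ha => ?_) (sum_ite_fst_eq_le P))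
    rw [Finset.sum_ite_eq, if_pos ha]
  have hE : 0 < ∑ a ∈ I, prob (SwitchAvailable M good a) :=
    (by positivity : 0 < (g : ℝ) / 36).trans_le hmean
  refine (prob_not_exists_le_div_sq I _ hE hpairs).trans ?_
  set E := ∑ a ∈ I, prob (SwitchAvailable M good a)
  calc (E + (g : ℝ) ^ 2 / (r : ℝ) ^ 2) / E ^ 2 = 1 / E + (g / E) ^ 2 / (r : ℝ) ^ 2 := by field_simp
    _ ≤ 36 / g + 36 ^ 2 / (r : ℝ) ^ 2 := by
        have hgE : g / E ≤ 36 := by rw [div_le_iff₀ hE]; linarith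
        have hE' : 1 / E ≤ 36 / g := by rw [div_le_div_iff₀ hE hg']; linarith
        gcongr
    _ = 36 / g + 1296 / (r : ℝ) ^ 2 := by norm_num

end Switches

section Labels

open scoped BigOperators

/-- A vertex in one of its two roles: `Sum.inl v` chooses out-neighbours of `v`, `Sum.inr w`
chooses in-neighbours of `w`. -/
abbrev HalfVertex (r : ℕ) : Type := Fin r ⊕ Fin r

/-- The vertex underlying a half vertex. -/
def baseVertex {r : ℕ} : HalfVertex r → Fin r := Sum.elim id id

variable {r : ℕ} {Q : Type*}

/-- The arc produced when the half vertex `l.1` makes its `l.2`-th choice `T l`. -/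
def labelEdge (T : HalfVertex r × Q → Fin r) (l : HalfVertex r × Q) : Fin r × Fin r :=
  Sum.elim (fun v => (v, T l)) (fun w => (T l, w)) l.1

open Classical in
/-- A chosen label among those producing the arc `e`. -/
noncomputable def edgeOwner (T : HalfVertex r × Q → Fin r) (e : Fin r × Fin r) :
    Option (HalfVertex r × Q) :=
  if h : ∃ l, labelEdge T l = e then some h.choose else none

/-- The arc of the label `l` is owned by another label. -/
def Lost (T : HalfVertex r × Q → Fin r) (l : HalfVertex r × Q) : Prop :=
  edgeOwner T (labelEdge T l) ≠ some l

lemma labelEdge_of_edgeOwner_eq_some {T : HalfVertex r × Q → Fin r} {e : Fin r × Fin r}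
    {l : HalfVertex r × Q} (h : edgeOwner T e = some l) : labelEdge T l = e := by
  unfold edgeOwner at h
  split_ifs at h with hex
  rw [← Option.some.inj h]
  exact hex.choose_spec

lemma exists_edgeOwner_eq_some (T : HalfVertex r × Q → Fin r) (l : HalfVertex r × Q) :
    ∃ l', edgeOwner T (labelEdge T l) = some l' := by
  unfold edgeOwner
  rw [dif_pos ⟨l, rfl⟩]
  exact ⟨_, rfl⟩

lemma exists_labelEdge_eq_of_lost {T : HalfVertex r × Q → Fin r} {l₁ l₂ : HalfVertex r × Q}
    (h₁ : Lost T l₁) (h₂ : Lost T l₂) :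
    ∃ p, p ≠ l₁ ∧ p ≠ l₂ ∧ labelEdge T p = labelEdge T l₁ := by
  obtain ⟨p, hp⟩ := exists_edgeOwner_eq_some T l₁
  have hedge := labelEdge_of_edgeOwner_eq_some hp
  refine ⟨p, ?_, ?_, hedge⟩
  · rintro rfl
    exact h₁ hp
  · rintro rfl
    exact h₂ (hedge ▸ hp)

lemma labelEdge_eq_cases {T : HalfVertex r × Q → Fin r} {p l : HalfVertex r × Q}
    (h : labelEdge T p = labelEdge T l) :
    (p.1 = l.1 ∧ T p = T l) ∨
      (p.1.isLeft ≠ l.1.isLeft ∧ baseVertex p.1 = T l ∧ T p = baseVertex l.1) := by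
  obtain ⟨x, p'⟩ := p
  obtain ⟨y, l'⟩ := l
  cases x <;> cases y <;> simp [labelEdge, baseVertex] at h ⊢ <;> tauto

open Classical in
/-- The labels of the half vertices with the opposite role to `x`. -/
noncomputable def oppositeLabels [Fintype Q] (x : HalfVertex r) : Finset (HalfVertex r × Q) :=
  Finset.univ.filter fun p => p.1.isLeft ≠ x.isLeft

lemma mem_oppositeLabels [Fintype Q] {x : HalfVertex r} {p : HalfVertex r × Q} :
    p ∈ oppositeLabels x ↔ p.1.isLeft ≠ x.isLeft := by
  simp [oppositeLabels]

lemma card_oppositeLabels [Fintype Q] (x : HalfVertex r) :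
    (oppositeLabels x : Finset (HalfVertex r × Q)).card = r * Fintype.card Q := by
  have hprod : (oppositeLabels x : Finset (HalfVertex r × Q)) =
      (Finset.univ.filter fun y : HalfVertex r => y.isLeft ≠ x.isLeft) ×ˢ Finset.univ := by
    ext p
    simp [mem_oppositeLabels]
  have hhalf : (Finset.univ.filter fun y : HalfVertex r => y.isLeft ≠ x.isLeft).card = r := by
    rw [Finset.card_filter]
    cases x <;> simp only [HalfVertex, Fintype.sum_sum_type] <;> simp
  rw [hprod, Finset.card_product, hhalf, Finset.card_univ]

open Classical in
/-- The values of `T l₁`, `T l₂` for which the arcs of these two labels of one half vertex may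
coincide with the arc of a third label. -/
noncomputable def collisionValues (l₁ l₂ : HalfVertex r × Q) (T : HalfVertex r × Q → Fin r) :
    Finset (Fin r) :=
  Finset.univ.filter fun w => (∃ p, p.1 = l₁.1 ∧ p ≠ l₁ ∧ p ≠ l₂ ∧ T p = w) ∨
    ∃ p, p.1.isLeft ≠ l₁.1.isLeft ∧ baseVertex p.1 = w ∧ T p = baseVertex l₁.1

lemma mem_collisionValues {l₁ l₂ : HalfVertex r × Q} {T : HalfVertex r × Q → Fin r} {w : Fin r} :
    w ∈ collisionValues l₁ l₂ T ↔ (∃ p, p.1 = l₁.1 ∧ p ≠ l₁ ∧ p ≠ l₂ ∧ T p = w) ∨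
      ∃ p, p.1.isLeft ≠ l₁.1.isLeft ∧ baseVertex p.1 = w ∧ T p = baseVertex l₁.1 := by
  simp [collisionValues]

lemma collisionValues_comm {l₁ l₂ : HalfVertex r × Q} (h : l₁.1 = l₂.1)
    (T : HalfVertex r × Q → Fin r) : collisionValues l₁ l₂ T = collisionValues l₂ l₁ T := by
  ext w
  rw [mem_collisionValues, mem_collisionValues, h]
  exact or_congr (exists_congr fun p => and_congr_right' and_left_comm) Iff.rfl

lemma mem_collisionValues_of_lost {T : HalfVertex r × Q → Fin r} {l₁ l₂ : HalfVertex r × Q}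
    (h₁ : Lost T l₁) (h₂ : Lost T l₂) : T l₁ ∈ collisionValues l₁ l₂ T := by
  obtain ⟨p, hp₁, hp₂, hedge⟩ := exists_labelEdge_eq_of_lost h₁ h₂
  rw [mem_collisionValues]
  rcases labelEdge_eq_cases hedge with ⟨hx, hT⟩ | ⟨hx, hbase, hT⟩
  · exact Or.inl ⟨p, hx, hp₁, hp₂, hT⟩
  · exact Or.inr ⟨p, hx, hbase, hT⟩

lemma collisionValues_update_left [DecidableEq Q] (l₁ l₂ : HalfVertex r × Q)
    (T : HalfVertex r × Q → Fin r) (w : Fin r) :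
    collisionValues l₁ l₂ (Function.update T l₁ w) = collisionValues l₁ l₂ T := by
  ext z
  rw [mem_collisionValues, mem_collisionValues]
  refine or_congr (exists_congr fun p => and_congr_right fun _ => and_congr_right fun hp => ?_)
    (exists_congr fun p => and_congr_right fun hp => ?_)
  · rw [Function.update_of_ne hp]
  · rw [Function.update_of_ne (by rintro rfl; exact hp rfl)]

section Probability

variable [Fintype Q]

lemma card_collisionValues_le (l₁ l₂ : HalfVertex r × Q) (T : HalfVertex r × Q → Fin r) :
    ((collisionValues l₁ l₂ T).card : ℝ) ≤
      Fintype.card Q + ∑ p ∈ oppositeLabels l₁.1, ind (T p = baseVertex l₁.1) := by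
  classical
  let hits := (oppositeLabels l₁.1 : Finset (HalfVertex r × Q)).filter
    fun p => T p = baseVertex l₁.1
  have hsub : collisionValues l₁ l₂ T ⊆
      (Finset.univ.image fun q => T (l₁.1, q)) ∪ hits.image fun p => baseVertex p.1 := by
    intro w hw
    rw [Finset.mem_union, Finset.mem_image, Finset.mem_image]
    rcases mem_collisionValues.mp hw with ⟨p, hx, -, -, hT⟩ | ⟨p, hx, hbase, hT⟩
    · exact Or.inl ⟨p.2, Finset.mem_univ _, by rw [← hx]; exact hT⟩
    · exact Or.inr ⟨p, Finset.mem_filter.mpr ⟨mem_oppositeLabels.mpr hx, hT⟩, hbase⟩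
  have hhits : (hits.card : ℝ) = ∑ p ∈ oppositeLabels l₁.1, ind (T p = baseVertex l₁.1) := by
    rw [Finset.card_filter, Nat.cast_sum]
    exact Finset.sum_congr rfl fun p _ => by
      by_cases hp : T p = baseVertex l₁.1 <;> simp [ind, hp]
  rw [← hhits]
  exact_mod_cast (Finset.card_le_card hsub).trans ((Finset.card_union_le _ _).trans
    (Nat.add_le_add Finset.card_image_le Finset.card_image_le))

variable [DecidableEq Q]

lemma expect_sq_card_collisionValues_le [Nonempty Q] (l₁ l₂ : HalfVertex r × Q) (hr : 0 < r) :
    𝔼 T, ((collisionValues l₁ l₂ T).card : ℝ) ^ 2 ≤ 6 * (Fintype.card Q : ℝ) ^ 2 := by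
  have : Nonempty (Fin r) := ⟨⟨0, hr⟩⟩
  have hr' : (r : ℝ) ≠ 0 := by exact_mod_cast hr.ne'
  have hcard : (1 : ℝ) ≤ Fintype.card Q := by exact_mod_cast Fintype.card_pos
  have hopp := expect_sq_sum_ind_apply_eq_le
    (oppositeLabels l₁.1 : Finset (HalfVertex r × Q)) (baseVertex l₁.1)
  rw [card_oppositeLabels, Fintype.card_fin, Nat.cast_mul, mul_div_cancel_left₀ _ hr'] at hopp
  have hterm (T : HalfVertex r × Q → Fin r) : ((collisionValues l₁ l₂ T).card : ℝ) ^ 2 ≤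
      2 * (Fintype.card Q : ℝ) ^ 2 +
        2 * (∑ p ∈ oppositeLabels l₁.1, ind (T p = baseVertex l₁.1)) ^ 2 :=
    (pow_le_pow_left₀ (Nat.cast_nonneg _) (card_collisionValues_le l₁ l₂ T) 2).trans
      ((add_sq_le).trans_eq (mul_add _ _ _))
  refine (Finset.expect_le_expect fun T _ => hterm T).trans ?_
  rw [Finset.expect_add_distrib, Fintype.expect_const, ← Finset.mul_expect]
  nlinarith

lemma prob_lost_and_lost_le {l₁ l₂ : HalfVertex r × Q} (hne : l₁ ≠ l₂) (hfst : l₁.1 = l₂.1) :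
    prob (fun T => Lost T l₁ ∧ Lost T l₂) ≤ 6 * (Fintype.card Q : ℝ) ^ 2 / (r : ℝ) ^ 2 := by
  have : Nonempty Q := ⟨l₁.2⟩
  have hr : 0 < r := Fin.pos (baseVertex l₁.1)
  have : Nonempty (Fin r) := ⟨⟨0, hr⟩⟩
  calc prob (fun T => Lost T l₁ ∧ Lost T l₂)
      ≤ prob (fun T => T l₁ ∈ collisionValues l₁ l₂ T ∧ T l₂ ∈ collisionValues l₁ l₂ T) :=
        prob_mono fun T h => ⟨mem_collisionValues_of_lost h.1 h.2,
          collisionValues_comm hfst T ▸ mem_collisionValues_of_lost h.2 h.1⟩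
    _ = 𝔼 T, ((collisionValues l₁ l₂ T).card / Fintype.card (Fin r) : ℝ) ^ 2 :=
        prob_mem_and_mem_of_update_eq hne _ (collisionValues_update_left l₁ l₂) fun T w => by
          rw [collisionValues_comm hfst, collisionValues_update_left, collisionValues_comm hfst]
    _ = (𝔼 T, ((collisionValues l₁ l₂ T).card : ℝ) ^ 2) / (r : ℝ) ^ 2 := by
        simp only [div_pow, Finset.expect_div, Fintype.card_fin]
    _ ≤ 6 * (Fintype.card Q : ℝ) ^ 2 / (r : ℝ) ^ 2 := by
        gcongr
        exact expect_sq_card_collisionValues_le l₁ l₂ hr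

/-- Some half vertex has two lost labels. -/
def TwoLost (T : HalfVertex r × Q → Fin r) : Prop :=
  ∃ l₁ l₂ : HalfVertex r × Q, l₁ ≠ l₂ ∧ l₁.1 = l₂.1 ∧ Lost T l₁ ∧ Lost T l₂

theorem prob_twoLost_le (hr : 0 < r) :
    prob (fun T : HalfVertex r × Q → Fin r => TwoLost T) ≤ 12 * (Fintype.card Q : ℝ) ^ 4 / r := by
  let S : Finset (HalfVertex r × Q × Q) := Finset.univ.filter fun z => z.2.1 ≠ z.2.2
  have hcover (T : HalfVertex r × Q → Fin r) (h : TwoLost T) :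
      ∃ z ∈ S, Lost T (z.1, z.2.1) ∧ Lost T (z.1, z.2.2) := by
    obtain ⟨⟨x, q₁⟩, ⟨y, q₂⟩, hne, rfl, h₁, h₂⟩ := h
    exact ⟨(x, q₁, q₂), by simpa [S] using hne, h₁, h₂⟩
  have hterm : ∀ z ∈ S, prob (fun T => Lost T (z.1, z.2.1) ∧ Lost T (z.1, z.2.2)) ≤
      6 * (Fintype.card Q : ℝ) ^ 2 / (r : ℝ) ^ 2 := fun z hz =>
    prob_lost_and_lost_le (fun h => (Finset.mem_filter.mp hz).2 (Prod.mk.inj h).2) rfl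
  have hcard : (S.card : ℝ) ≤ 2 * r * (Fintype.card Q : ℝ) ^ 2 := by
    have hle : (S.card : ℝ) ≤ Fintype.card (HalfVertex r × Q × Q) := by
      exact_mod_cast Finset.card_le_univ S
    refine hle.trans_eq ?_
    simp only [Fintype.card_prod, Fintype.card_sum, Fintype.card_fin]
    push_cast
    ring
  calc prob (fun T : HalfVertex r × Q → Fin r => TwoLost T)
      ≤ ∑ z ∈ S, prob (fun T => Lost T (z.1, z.2.1) ∧ Lost T (z.1, z.2.2)) :=
        (prob_mono hcover).trans (prob_exists_le S _)
    _ ≤ S.card * (6 * (Fintype.card Q : ℝ) ^ 2 / (r : ℝ) ^ 2) := by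
        simpa using Finset.sum_le_card_nsmul S _ _ hterm
    _ ≤ 2 * r * (Fintype.card Q : ℝ) ^ 2 * (6 * (Fintype.card Q : ℝ) ^ 2 / (r : ℝ) ^ 2) := by
        gcongr
    _ = 12 * (Fintype.card Q : ℝ) ^ 4 / r := by
        have hr' : (r : ℝ) ≠ 0 := by exact_mod_cast hr.ne'
        field_simp
        ring

end Probability

end Labels

section PatternMatchings

open Equiv
open scoped BigOperators

/-- The main choices: a half vertex makes `k * k` choices in each of `G` groups. The `k * k` choices
of a group are arranged in `k` blocks of `k`: one choice of each block is kept when the colours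
are made distinct, and the `k` survivors are then used to match tails with heads. -/
abbrev Label (r G k : ℕ) : Type := HalfVertex r × Fin G × Fin k × Fin k

/-- A mark: a colour together with the roll of an `N`-sided die which decides deletion. -/
abbrev Mark (C N : ℕ) : Type := Fin C × Fin N

/-- The die roll of the mark is one of the `m` rolls that delete an arc. -/
def Deleted {C N : ℕ} (m : ℕ) (μ : Mark C N) : Prop := μ.2.val < m

instance {C N : ℕ} (m : ℕ) : DecidablePred (Deleted m : Mark C N → Prop) :=
  fun μ => Nat.decLt μ.2.val m

variable {r G k C N m : ℕ}

lemma card_deleted_div_le (C N m : ℕ) :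
    ((Finset.univ.filter (Deleted m : Mark C N → Prop)).card : ℝ) / Fintype.card (Mark C N) ≤
      m / N := by
  have hprod : Finset.univ.filter (Deleted m : Mark C N → Prop) =
      Finset.univ ×ˢ Finset.univ.filter fun i : Fin N => i.val < m := by
    ext μ
    simp [Deleted]
  rw [hprod, Finset.card_product, Fintype.card_prod, Finset.card_univ, Fintype.card_fin,
    Fintype.card_fin, Fin.card_filter_val_lt, Nat.cast_mul, Nat.cast_mul]
  rcases eq_or_ne (C : ℝ) 0 with hC | hC
  · rw [hC, zero_mul, zero_div]
    positivity
  · rw [mul_div_mul_left _ _ hC]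
    gcongr
    exact min_le_right _ _

/-- Some block has two deleted choices. -/
def TwoDeleted (m : ℕ) (c : Label r G k → Mark C N) : Prop :=
  ∃ x γ j i₁ i₂, i₁ ≠ i₂ ∧ Deleted m (c (x, γ, j, i₁)) ∧ Deleted m (c (x, γ, j, i₂))

lemma prob_twoDeleted_le (hC : 0 < C) (hN : 0 < N) :
    prob (fun c : Label r G k → Mark C N => TwoDeleted m c) ≤
      2 * r * G * k ^ 3 * (m / N : ℝ) ^ 2 := by
  have : Nonempty (Mark C N) := ⟨(⟨0, hC⟩, ⟨0, hN⟩)⟩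
  let S : Finset (HalfVertex r × Fin G × Fin k × Fin k × Fin k) :=
    Finset.univ.filter fun z => z.2.2.2.1 ≠ z.2.2.2.2
  let pair (z : HalfVertex r × Fin G × Fin k × Fin k × Fin k) : Finset (Label r G k) :=
    {(z.1, z.2.1, z.2.2.1, z.2.2.2.1), (z.1, z.2.1, z.2.2.1, z.2.2.2.2)}
  have hcover (c : Label r G k → Mark C N) (h : TwoDeleted m c) :
      ∃ z ∈ S, ∀ l ∈ pair z, c l ∈ Finset.univ.filter (Deleted m) := by
    obtain ⟨x, γ, j, i₁, i₂, hne, h₁, h₂⟩ := h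
    exact ⟨(x, γ, j, i₁, i₂), by simpa [S] using hne, by simp [pair, h₁, h₂]⟩
  have hterm : ∀ z ∈ S, prob (fun c : Label r G k → Mark C N =>
      ∀ l ∈ pair z, c l ∈ Finset.univ.filter (Deleted m)) ≤ (m / N : ℝ) ^ 2 := by
    intro z hz
    rw [prob_forall_mem (pair z) fun _ => Finset.univ.filter (Deleted m),
      Finset.prod_pair (by simpa [S] using hz), ← sq]
    exact pow_le_pow_left₀ (by positivity) (card_deleted_div_le C N m) 2
  have hcard : (S.card : ℝ) ≤ 2 * r * G * k ^ 3 := by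
    have hle : (S.card : ℝ) ≤ Fintype.card (HalfVertex r × Fin G × Fin k × Fin k × Fin k) := by
      exact_mod_cast Finset.card_le_univ S
    refine hle.trans_eq ?_
    simp only [Fintype.card_prod, Fintype.card_sum, Fintype.card_fin]
    push_cast
    ring
  calc prob (fun c : Label r G k → Mark C N => TwoDeleted m c)
      ≤ ∑ z ∈ S, prob (fun c : Label r G k → Mark C N =>
          ∀ l ∈ pair z, c l ∈ Finset.univ.filter (Deleted m)) :=
        (prob_mono hcover).trans (prob_exists_le S _)
    _ ≤ S.card * (m / N : ℝ) ^ 2 := by simpa using Finset.sum_le_card_nsmul S _ _ hterm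
    _ ≤ 2 * r * G * k ^ 3 * (m / N : ℝ) ^ 2 := by gcongr

/-- The colours of the group-`b` choices, as seen from the blocks. -/
def patternColours (b : HalfVertex r → Fin G) (c : Label r G k → Mark C N)
    (p : (HalfVertex r × Fin k) × Fin k) : Fin C :=
  (c (p.1.1, b p.1.1, p.1.2, p.2)).1

lemma prob_hallObstruction_patternColours_le (hk : 40 ≤ k) (hN : 0 < N) (hC : 5 ≤ C)
    (hrC : 2 * r * k ≤ C) (b : HalfVertex r → Fin G) :
    prob (fun c : Label r G k → Mark C N => HallObstruction (patternColours b c)) ≤ 1 / C := by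
  have : Nonempty (Mark C N) := ⟨(⟨0, by lia⟩, ⟨0, hN⟩)⟩
  have : Nonempty (Fin N) := ⟨⟨0, hN⟩⟩
  have hinj : Function.Injective fun p : (HalfVertex r × Fin k) × Fin k =>
      ((p.1.1, b p.1.1, p.1.2, p.2) : Label r G k) := by
    rintro ⟨⟨x, j⟩, i⟩ ⟨⟨x', j'⟩, i'⟩ h
    simp_all
  calc prob (fun c : Label r G k → Mark C N => HallObstruction (patternColours b c))
      = prob (fun f : (HalfVertex r × Fin k) × Fin k → Mark C N =>
          HallObstruction (Prod.fst ∘ f)) :=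
        prob_comp_injective hinj fun f => HallObstruction (Prod.fst ∘ f)
    _ = prob (fun f : (HalfVertex r × Fin k) × Fin k → Fin C => HallObstruction f) :=
        prob_fst_comp _
    _ ≤ 1 / C := by
        simpa using prob_hallObstruction_le (X := HalfVertex r × Fin k) (Y := Fin C) (k := k)
          (by simpa [two_mul, add_mul] using hrC) (by simpa using hC) hk

/-- The group-`b` choice of the half vertex `x` in block `j` kept by the selection `s`. -/
def selectedLabel (b : HalfVertex r → Fin G) (s : HalfVertex r × Fin k → Fin k)
    (p : HalfVertex r × Fin k) : Label r G k :=
  (p.1, b p.1, p.2, s p)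

lemma prob_hallObstruction_selectedLabel_le (hk : 40 ≤ k) (hr : 5 ≤ r)
    (b : HalfVertex r → Fin G) (s : HalfVertex r × Fin k → Fin k) {σ : Fin r → HalfVertex r}
    (hσ : Function.Injective σ) :
    prob (fun T : Label r G k → Fin r =>
      HallObstruction fun p : Fin r × Fin k => T (selectedLabel b s (σ p.1, p.2))) ≤ 1 / r := by
  have : Nonempty (Fin r) := ⟨⟨0, by lia⟩⟩
  have hinj : Function.Injective fun p : Fin r × Fin k => selectedLabel b s (σ p.1, p.2) := by
    rintro ⟨v, j⟩ ⟨v', j'⟩ h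
    simp only [selectedLabel, Prod.mk.injEq] at h
    rw [hσ h.1, h.2.2.1]
  refine (prob_comp_injective hinj fun f => HallObstruction f).trans_le ?_
  simpa using prob_hallObstruction_le (X := Fin r) (Y := Fin r) le_rfl (by simpa using hr) hk

/-- The permutation `M` is a rainbow perfect matching of tails with heads whose arcs `(v, M v)` are
owned by undeleted labels `l v` of the groups prescribed by the pattern `b`. -/
structure IsPatternMatching (m : ℕ) (b : HalfVertex r → Fin G) (T : Label r G k → Fin r)
    (c : Label r G k → Mark C N) (M : Perm (Fin r)) (l : Fin r → Label r G k) : Prop where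
  owner : ∀ v, edgeOwner T (v, M v) = some (l v)
  group : ∀ v, (l v).2.1 = b (l v).1
  not_deleted : ∀ v, ¬Deleted m (c (l v))
  rainbow : Function.Injective fun v => (c (l v)).1

lemma injective_of_eq_inl_or_eq_inr {V : Type*} {M : Perm V} {x : V → V ⊕ V}
    (hx : ∀ v, x v = Sum.inl v ∨ x v = Sum.inr (M v)) : Function.Injective x := by
  intro v w hvw
  rcases hx v with hv | hv <;> rcases hx w with hw | hw <;> rw [hv, hw] at hvw
  · exact Sum.inl_injective hvw
  · cases hvw
  · cases hvw
  · exact M.injective (Sum.inr_injective hvw)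

namespace IsPatternMatching

variable {b : HalfVertex r → Fin G} {T : Label r G k → Fin r} {c : Label r G k → Mark C N}
  {M : Perm (Fin r)} {l : Fin r → Label r G k}

lemma halfVertex_eq (h : IsPatternMatching m b T c M l) (v : Fin r) :
    (l v).1 = Sum.inl v ∨ (l v).1 = Sum.inr (M v) := by
  have hedge := labelEdge_of_edgeOwner_eq_some (h.owner v)
  generalize l v = q at hedge
  obtain ⟨x, q⟩ := q
  cases x <;> simp_all [labelEdge]

lemma injective_halfVertex (h : IsPatternMatching m b T c M l) :
    Function.Injective fun v => (l v).1 :=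
  injective_of_eq_inl_or_eq_inr h.halfVertex_eq

end IsPatternMatching

lemma exists_isPatternMatching {b : HalfVertex r → Fin G} {T : Label r G k → Fin r}
    {c : Label r G k → Mark C N} {s : HalfVertex r × Fin k → Fin k} (hk : 0 < k)
    (halive : ∀ p, ¬Deleted m (c (selectedLabel b s p)))
    (hrainbow : Function.Injective fun p => (c (selectedLabel b s p)).1) (hT : ¬TwoLost T)
    (hleft : ¬HallObstruction fun p : Fin r × Fin k => T (selectedLabel b s (Sum.inl p.1, p.2)))
    (hright : ¬HallObstruction fun p : Fin r × Fin k => T (selectedLabel b s (Sum.inr p.1, p.2))) :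
    ∃ M l, IsPatternMatching m b T c M l := by
  have hok (x : HalfVertex r) : AllButOne fun j => ¬Lost T (selectedLabel b s (x, j)) :=
    allButOne_of_not_imp_eq hk fun i j hi hj => by
      by_contra hij
      exact hT ⟨selectedLabel b s (x, i), selectedLabel b s (x, j),
        fun h => hij (congrArg (fun l => l.2.2.1) h), rfl, not_not.mp hi, not_not.mp hj⟩
  obtain ⟨M, hM⟩ := exists_perm_selection (τ := fun p => T (selectedLabel b s p)) hleft hright hok
  have hlabel (v : Fin r) : ∃ p : HalfVertex r × Fin k,
      (p.1 = Sum.inl v ∨ p.1 = Sum.inr (M v)) ∧ ¬Lost T (selectedLabel b s p) ∧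
        labelEdge T (selectedLabel b s p) = (v, M v) := by
    rcases hM v with ⟨j, hlost, hval⟩ | ⟨j, hlost, hval⟩
    · exact ⟨(Sum.inl v, j), Or.inl rfl, hlost, by simpa [labelEdge, selectedLabel] using hval⟩
    · exact ⟨(Sum.inr (M v), j), Or.inr rfl, hlost, by simpa [labelEdge, selectedLabel] using hval⟩
  choose p hhalf hlost hedge using hlabel
  refine ⟨M, fun v => selectedLabel b s (p v), fun v => ?_, fun _ => rfl, fun _ => halive _,
    fun v w hvw => ?_⟩
  · rw [← hedge]
    exact not_not.mp (hlost v)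
  · exact injective_of_eq_inl_or_eq_inr hhalf (congrArg Prod.fst (hrainbow hvw))

lemma prob_not_exists_isPatternMatching_le_of_marks (hk : 40 ≤ k) (hr : 5 ≤ r)
    (hrC : 4 * r * k ≤ C) {b : HalfVertex r → Fin G} {c : Label r G k → Mark C N}
    (hdel : ¬TwoDeleted m c) (hcol : ¬HallObstruction (patternColours b c)) :
    prob (fun T : Label r G k → Fin r => ¬∃ M l, IsPatternMatching m b T c M l) ≤
      12 * ((G * k * k : ℕ) : ℝ) ^ 4 / r + 2 / r := by
  have hk' : 0 < k := by lia
  obtain ⟨s, halive, hrainbow⟩ := exists_injective_selection hcol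
    (by simp only [Fintype.card_prod, Fintype.card_sum, Fintype.card_fin]; nlinarith)
    (ok := fun p i => ¬Deleted m (c (p.1, b p.1, p.2, i))) fun p =>
      allButOne_of_not_imp_eq hk' fun i j hi hj => by
        by_contra hij
        exact hdel ⟨p.1, b p.1, p.2, i, j, hij, not_not.mp hi, not_not.mp hj⟩
  have hlost := prob_twoLost_le (r := r) (Q := Fin G × Fin k × Fin k) (by lia)
  simp only [Fintype.card_prod, Fintype.card_fin, ← mul_assoc] at hlost
  have hleft := prob_hallObstruction_selectedLabel_le hk hr b s Sum.inl_injective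
  have hright := prob_hallObstruction_selectedLabel_le hk hr b s Sum.inr_injective
  calc prob (fun T : Label r G k → Fin r => ¬∃ M l, IsPatternMatching m b T c M l)
      ≤ prob (fun T : Label r G k → Fin r => TwoLost T ∨
          ((HallObstruction fun p : Fin r × Fin k => T (selectedLabel b s (Sum.inl p.1, p.2))) ∨
            HallObstruction fun p : Fin r × Fin k => T (selectedLabel b s (Sum.inr p.1, p.2)))) :=
        prob_mono fun T hT => by
          by_contra hgood
          push Not at hgood
          exact hT (exists_isPatternMatching hk' halive hrainbow hgood.1 hgood.2.1 hgood.2.2)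
    _ ≤ 12 * ((G * k * k : ℕ) : ℝ) ^ 4 / r + (1 / r + 1 / r) :=
        (prob_or_le _ _).trans (add_le_add hlost
          ((prob_or_le _ _).trans (add_le_add hleft hright)))
    _ = 12 * ((G * k * k : ℕ) : ℝ) ^ 4 / r + 2 / r := by ring

theorem prob_not_exists_isPatternMatching_le (hk : 40 ≤ k) (hr : 5 ≤ r) (hN : 0 < N)
    (hrC : 4 * r * k ≤ C) (b : HalfVertex r → Fin G) :
    prob (fun ω : (Label r G k → Fin r) × (Label r G k → Mark C N) =>
      ¬∃ M l, IsPatternMatching m b ω.1 ω.2 M l) ≤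
      12 * ((G * k * k : ℕ) : ℝ) ^ 4 / r + 2 / r +
        (2 * r * G * k ^ 3 * (m / N : ℝ) ^ 2 + 1 / C) := by
  have hC : 5 ≤ C := by nlinarith
  have : Nonempty (Mark C N) := ⟨(⟨0, by lia⟩, ⟨0, hN⟩)⟩
  set B : ℝ := 12 * ((G * k * k : ℕ) : ℝ) ^ 4 / r + 2 / r
  have hB : 0 ≤ B := by positivity
  have hmarks (c : Label r G k → Mark C N) :
      prob (fun T : Label r G k → Fin r => ¬∃ M l, IsPatternMatching m b T c M l) ≤
        B + ind (TwoDeleted m c ∨ HallObstruction (patternColours b c)) := by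
    by_cases hc : TwoDeleted m c ∨ HallObstruction (patternColours b c)
    · rw [ind_true hc]
      exact (prob_le_one _).trans (le_add_of_nonneg_left hB)
    · rw [ind_false hc, add_zero]
      push Not at hc
      exact prob_not_exists_isPatternMatching_le_of_marks hk hr hrC hc.1 hc.2
  calc prob (fun ω : (Label r G k → Fin r) × (Label r G k → Mark C N) =>
        ¬∃ M l, IsPatternMatching m b ω.1 ω.2 M l)
      = 𝔼 c, prob (fun T : Label r G k → Fin r => ¬∃ M l, IsPatternMatching m b T c M l) :=
        (prob_prod_type _).trans (Finset.expect_comm ..)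
    _ ≤ 𝔼 c, (B + ind (TwoDeleted m c ∨ HallObstruction (patternColours b c))) :=
        Finset.expect_le_expect fun c _ => hmarks c
    _ = B + prob (fun c : Label r G k → Mark C N =>
          TwoDeleted m c ∨ HallObstruction (patternColours b c)) := by
        rw [Finset.expect_add_distrib, Fintype.expect_const, prob]
    _ ≤ B + (2 * r * G * k ^ 3 * (m / N : ℝ) ^ 2 + 1 / C) :=
        add_le_add le_rfl ((prob_or_le _ _).trans (add_le_add (prob_twoDeleted_le (by lia) hN)
          (prob_hallObstruction_patternColours_le hk hN hC (by nlinarith) b)))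

end PatternMatchings

section RainbowPermutations

open Equiv

variable {V K : Type*}

/-- The arcs `(v, M v)` of the permutation `M` belong to the digraph `A` and have pairwise distinct
colours under `χ`. -/
structure IsRainbowPerm (A : Set (V × V)) (χ : V × V → K) (M : Perm V) : Prop where
  arc_mem : ∀ v, (v, M v) ∈ A
  rainbow : Function.Injective fun v => χ (v, M v)

theorem IsRainbowPerm.mul_swap [DecidableEq V] {A : Set (V × V)} {χ : V × V → K} {M : Perm V}
    (h : IsRainbowPerm A χ M) {v u : V} (hv : (v, M u) ∈ A) (hu : (u, M v) ∈ A)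
    (hvM : ∀ w, χ (v, M u) ≠ χ (w, M w)) (huM : ∀ w, χ (u, M v) ≠ χ (w, M w))
    (hvu : χ (v, M u) ≠ χ (u, M v)) : IsRainbowPerm A χ (M * swap v u) := by
  have happly (w : V) : (M * swap v u) w = if w = v then M u else if w = u then M v else M w := by
    rw [Perm.mul_apply, swap_apply_def]
    split_ifs <;> rfl
  constructor
  · intro w
    rw [happly]
    split_ifs with hwv hwu
    · rwa [hwv]
    · rwa [hwu]
    · exact h.arc_mem w
  · intro w w' hww'
    simp only [happly] at hww'
    split_ifs at hww' with h₁ h₂ h₃ h₄ h₅ h₆ h₇ h₈ <;> subst_vars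
    · rfl
    · exact absurd hww' hvu
    · exact absurd hww' (hvM w')
    · exact absurd hww'.symm hvu
    · rfl
    · exact absurd hww' (huM w')
    · exact absurd hww'.symm (hvM w)
    · exact absurd hww'.symm (huM w)
    · exact h.rainbow hww'

end RainbowPermutations

section SwitchableMatchings

open Equiv
open scoped BigOperators

section LiveArcs

variable {r g C N : ℕ} {Q : Type*}

/-- The arcs chosen by the main choices `T` or by the spare choices `R` that are not deleted
according to the marks `κ`. -/
def liveArcs (m : ℕ) (T : HalfVertex r × Q → Fin r) (R : Fin r × Fin g → Fin r)
    (κ : Fin r × Fin r → Mark C N) : Set (Fin r × Fin r) :=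
  {e | ((∃ l, labelEdge T l = e) ∨ ∃ j, R (e.1, j) = e.2) ∧ ¬Deleted m (κ e)}

/-- The mark of an arc: it is taken from the label owning the arc, or is a private mark `κ e` if the
arc has no owner. -/
noncomputable def edgeMark (T : HalfVertex r × Q → Fin r) (c : HalfVertex r × Q → Mark C N)
    (κ : Fin r × Fin r → Mark C N) (e : Fin r × Fin r) : Mark C N :=
  (edgeOwner T e).elim (κ e) c

lemma edgeMark_of_eq_some {T : HalfVertex r × Q → Fin r} {e : Fin r × Fin r}
    {l : HalfVertex r × Q} (h : edgeOwner T e = some l) (c : HalfVertex r × Q → Mark C N)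
    (κ : Fin r × Fin r → Mark C N) : edgeMark T c κ e = c l := by
  simp [edgeMark, h]

lemma edgeMark_of_eq_none {T : HalfVertex r × Q → Fin r} {e : Fin r × Fin r}
    (h : edgeOwner T e = none) (c : HalfVertex r × Q → Mark C N)
    (κ : Fin r × Fin r → Mark C N) : edgeMark T c κ e = κ e := by
  simp [edgeMark, h]

open Classical in
/-- The pairs `v < u` for which neither of the arcs `v → M u`, `u → M v` is owned by a label. -/
noncomputable def unownedPairs (T : HalfVertex r × Q → Fin r) (M : Perm (Fin r)) :
    Finset (Fin r × Fin r) :=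
  Finset.univ.filter fun p =>
    p.1 < p.2 ∧ edgeOwner T (p.1, M p.2) = none ∧ edgeOwner T (p.2, M p.1) = none

lemma mem_unownedPairs {T : HalfVertex r × Q → Fin r} {M : Perm (Fin r)} {p : Fin r × Fin r} :
    p ∈ unownedPairs T M ↔
      p.1 < p.2 ∧ edgeOwner T (p.1, M p.2) = none ∧ edgeOwner T (p.2, M p.1) = none := by
  simp [unownedPairs]

lemma sq_le_two_mul_card_filter_lt_add (r : ℕ) :
    r * r ≤ 2 * (Finset.univ.filter fun p : Fin r × Fin r => p.1 < p.2).card + r := by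
  have hswap : (Finset.univ.filter fun p : Fin r × Fin r => p.2 < p.1).card =
      (Finset.univ.filter fun p : Fin r × Fin r => p.1 < p.2).card :=
    Finset.card_equiv (Equiv.prodComm _ _) (by simp)
  have hoffDiag : (Finset.univ : Finset (Fin r)).offDiag ⊆
      (Finset.univ.filter fun p : Fin r × Fin r => p.1 < p.2) ∪
        Finset.univ.filter fun p : Fin r × Fin r => p.2 < p.1 := fun p hp => by
    simpa [lt_or_lt_iff_ne] using hp
  have hcard := (Finset.card_le_card hoffDiag).trans (Finset.card_union_le _ _)
  rw [hswap, Finset.offDiag_card, Finset.card_univ, Fintype.card_fin] at hcard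
  lia

theorem sq_le_card_unownedPairs [Fintype Q] (T : HalfVertex r × Q → Fin r) (M : Perm (Fin r)) :
    r * r ≤ 2 * (unownedPairs T M).card + 4 * r * Fintype.card Q + r := by
  classical
  let pairOf (l : HalfVertex r × Q) : Fin r × Fin r :=
    (min (labelEdge T l).1 (M⁻¹ (labelEdge T l).2), max (labelEdge T l).1 (M⁻¹ (labelEdge T l).2))
  have hcover : (Finset.univ.filter fun p : Fin r × Fin r => p.1 < p.2) ⊆
      unownedPairs T M ∪ Finset.univ.image pairOf := by
    rintro ⟨v, u⟩ hlt
    replace hlt : v < u := by simpa using hlt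
    rw [Finset.mem_union, mem_unownedPairs, Finset.mem_image]
    by_contra! hcon
    by_cases hvu : edgeOwner T (v, M u) = none
    · obtain ⟨l, hl⟩ := Option.ne_none_iff_exists'.mp (hcon.1 hlt hvu)
      exact hcon.2 l (Finset.mem_univ l) (by
        simp [pairOf, labelEdge_of_edgeOwner_eq_some hl, hlt.le])
    · obtain ⟨l, hl⟩ := Option.ne_none_iff_exists'.mp hvu
      exact hcon.2 l (Finset.mem_univ l) (by
        simp [pairOf, labelEdge_of_edgeOwner_eq_some hl, hlt.le])
  have hcard := (Finset.card_le_card hcover).trans (Finset.card_union_le _ _)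
  have himage := Finset.card_image_le (s := Finset.univ) (f := pairOf)
  rw [Finset.card_univ, Fintype.card_prod, Fintype.card_sum, Fintype.card_fin] at himage
  have hpairs := sq_le_two_mul_card_filter_lt_add r
  nlinarith

end LiveArcs

variable {r G k C N m g : ℕ}

lemma sq_div_four_le_card_unownedPairs (T : Label r G k → Fin r) (M : Perm (Fin r))
    (hr : 2 + 8 * (G * k * k) ≤ r) : (r : ℝ) ^ 2 / 4 ≤ (unownedPairs T M).card := by
  have hcard := sq_le_card_unownedPairs T M
  simp only [Fintype.card_prod, Fintype.card_fin, ← mul_assoc] at hcard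
  have hnat : r * r ≤ 4 * (unownedPairs T M).card := by nlinarith
  have hreal : (r : ℝ) * r ≤ 4 * (unownedPairs T M).card := by exact_mod_cast hnat
  linarith

/-- The marks accepted on the arc `e` inserted by a switch of `M`: they are not deleted and their
colours avoid `U`. The two arcs of a switch take their colours from different halves of the palette,
which makes these colours distinct. -/
def admissibleMarks (m : ℕ) (U : Finset (Fin C)) (M : Perm (Fin r)) (e : Fin r × Fin r) :
    Finset (Mark C N) :=
  Finset.univ.filter fun μ =>
    ¬Deleted m μ ∧ μ.1 ∉ U ∧ (μ.1.val < C / 2 ↔ e.1 < M⁻¹ e.2)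

lemma mem_admissibleMarks {U : Finset (Fin C)} {M : Perm (Fin r)} {e : Fin r × Fin r}
    {μ : Mark C N} : μ ∈ admissibleMarks m U M e ↔
      ¬Deleted m μ ∧ μ.1 ∉ U ∧ (μ.1.val < C / 2 ↔ e.1 < M⁻¹ e.2) := by
  simp [admissibleMarks]

lemma half_le_card_filter_lt_half_iff (C : ℕ) (p : Prop) [Decidable p] :
    C / 2 ≤ (Finset.univ.filter fun i : Fin C => (i.val < C / 2 ↔ p)).card := by
  have hsum := Finset.card_filter_add_card_filter_not (s := (Finset.univ : Finset (Fin C)))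
    fun i => i.val < C / 2
  rw [Fin.card_filter_val_lt, Finset.card_univ, Fintype.card_fin] at hsum
  by_cases hp : p
  · simp only [hp, iff_true, Fin.card_filter_val_lt]
    lia
  · simp only [hp, iff_false]
    lia

lemma one_third_le_card_admissibleMarks_div {U : Finset (Fin C)} (hU : U.card ≤ r)
    (M : Perm (Fin r)) (e : Fin r × Fin r) (hC : 20 ≤ C) (hCr : 20 * r ≤ C) (hN : 0 < N)
    (hm : 10 * m ≤ N) :
    (1 / 3 : ℝ) ≤
      (admissibleMarks m U M e : Finset (Mark C N)).card / Fintype.card (Mark C N) := by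
  set half := Finset.univ.filter fun i : Fin C => (i.val < C / 2 ↔ e.1 < M⁻¹ e.2)
  have hprod : (admissibleMarks m U M e : Finset (Mark C N)) =
      (half \ U) ×ˢ Finset.univ.filter fun i : Fin N => ¬i.val < m := by
    ext μ
    simp only [mem_admissibleMarks, Deleted, half, Finset.mem_filter, Finset.mem_univ, true_and,
      Finset.mem_product, Finset.mem_sdiff]
    tauto
  have hcolours : (0.425 : ℝ) * C ≤ (half \ U).card := by
    have hhalf := half_le_card_filter_lt_half_iff C (e.1 < M⁻¹ e.2)
    have hsdiff := Finset.le_card_sdiff U half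
    have hnat : 17 * C ≤ 40 * (half \ U).card := by lia
    have hreal : (17 : ℝ) * C ≤ 40 * (half \ U).card := by exact_mod_cast hnat
    linarith
  have hdice : (0.9 : ℝ) * N ≤ (Finset.univ.filter fun i : Fin N => ¬i.val < m).card := by
    have hsum := Finset.card_filter_add_card_filter_not (s := (Finset.univ : Finset (Fin N)))
      fun i => i.val < m
    rw [Fin.card_filter_val_lt, Finset.card_univ, Fintype.card_fin] at hsum
    have hnat : 9 * N ≤ 10 * (Finset.univ.filter fun i : Fin N => ¬i.val < m).card := by lia
    have hreal : (9 : ℝ) * N ≤ 10 * (Finset.univ.filter fun i : Fin N => ¬i.val < m).card := by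
      exact_mod_cast hnat
    linarith
  have hpos : (0 : ℝ) < C * N := by exact_mod_cast Nat.mul_pos (by lia) hN
  rw [hprod, Finset.card_product, Fintype.card_prod, Fintype.card_fin, Fintype.card_fin,
    Nat.cast_mul, Nat.cast_mul, le_div_iff₀ hpos]
  calc 1 / 3 * ((C : ℝ) * N) ≤ (0.425 * C) * (0.9 * N) := by linarith
    _ ≤ _ := by gcongr

/-- The random choices made in the label model: targets and marks of the labels, then spare targets
and private marks of the arcs. -/
abbrev Experiment (r G k C N g : ℕ) : Type :=
  ((Label r G k → Fin r) × (Label r G k → Mark C N)) ×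
    ((Fin r × Fin g → Fin r) × (Fin r × Fin r → Mark C N))

/-- The permutation `M` is rainbow in the digraph of the live arcs of the experiment. -/
def IsLiveRainbow (m : ℕ) (ω : Experiment r G k C N g) (M : Perm (Fin r)) : Prop :=
  IsRainbowPerm (liveArcs m ω.1.1 ω.2.1 (edgeMark ω.1.1 ω.1.2 ω.2.2))
    (fun e => (edgeMark ω.1.1 ω.1.2 ω.2.2 e).1) M

lemma IsPatternMatching.edgeMark_eq {b : HalfVertex r → Fin G} {T : Label r G k → Fin r}
    {c : Label r G k → Mark C N} {M : Perm (Fin r)} {l : Fin r → Label r G k}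
    (h : IsPatternMatching m b T c M l) (κ : Fin r × Fin r → Mark C N) (v : Fin r) :
    edgeMark T c κ (v, M v) = c (l v) :=
  edgeMark_of_eq_some (h.owner v) c κ

lemma IsPatternMatching.isLiveRainbow {b : HalfVertex r → Fin G} {ω : Experiment r G k C N g}
    {M : Perm (Fin r)} {l : Fin r → Label r G k} (h : IsPatternMatching m b ω.1.1 ω.1.2 M l) :
    IsLiveRainbow m ω M where
  arc_mem v := ⟨Or.inl ⟨l v, labelEdge_of_edgeOwner_eq_some (h.owner v)⟩, by
    rw [h.edgeMark_eq]
    exact h.not_deleted v⟩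
  rainbow := by
    simp only [h.edgeMark_eq]
    exact h.rainbow

/-- A matching `M false` with pattern `b` together with a rainbow permutation `M true` of the
opposite sign which differs from it in at most two places. -/
structure IsSwitchable (m : ℕ) (b : HalfVertex r → Fin G) (ω : Experiment r G k C N g)
    (M : Bool → Perm (Fin r)) (l : Fin r → Label r G k) : Prop where
  isPatternMatching : IsPatternMatching m b ω.1.1 ω.1.2 (M false) l
  sign_ne : Perm.sign (M false) ≠ Perm.sign (M true)
  card_ne_le : (Finset.univ.filter fun v => M true v ≠ M false v).card ≤ 2
  isLiveRainbow : ∀ i, IsLiveRainbow m ω (M i)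

lemma IsPatternMatching.isLiveRainbow_mul_swap {b : HalfVertex r → Fin G}
    {ω : Experiment r G k C N g} {M : Perm (Fin r)} {l : Fin r → Label r G k}
    (h : IsPatternMatching m b ω.1.1 ω.1.2 M l) {a : Switch r g}
    (hfree : a.1 ∈ unownedPairs ω.1.1 M)
    (ha : SwitchAvailable M
      (admissibleMarks m (Finset.univ.image fun v => (ω.1.2 (l v)).1) M) a ω.2) :
    IsLiveRainbow m ω (M * swap a.1.1 a.1.2) := by
  obtain ⟨⟨v, u⟩, i⟩ := a
  obtain ⟨hlt, hvnone, hunone⟩ := mem_unownedPairs.mp hfree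
  obtain ⟨hspare, hmarks⟩ := ha
  have hRv : ω.2.1 (v, i) = M u := by simpa using hspare (v, i) (by simp [switchTails])
  have hRu : ω.2.1 (u, i) = M v := by simpa using hspare (u, i) (by simp [switchTails])
  have hκv := hmarks (v, M u) (by simp [switchEdges])
  have hκu := hmarks (u, M v) (by simp [switchEdges])
  rw [← edgeMark_of_eq_none hvnone ω.1.2 ω.2.2] at hκv
  rw [← edgeMark_of_eq_none hunone ω.1.2 ω.2.2] at hκu
  have hinv (x : Fin r) : M⁻¹ (M x) = x := M.symm_apply_apply x
  simp only [mem_admissibleMarks, Finset.mem_image, Finset.mem_univ, true_and, not_exists, hinv,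
    iff_true, iff_false, hlt, hlt.not_gt, ← h.edgeMark_eq ω.2.2] at hκv hκu
  refine h.isLiveRainbow.mul_swap ⟨Or.inr ⟨i, hRv⟩, hκv.1⟩ ⟨Or.inr ⟨i, hRu⟩, hκu.1⟩
    (fun w hw => hκv.2.1 w hw.symm) (fun w hw => hκu.2.1 w hw.symm) fun hcolour => hκu.2.2 ?_
  rw [← hcolour]
  exact hκv.2.2

lemma IsPatternMatching.isSwitchable {b : HalfVertex r → Fin G}
    {ω : Experiment r G k C N g} {M : Perm (Fin r)} {l : Fin r → Label r G k}
    (h : IsPatternMatching m b ω.1.1 ω.1.2 M l) {a : Switch r g}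
    (hfree : a.1 ∈ unownedPairs ω.1.1 M)
    (ha : SwitchAvailable M
      (admissibleMarks m (Finset.univ.image fun v => (ω.1.2 (l v)).1) M) a ω.2) :
    IsSwitchable m b ω (fun i => if i then M * swap a.1.1 a.1.2 else M) l where
  isPatternMatching := h
  sign_ne := by
    simp [Perm.sign_swap (mem_unownedPairs.mp hfree).1.ne]
  card_ne_le := by
    refine (Finset.card_le_card (t := {a.1.1, a.1.2}) fun w hw => ?_).trans Finset.card_le_two
    by_contra hw'
    simp only [Finset.mem_insert, Finset.mem_singleton, not_or] at hw'
    simp [swap_apply_of_ne_of_ne hw'.1 hw'.2] at hw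
  isLiveRainbow
    | false => h.isLiveRainbow
    | true => h.isLiveRainbow_mul_swap hfree ha

/-- An upper bound for the probability that a given pattern has no switchable matching. -/
noncomputable def patternFailureBound (r G k C N m g : ℕ) : ℝ :=
  12 * ((G * k * k : ℕ) : ℝ) ^ 4 / r + 2 / r + (2 * r * G * k ^ 3 * (m / N : ℝ) ^ 2 + 1 / C) +
    (36 / g + 1296 / (r : ℝ) ^ 2)

lemma prob_not_exists_isSwitchable_le_of_isPatternMatching (hg : 0 < g) (hN : 0 < N)
    (hC : 20 ≤ C) (hCr : 20 * r ≤ C) (hm : 10 * m ≤ N) (hr : 2 + 8 * (G * k * k) ≤ r)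
    {b : HalfVertex r → Fin G} {ω : (Label r G k → Fin r) × (Label r G k → Mark C N)}
    {M : Perm (Fin r)} {l : Fin r → Label r G k} (h : IsPatternMatching m b ω.1 ω.2 M l) :
    prob (fun ω' : (Fin r × Fin g → Fin r) × (Fin r × Fin r → Mark C N) =>
      ¬∃ M l, IsSwitchable m b (ω, ω') M l) ≤ 36 / g + 1296 / (r : ℝ) ^ 2 := by
  have : Nonempty (Mark C N) := ⟨(⟨0, by lia⟩, ⟨0, hN⟩)⟩
  have hU : (Finset.univ.image fun v => (ω.2 (l v)).1).card ≤ r :=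
    Finset.card_image_le.trans (by simp)
  refine (prob_mono ?_).trans (prob_not_exists_switchAvailable_le M (by lia) hg
    (fun e => one_third_le_card_admissibleMarks_div hU M e hC hCr hN hm)
    (fun p hp => (mem_unownedPairs.mp hp).1) (sq_div_four_le_card_unownedPairs ω.1 M hr))
  rintro ω' hnone ⟨a, ha, havail⟩
  exact hnone ⟨_, l, IsPatternMatching.isSwitchable (ω := (ω, ω')) h (Finset.mem_product.mp ha).1
    havail⟩

theorem prob_not_exists_isSwitchable_le (hk : 40 ≤ k) (hg : 0 < g) (hN : 0 < N) (hC : 20 ≤ C)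
    (hrC : 4 * r * k ≤ C) (hm : 10 * m ≤ N) (hr : 5 + 8 * (G * k * k) ≤ r)
    (b : HalfVertex r → Fin G) :
    prob (fun ω : Experiment r G k C N g => ¬∃ M l, IsSwitchable m b ω M l) ≤
      patternFailureBound r G k C N m g := by
  have : Nonempty (Mark C N) := ⟨(⟨0, by lia⟩, ⟨0, hN⟩)⟩
  have : Nonempty (Fin r) := ⟨⟨0, by lia⟩⟩
  set B : ℝ := 36 / g + 1296 / (r : ℝ) ^ 2
  have hB : 0 ≤ B := by positivity
  have hcond (ω : (Label r G k → Fin r) × (Label r G k → Mark C N)) :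
      prob (fun ω' : (Fin r × Fin g → Fin r) × (Fin r × Fin r → Mark C N) =>
        ¬∃ M l, IsSwitchable m b (ω, ω') M l) ≤
        ind (¬∃ M l, IsPatternMatching m b ω.1 ω.2 M l) + B := by
    by_cases hω : ∃ M l, IsPatternMatching m b ω.1 ω.2 M l
    · rw [ind_false (not_not.mpr hω), zero_add]
      obtain ⟨M, l, h⟩ := hω
      exact prob_not_exists_isSwitchable_le_of_isPatternMatching hg hN hC (by nlinarith) hm
        (by lia) h
    · rw [ind_true hω]
      exact (prob_le_one _).trans (le_add_of_nonneg_right hB)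
  calc prob (fun ω : Experiment r G k C N g => ¬∃ M l, IsSwitchable m b ω M l)
      ≤ 𝔼 ω : (Label r G k → Fin r) × (Label r G k → Mark C N),
          (ind (¬∃ M l, IsPatternMatching m b ω.1 ω.2 M l) + B) :=
        (prob_prod_type _).trans_le (Finset.expect_le_expect fun ω _ => hcond ω)
    _ = prob (fun ω : (Label r G k → Fin r) × (Label r G k → Mark C N) =>
          ¬∃ M l, IsPatternMatching m b ω.1 ω.2 M l) + B := by
        rw [Finset.expect_add_distrib, Fintype.expect_const, prob]
    _ ≤ patternFailureBound r G k C N m g :=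
        add_le_add (prob_not_exists_isPatternMatching_le hk (by lia) hN hrC b) le_rfl

end SwitchableMatchings

section PatternSecondMoment

open Equiv
open scoped BigOperators

/-- The number of places where two permutations agree. -/
def agreement {V : Type*} [Fintype V] [DecidableEq V] (M M' : Perm V) : ℕ :=
  (Finset.univ.filter fun v => M v = M' v).card

section Agreement

variable {r G k C N m : ℕ}

lemma IsPatternMatching.pattern_eq {b b' : HalfVertex r → Fin G} {T : Label r G k → Fin r}
    {c : Label r G k → Mark C N} {M M' : Perm (Fin r)} {l l' : Fin r → Label r G k}
    (h : IsPatternMatching m b T c M l) (h' : IsPatternMatching m b' T c M' l') {v : Fin r}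
    (hv : M v = M' v) : b' (l v).1 = b (l v).1 := by
  have howner := h'.owner v
  rw [← hv, h.owner v, Option.some_inj] at howner
  rw [← h.group v, howner, h'.group v]

theorem prob_exists_le_agreement_le {b : HalfVertex r → Fin G} {T : Label r G k → Fin r}
    {c : Label r G k → Mark C N} {M : Perm (Fin r)} {l : Fin r → Label r G k}
    (h : IsPatternMatching m b T c M l) (hG : 0 < G) (q : ℕ) :
    prob (fun b' : HalfVertex r → Fin G =>
      ∃ M' l', IsPatternMatching m b' T c M' l' ∧ q ≤ agreement M M') ≤ 2 ^ r / (G : ℝ) ^ q := by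
  have : Nonempty (Fin G) := ⟨⟨0, hG⟩⟩
  let places := Finset.powersetCard q (Finset.univ : Finset (Fin r))
  have hagree (S : Finset (Fin r)) (hS : S ∈ places) :
      prob (fun b' : HalfVertex r → Fin G =>
        ∀ x ∈ S.image fun v => (l v).1, b' x ∈ ({b x} : Finset (Fin G))) = 1 / (G : ℝ) ^ q := by
    rw [prob_forall_mem _ fun x => {b x}]
    simp only [Finset.card_singleton, Fintype.card_fin, Nat.cast_one, Finset.prod_const,
      Finset.card_image_of_injective _ h.injective_halfVertex, (Finset.mem_powersetCard.mp hS).2,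
      one_div, inv_pow]
  calc prob (fun b' : HalfVertex r → Fin G =>
        ∃ M' l', IsPatternMatching m b' T c M' l' ∧ q ≤ agreement M M')
      ≤ prob (fun b' : HalfVertex r → Fin G => ∃ S ∈ places,
          ∀ x ∈ S.image fun v => (l v).1, b' x ∈ ({b x} : Finset (Fin G))) := by
        refine prob_mono fun b' ⟨M', l', h', hq⟩ => ?_
        obtain ⟨S, hS, hcard⟩ := Finset.exists_subset_card_eq hq
        refine ⟨S, Finset.mem_powersetCard.mpr ⟨Finset.subset_univ S, hcard⟩, ?_⟩
        refine Finset.forall_mem_image.mpr fun v hv => Finset.mem_singleton.mpr ?_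
        exact h.pattern_eq h' (by simpa using hS hv)
    _ ≤ r.choose q * (1 / (G : ℝ) ^ q) := by
        refine (prob_exists_le _ _).trans_eq ?_
        rw [Finset.sum_congr rfl hagree, Finset.sum_const, Finset.card_powersetCard,
          Finset.card_univ, Fintype.card_fin, nsmul_eq_mul]
    _ ≤ 2 ^ r / (G : ℝ) ^ q := by
        rw [mul_one_div]
        gcongr
        exact_mod_cast Nat.choose_le_two_pow r q

end Agreement

theorem card_le_card_support_inv_mul_add {V : Type*} [Fintype V] [DecidableEq V]
    (M M' : Bool → Perm V) (e e' : Bool) :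
    Fintype.card V ≤ ((M e)⁻¹ * M' e').support.card + agreement (M false) (M' false) +
      (Finset.univ.filter fun v => M true v ≠ M false v).card +
      (Finset.univ.filter fun v => M' true v ≠ M' false v).card := by
  have hcover : (Finset.univ : Finset V) ⊆ ((M e)⁻¹ * M' e').support ∪
      (Finset.univ.filter fun v => M false v = M' false v) ∪
      (Finset.univ.filter fun v => M true v ≠ M false v) ∪
      (Finset.univ.filter fun v => M' true v ≠ M' false v) := by
    intro v _
    simp only [Finset.mem_union, Perm.mem_support, Perm.mul_apply, Finset.mem_filter,
      Finset.mem_univ, true_and]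
    by_contra! hcon
    obtain ⟨⟨⟨hfix, hdisagree⟩, hM⟩, hM'⟩ := hcon
    have hMe : M e v = M false v := by cases e <;> simp [hM]
    have hMe' : M' e' v = M' false v := by cases e' <;> simp [hM']
    rw [Perm.inv_eq_iff_eq, hMe, hMe'] at hfix
    exact hdisagree hfix.symm
  refine (Finset.card_le_card hcover).trans ?_
  refine (Finset.card_union_le _ _).trans (Nat.add_le_add_right ?_ _)
  refine (Finset.card_union_le _ _).trans (Nat.add_le_add_right ?_ _)
  exact Finset.card_union_le _ _

section SwitchablePairs

variable {r G k C N m g q s : ℕ} {ω : Experiment r G k C N g}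

lemma IsSwitchable.le_card_support_inv_mul {b b' : HalfVertex r → Fin G}
    {M M' : Bool → Perm (Fin r)} {l l' : Fin r → Label r G k} (h : IsSwitchable m b ω M l)
    (h' : IsSwitchable m b' ω M' l') (hagree : agreement (M false) (M' false) < q)
    (hsq : s + q + 4 ≤ r) (e e' : Bool) : s ≤ ((M e)⁻¹ * M' e').support.card := by
  have hcard := card_le_card_support_inv_mul_add M M' e e'
  have hM := h.card_ne_le
  have hM' := h'.card_ne_le
  rw [Fintype.card_fin] at hcard
  lia

lemma expect_expect_ind_le_agreement_le (hG : 0 < G) {good : Finset (HalfVertex r → Fin G)}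
    {M : (HalfVertex r → Fin G) → Bool → Perm (Fin r)}
    (hM : ∀ b ∈ good, ∃ l, IsSwitchable m b ω (M b) l) :
    𝔼 b, 𝔼 b', ind (b ∈ good ∧ b' ∈ good ∧ q ≤ agreement (M b false) (M b' false)) ≤
      2 ^ r / (G : ℝ) ^ q := by
  have : Nonempty (Fin G) := ⟨⟨0, hG⟩⟩
  refine Finset.expect_le Finset.univ_nonempty fun b _ => ?_
  by_cases hb : b ∈ good
  · obtain ⟨l, h⟩ := hM b hb
    refine (Finset.expect_le_expect fun b' _ => ind_mono ?_).trans
      (prob_exists_le_agreement_le h.isPatternMatching hG q)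
    rintro ⟨-, hb', hq⟩
    obtain ⟨l', h'⟩ := hM b' hb'
    exact ⟨M b' false, l', h'.isPatternMatching, hq⟩
  · simp only [hb, false_and, ind_false not_false, Finset.expect_const_zero]
    positivity

end SwitchablePairs

variable {n G k C N m g q s : ℕ} {η : ℝ}

/-- The bound, given by the second moment method over patterns, for the inverse of the probability
that the random renaming of the heads turns some live rainbow permutation into a full cycle. -/
noncomputable def secondMomentBound (n G q s : ℕ) (η : ℝ) : ℝ :=
  (n + 1) * (2 / (s * (1 - η)) + Real.exp (-(s * η / 2))) / 2 +
    4 * (n + 1) * (2 ^ (n + 1) / (G : ℝ) ^ q)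

lemma secondMomentBound_pos (hη : η < 1) : 0 < secondMomentBound n G q s η := by
  have : 0 < 1 - η := sub_pos.mpr hη
  unfold secondMomentBound
  positivity

theorem one_le_prob_exists_isLiveRainbow_mul (hG : 0 < G) (hs : 0 < s) (hsq : s + q + 4 ≤ n + 1)
    (hη : η < 1) {ω : Experiment (n + 1) G k C N g}
    (hω : prob (fun b => ¬∃ M l, IsSwitchable m b ω M l) < 1 / 2) :
    1 ≤ prob (fun φ : Perm (Fin (n + 1)) => ∃ M, IsLiveRainbow m ω M ∧ IsFullCycle (φ * M)) *
      secondMomentBound n G q s η := by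
  classical
  have : Nonempty (Fin G) := ⟨⟨0, hG⟩⟩
  have hη' : 0 < 1 - η := sub_pos.mpr hη
  set good : Finset (HalfVertex (n + 1) → Fin G) :=
    Finset.univ.filter fun b => ∃ M l, IsSwitchable m b ω M l with hgood
  have hswitchable (b) (hb : b ∈ good) : ∃ M, ∃ l, IsSwitchable m b ω M l :=
    (Finset.mem_filter.mp hb).2
  choose! M hM using hswitchable
  have hmost : (Fintype.card (HalfVertex (n + 1) → Fin G) : ℝ) ≤ 2 * good.card := by
    have hcard : (0 : ℝ) < Fintype.card (HalfVertex (n + 1) → Fin G) := by positivity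
    rw [prob_not, prob_eq_card_filter_div, ← hgood] at hω
    have hdiv : (1 / 2 : ℝ) < good.card / Fintype.card (HalfVertex (n + 1) → Fin G) := by linarith
    rw [lt_div_iff₀ hcard] at hdiv
    linarith
  have hsign (b) (hb : b ∈ good) : Perm.sign (M b false) ≠ Perm.sign (M b true) := by
    obtain ⟨l, h⟩ := hM b hb
    exact h.sign_ne
  refine (one_le_prob_exists_isFullCycle_mul (by lia) hsign
    (U := 2 / (s * (1 - η)) + Real.exp (-(s * η / 2))) (by positivity)
    (fun b hb b' hb' hfew e e' => ?_) hmost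
    (expect_expect_ind_le_agreement_le (q := q) hG hM)).trans
    (mul_le_mul_of_nonneg_right (prob_mono ?_) (secondMomentBound_pos hη).le)
  · obtain ⟨l, h⟩ := hM b hb
    obtain ⟨l', h'⟩ := hM b' hb'
    have hsupport := h.le_card_support_inv_mul h' (not_le.mp hfew) hsq e e'
    exact unitIntegral_det_polyPencil_le _ (by exact_mod_cast hs) (by exact_mod_cast hsupport) hη
  · rintro φ ⟨b, hb, e, hcycle⟩
    obtain ⟨l, h⟩ := hM b hb
    exact ⟨M b e, h.isLiveRainbow e, hcycle⟩

theorem one_sub_le_expect_prob_exists_isLiveRainbow_mul (hk : 40 ≤ k) (hG : 0 < G) (hg : 0 < g)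
    (hN : 0 < N) (hC : 20 ≤ C) (hrC : 4 * (n + 1) * k ≤ C) (hm : 10 * m ≤ N)
    (hr : 5 + 8 * (G * k * k) ≤ n + 1) (hs : 0 < s) (hsq : s + q + 4 ≤ n + 1) (hη : η < 1) :
    1 - 2 * patternFailureBound (n + 1) G k C N m g ≤
      (𝔼 ω : Experiment (n + 1) G k C N g,
        prob fun φ : Perm (Fin (n + 1)) => ∃ M, IsLiveRainbow m ω M ∧ IsFullCycle (φ * M)) *
        secondMomentBound n G q s η := by
  have : Nonempty (Mark C N) := ⟨(⟨0, by lia⟩, ⟨0, hN⟩)⟩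
  have : Nonempty (Fin G) := ⟨⟨0, hG⟩⟩
  let failure (ω : Experiment (n + 1) G k C N g) : ℝ :=
    prob fun b => ¬∃ M l, IsSwitchable m b ω M l
  have hfailure : 𝔼 ω, failure ω ≤ patternFailureBound (n + 1) G k C N m g := by
    simp only [failure, prob]
    rw [Finset.expect_comm]
    exact Finset.expect_le Finset.univ_nonempty fun b _ =>
      prob_not_exists_isSwitchable_le hk hg hN hC hrC hm hr b
  have hmarkov : 1 - 2 * patternFailureBound (n + 1) G k C N m g ≤
      prob fun ω => ¬1 / 2 ≤ failure ω := by
    have := prob_le_expect_div (f := failure) (fun ω => prob_nonneg _) (t := 1 / 2) (by norm_num)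
    rw [prob_not]
    linarith
  refine hmarkov.trans ?_
  rw [prob, Finset.expect_mul]
  refine Finset.expect_le_expect fun ω _ => ?_
  by_cases hω : 1 / 2 ≤ failure ω
  · rw [ind_false (not_not.mpr hω)]
    exact mul_nonneg (prob_nonneg _) (secondMomentBound_pos hη).le
  · rw [ind_true hω]
    exact one_le_prob_exists_isLiveRainbow_mul hG hs hsq hη (not_le.mp hω)

end PatternSecondMoment

section HeadRenaming

open Equiv
open scoped BigOperators

/-- The digraph `A` with arc colours `χ` has a rainbow Hamilton cycle, encoded by its successor
permutation. -/
def HasRainbowCycle {V K : Type*} (A : Set (V × V)) (χ : V × V → K) : Prop :=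
  ∃ M : Perm V, IsRainbowPerm A χ M ∧ IsFullCycle M

lemma HasRainbowCycle.mono {V K : Type*} {A B : Set (V × V)} {χ : V × V → K}
    (h : HasRainbowCycle A χ) (hAB : A ⊆ B) : HasRainbowCycle B χ :=
  let ⟨M, hM, hcycle⟩ := h
  ⟨M, ⟨fun v => hAB (hM.arc_mem v), hM.rainbow⟩, hcycle⟩

variable {r g C N m : ℕ} {Q : Type*}

/-- The source of the mark of an arc in `edgeMark`: its owner, or the arc itself. -/
noncomputable def markSource (T : HalfVertex r × Q → Fin r) (e : Fin r × Fin r) :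
    HalfVertex r × Q ⊕ Fin r × Fin r :=
  (edgeOwner T e).elim (Sum.inr e) Sum.inl

lemma markSource_injective (T : HalfVertex r × Q → Fin r) :
    Function.Injective (markSource T) := by
  intro e e' h
  cases howner : edgeOwner T e with
  | none =>
    cases howner' : edgeOwner T e' with
    | none => simpa [markSource, howner, howner'] using h
    | some l => simp [markSource, howner, howner'] at h
  | some l =>
    cases howner' : edgeOwner T e' with
    | none => simp [markSource, howner, howner'] at h
    | some l' =>
      have hl : l = l' := by simpa [markSource, howner, howner'] using h
      rw [← labelEdge_of_edgeOwner_eq_some howner, hl, labelEdge_of_edgeOwner_eq_some howner']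

lemma sumElim_comp_markSource (T : HalfVertex r × Q → Fin r) (c : HalfVertex r × Q → Mark C N)
    (κ : Fin r × Fin r → Mark C N) : Sum.elim c κ ∘ markSource T = edgeMark T c κ := by
  funext e
  cases howner : edgeOwner T e <;> simp [markSource, edgeMark, howner]

lemma expect_edgeMark [Fintype Q] [DecidableEq Q] [Nonempty (Mark C N)]
    (T : HalfVertex r × Q → Fin r) (F : (Fin r × Fin r → Mark C N) → ℝ) :
    𝔼 c, 𝔼 κ, F (edgeMark T c κ) = 𝔼 κ, F κ := by
  rw [← expect_comp_injective (markSource_injective T) F,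
    ← Fintype.expect_equiv (sumArrowEquivProdArrow _ _ (Mark C N)).symm _ _ fun _ => rfl,
    expect_prod_type]
  refine Finset.expect_congr rfl fun c _ => Finset.expect_congr rfl fun κ _ => ?_
  exact congrArg F (sumElim_comp_markSource T c κ).symm

/-- Renaming the heads of all arcs by `φ` moves the labels of the head side along `φ`. -/
def renameLabel (φ : Perm (Fin r)) : Perm (HalfVertex r × Q) :=
  prodCongr (sumCongr (Equiv.refl _) φ) (Equiv.refl _)

/-- The choices after renaming the heads of all arcs by `φ`: the targets of the tail side, which
are heads, are renamed as well. -/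
def renameTargets (φ : Perm (Fin r)) : Perm (HalfVertex r × Q → Fin r) :=
  (piCongrRight fun l : HalfVertex r × Q =>
    (Sum.elim (fun _ => φ) (fun _ => Equiv.refl _) l.1 : Perm (Fin r))).trans
    (arrowCongr (renameLabel φ) (Equiv.refl _))

/-- The spare choices after renaming the heads of all arcs by `φ`. -/
def renameSpares (φ : Perm (Fin r)) : Perm (Fin r × Fin g → Fin r) :=
  arrowCongr (Equiv.refl _) φ

/-- The marks after renaming the heads of all arcs by `φ`. -/
def renameMarks (φ : Perm (Fin r)) : Perm (Fin r × Fin r → Mark C N) :=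
  arrowCongr (prodCongr (Equiv.refl _) φ) (Equiv.refl _)

lemma labelEdge_renameTargets (φ : Perm (Fin r)) (T : HalfVertex r × Q → Fin r)
    (l : HalfVertex r × Q) :
    labelEdge (renameTargets φ T) (renameLabel φ l) =
      ((labelEdge T l).1, φ (labelEdge T l).2) := by
  obtain ⟨_ | _, _⟩ := l <;> simp [labelEdge, renameTargets, renameLabel, arrowCongr]

lemma renameMarks_apply (φ : Perm (Fin r)) (κ : Fin r × Fin r → Mark C N) (v w : Fin r) :
    renameMarks φ κ (v, φ w) = κ (v, w) := by
  simp [renameMarks, arrowCongr]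

lemma mem_liveArcs_rename (φ : Perm (Fin r)) {T : HalfVertex r × Q → Fin r}
    {R : Fin r × Fin g → Fin r} {κ : Fin r × Fin r → Mark C N} {v w : Fin r}
    (h : (v, w) ∈ liveArcs m T R κ) :
    (v, φ w) ∈ liveArcs m (renameTargets φ T) (renameSpares φ R) (renameMarks φ κ) := by
  obtain ⟨hchosen, hdel⟩ := h
  refine ⟨?_, by rwa [renameMarks_apply]⟩
  rcases hchosen with ⟨l, hl⟩ | ⟨j, hj⟩
  · exact Or.inl ⟨renameLabel φ l, by rw [labelEdge_renameTargets, hl]⟩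
  · exact Or.inr ⟨j, congrArg φ hj⟩

lemma isRainbowPerm_liveArcs_rename (φ : Perm (Fin r)) {T : HalfVertex r × Q → Fin r}
    {R : Fin r × Fin g → Fin r} {κ : Fin r × Fin r → Mark C N} {M : Perm (Fin r)}
    (h : IsRainbowPerm (liveArcs m T R κ) (fun e => (κ e).1) M) :
    IsRainbowPerm (liveArcs m (renameTargets φ T) (renameSpares φ R) (renameMarks φ κ))
      (fun e => (renameMarks φ κ e).1) (φ * M) :=
  ⟨fun v => mem_liveArcs_rename φ (h.arc_mem v), by
    simpa only [Perm.mul_apply, renameMarks_apply] using h.rainbow⟩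

/-- The choices and marks after the marks of the labels and of the unowned arcs have been merged
into one mark per arc. -/
abbrev Outcome (r G k C N g : ℕ) : Type :=
  (Label r G k → Fin r) × (Fin r × Fin g → Fin r) × (Fin r × Fin r → Mark C N)

variable {G k : ℕ}

lemma expect_experiment_eq_expect_outcome [Nonempty (Mark C N)]
    (F : Outcome r G k C N g → ℝ) :
    𝔼 ω : Experiment r G k C N g, F (ω.1.1, ω.2.1, edgeMark ω.1.1 ω.1.2 ω.2.2) = 𝔼 ω, F ω := by
  simp only [expect_prod_type]
  refine Finset.expect_congr rfl fun T _ => ?_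
  rw [Finset.expect_comm]
  exact Finset.expect_congr rfl fun R _ => expect_edgeMark T fun κ => F (T, R, κ)

lemma prob_exists_isFullCycle_mul_le (φ : Perm (Fin r)) :
    (prob fun ω : Outcome r G k C N g => ∃ M,
      IsRainbowPerm (liveArcs m ω.1 ω.2.1 ω.2.2) (fun e => (ω.2.2 e).1) M ∧
        IsFullCycle (φ * M)) ≤
    prob fun ω : Outcome r G k C N g =>
      HasRainbowCycle (liveArcs m ω.1 ω.2.1 ω.2.2) fun e => (ω.2.2 e).1 := by
  refine (prob_mono ?_).trans_eq (prob_equiv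
    (prodCongr (renameTargets φ) (prodCongr (renameSpares φ) (renameMarks φ))) _)
  rintro ω ⟨M, hM, hcycle⟩
  exact ⟨φ * M, isRainbowPerm_liveArcs_rename φ hM, hcycle⟩

theorem expect_prob_exists_isLiveRainbow_mul_le [Nonempty (Mark C N)] :
    (𝔼 ω : Experiment r G k C N g, prob fun φ : Perm (Fin r) =>
      ∃ M, IsLiveRainbow m ω M ∧ IsFullCycle (φ * M)) ≤
    prob fun ω : Outcome r G k C N g =>
      HasRainbowCycle (liveArcs m ω.1 ω.2.1 ω.2.2) fun e => (ω.2.2 e).1 := by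
  let F (ω : Outcome r G k C N g) : ℝ := prob fun φ : Perm (Fin r) => ∃ M,
    IsRainbowPerm (liveArcs m ω.1 ω.2.1 ω.2.2) (fun e => (ω.2.2 e).1) M ∧ IsFullCycle (φ * M)
  refine (expect_experiment_eq_expect_outcome F).trans_le ?_
  simp only [F, prob]
  rw [Finset.expect_comm]
  exact Finset.expect_le Finset.univ_nonempty fun φ _ => prob_exists_isFullCycle_mul_le φ

end HeadRenaming

section Couplings

open Equiv
open scoped BigOperators

/-- `K a` is a probability vector for every `a`, i.e. `K` is a Markov kernel between finite
types. -/
structure IsMarkovKernel {A B : Type*} [Fintype B] (K : A → B → ℝ) : Prop where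
  nonneg : ∀ a b, 0 ≤ K a b
  sum_eq_one : ∀ a, ∑ b, K a b = 1

theorem expect_le_sum_mul_prod {X A B : Type*} [Fintype X] [DecidableEq X] [Fintype A]
    [Fintype B] {K : X → A → B → ℝ} (hK : ∀ x, IsMarkovKernel (K x)) {w : X → B → ℝ}
    (hw : ∀ x b, 𝔼 a, K x a b = w x b) {F : (X → A) → ℝ} {F' : (X → B) → ℝ}
    (hF : ∀ a b, (∀ x, K x (a x) (b x) ≠ 0) → F a ≤ F' b) :
    𝔼 a, F a ≤ ∑ b, F' b * ∏ x, w x (b x) := by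
  have hsum (a : X → A) : ∑ b : X → B, ∏ x, K x (a x) (b x) = 1 := by
    simp [← Fintype.prod_sum, (hK _).sum_eq_one]
  have hpoint (a : X → A) : F a ≤ ∑ b : X → B, F' b * ∏ x, K x (a x) (b x) := by
    rw [← mul_one (F a), ← hsum a, Finset.mul_sum]
    refine Finset.sum_le_sum fun b _ => ?_
    by_cases hb : ∀ x, K x (a x) (b x) ≠ 0
    · exact mul_le_mul_of_nonneg_right (hF a b hb)
        (Finset.prod_nonneg fun x _ => (hK x).nonneg _ _)
    · push Not at hb
      obtain ⟨x, hx⟩ := hb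
      rw [Finset.prod_eq_zero (f := fun x => K x (a x) (b x)) (Finset.mem_univ x) hx, mul_zero,
        mul_zero]
  refine (Finset.expect_le_expect fun a _ => hpoint a).trans_eq ?_
  rw [Finset.expect_sum_comm]
  refine Finset.sum_congr rfl fun b _ => ?_
  simp only [← Finset.mul_expect, expect_pi_prod fun x a => K x a (b x), hw]

open Classical in
/-- The probability mass function of the uniform distribution on `s`. -/
noncomputable def uniformWeight {α : Type*} (s : Finset α) (x : α) : ℝ :=
  if x ∈ s then 1 / s.card else 0

lemma uniformWeight_nonneg {α : Type*} (s : Finset α) (x : α) : 0 ≤ uniformWeight s x := by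
  rw [uniformWeight]
  positivity

lemma uniformWeight_of_notMem {α : Type*} {s : Finset α} {x : α} (h : x ∉ s) :
    uniformWeight s x = 0 :=
  if_neg h

lemma mem_of_uniformWeight_ne_zero {α : Type*} {s : Finset α} {x : α}
    (h : uniformWeight s x ≠ 0) : x ∈ s :=
  not_imp_comm.mp uniformWeight_of_notMem h

lemma sum_uniformWeight {α : Type*} [Fintype α] {s : Finset α} (hs : s.Nonempty) :
    ∑ x, uniformWeight s x = 1 := by
  classical
  have hcard : (s.card : ℝ) ≠ 0 := by exact_mod_cast hs.card_pos.ne'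
  simp [uniformWeight, Finset.sum_ite_mem, hcard]

/-- The probability mass function of a Bernoulli variable with success probability `p`. -/
def bernoulliWeight (p : ℝ) (b : Bool) : ℝ := if b then p else 1 - p

lemma bernoulliWeight_nonneg {p : ℝ} (h₀ : 0 ≤ p) (h₁ : p ≤ 1) (b : Bool) :
    0 ≤ bernoulliWeight p b := by
  cases b
  · exact sub_nonneg.mpr h₁
  · exact h₀

lemma expect_bernoulliWeight {α : Type*} [Fintype α] [Nonempty α] (p : α → ℝ) (b : Bool) :
    𝔼 a, bernoulliWeight (p a) b = bernoulliWeight (𝔼 a, p a) b := by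
  cases b
  · simp [bernoulliWeight, Finset.expect_sub_distrib]
  · simp [bernoulliWeight]

section NeighbourSets

variable {r d : ℕ} {J : Type*} [Fintype J]

/-- The admissible neighbour sets of `v` of size `d` that contain all choices `t j` other than
`v`. -/
def compatibleSets (d : ℕ) (v : Fin r) (t : J → Fin r) : Finset (Finset (Fin r)) :=
  (validSets r d v).filter fun S => (Finset.univ.image t).erase v ⊆ S

lemma mem_validSets {v : Fin r} {S : Finset (Fin r)} :
    S ∈ validSets r d v ↔ S.card = d ∧ v ∉ S := by
  simp [validSets]

lemma mem_compatibleSets {v : Fin r} {t : J → Fin r} {S : Finset (Fin r)} :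
    S ∈ compatibleSets d v t ↔ S ∈ validSets r d v ∧ ∀ j, t j ≠ v → t j ∈ S := by
  simp only [compatibleSets, Finset.mem_filter, Finset.subset_iff, Finset.mem_erase,
    Finset.mem_image, Finset.mem_univ, true_and, and_imp, forall_exists_index]
  exact and_congr_right fun _ =>
    ⟨fun h j hj => h hj j rfl, fun h x hx j hj => hj ▸ h j (hj ▸ hx)⟩

lemma compatibleSets_nonempty (v : Fin r) (t : J → Fin r) (hJ : Fintype.card J ≤ d)
    (hd : d + 1 ≤ r) : (compatibleSets d v t).Nonempty := by
  have hsub : (Finset.univ.image t).erase v ⊆ Finset.univ.erase v :=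
    Finset.erase_subset_erase _ (Finset.subset_univ _)
  have hcard : ((Finset.univ.image t).erase v).card ≤ d :=
    (Finset.card_le_card (Finset.erase_subset _ _)).trans
      (Finset.card_image_le.trans (by simpa using hJ))
  have hroom : d ≤ (Finset.univ.erase v).card := by
    rw [Finset.card_erase_of_mem (Finset.mem_univ v), Finset.card_univ, Fintype.card_fin]
    lia
  obtain ⟨S, htS, hSv, hS⟩ := Finset.exists_subsuperset_card_eq hsub hcard hroom
  exact ⟨S, Finset.mem_filter.mpr
    ⟨mem_validSets.mpr ⟨hS, fun hv => Finset.notMem_erase v _ (hSv hv)⟩, htS⟩⟩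

lemma map_mem_compatibleSets_iff {v : Fin r} {σ : Perm (Fin r)} (hσ : σ v = v) (t : J → Fin r)
    (S : Finset (Fin r)) :
    S.map σ.toEmbedding ∈ compatibleSets d v (fun j => σ (t j)) ↔ S ∈ compatibleSets d v t := by
  have hv : v ∈ S.map σ.toEmbedding ↔ v ∈ S := by
    rw [Finset.mem_map_equiv, (Equiv.symm_apply_eq σ).mpr hσ.symm]
  have hne (j : J) : σ (t j) ≠ v ↔ t j ≠ v :=
    not_congr ⟨fun h => σ.injective (h.trans hσ.symm), fun h => h ▸ hσ⟩
  simp only [mem_compatibleSets, mem_validSets, Finset.card_map, hv, hne, Finset.mem_map_equiv,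
    σ.symm_apply_apply]

lemma uniformWeight_compatibleSets_map {v : Fin r} {σ : Perm (Fin r)} (hσ : σ v = v)
    (t : J → Fin r) (S : Finset (Fin r)) :
    uniformWeight (compatibleSets d v fun j => σ (t j)) (S.map σ.toEmbedding) =
      uniformWeight (compatibleSets d v t) S := by
  have hcard : (compatibleSets d v t).card = (compatibleSets d v fun j => σ (t j)).card :=
    Finset.card_equiv σ.finsetCongr fun S => (map_mem_compatibleSets_iff hσ t S).symm
  simp only [uniformWeight, map_mem_compatibleSets_iff hσ, hcard]

lemma exists_perm_map_eq {v : Fin r} {S S' : Finset (Fin r)} (hS : S ∈ validSets r d v)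
    (hS' : S' ∈ validSets r d v) :
    ∃ σ : Perm (Fin r), σ v = v ∧ S.map σ.toEmbedding = S' := by
  rw [mem_validSets] at hS hS'
  let e : {x // x ∈ S} ≃ {x // x ∈ S'} := Finset.equivOfCardEq (hS.1.trans hS'.1.symm)
  let τ := e.extendSubtype
  have hτS (x : Fin r) (hx : x ∈ S) : τ x ∈ S' := e.extendSubtype_mem x hx
  have hτv : τ v ∉ S' := e.extendSubtype_not_mem v hS.2
  refine ⟨swap (τ v) v * τ, by simp, Finset.eq_of_subset_of_card_le ?_ ?_⟩
  · intro y hy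
    obtain ⟨x, hx, rfl⟩ := Finset.mem_map.mp hy
    have hfix : (swap (τ v) v * τ) x = τ x :=
      swap_apply_of_ne_of_ne (fun h => hτv (h ▸ hτS x hx)) fun h => hS'.2 (h ▸ hτS x hx)
    simpa only [Equiv.coe_toEmbedding, hfix] using hτS x hx
  · rw [Finset.card_map, hS.1, hS'.1]

lemma isMarkovKernel_uniformWeight_compatibleSets (v : Fin r) (hJ : Fintype.card J ≤ d)
    (hd : d + 1 ≤ r) :
    IsMarkovKernel fun t : J → Fin r => uniformWeight (compatibleSets d v t) :=
  ⟨fun _ _ => uniformWeight_nonneg _ _,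
    fun t => sum_uniformWeight (compatibleSets_nonempty v t hJ hd)⟩

-- The average is invariant under permutations fixing `v`, which act transitively on `validSets`.
theorem expect_uniformWeight_compatibleSets [DecidableEq J] (v : Fin r)
    (hJ : Fintype.card J ≤ d) (hd : d + 1 ≤ r) (S : Finset (Fin r)) :
    𝔼 t : J → Fin r, uniformWeight (compatibleSets d v t) S =
      uniformWeight (validSets r d v) S := by
  have : Nonempty (Fin r) := ⟨v⟩
  let f (S : Finset (Fin r)) : ℝ := 𝔼 t : J → Fin r, uniformWeight (compatibleSets d v t) S
  have hzero (S' : Finset (Fin r)) (hS' : S' ∉ validSets r d v) : f S' = 0 :=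
    Finset.expect_eq_zero fun t _ =>
      uniformWeight_of_notMem fun h => hS' (mem_compatibleSets.mp h).1
  by_cases hS : S ∈ validSets r d v
  · have hconst (S' : Finset (Fin r)) (hS' : S' ∈ validSets r d v) : f S' = f S := by
      obtain ⟨σ, hσ, rfl⟩ := exists_perm_map_eq hS hS'
      exact (Fintype.expect_equiv (arrowCongr (Equiv.refl J) σ) _ _ fun t =>
        (uniformWeight_compatibleSets_map hσ t S).symm).symm
    have htotal : ∑ S', f S' = 1 := by
      rw [← Finset.expect_sum_comm]
      simp only [(isMarkovKernel_uniformWeight_compatibleSets v hJ hd).sum_eq_one,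
        Fintype.expect_const]
    rw [← Finset.sum_subset (Finset.subset_univ (validSets r d v)) fun S' _ => hzero S',
      Finset.sum_congr rfl hconst, Finset.sum_const, nsmul_eq_mul] at htotal
    rw [uniformWeight, if_pos hS, eq_div_iff (Nat.cast_ne_zero.mpr (Finset.card_ne_zero_of_mem hS)),
      mul_comm]
    exact htotal
  · rw [uniformWeight_of_notMem hS]
    exact hzero S hS

end NeighbourSets

section Coins

variable {C N m : ℕ}

/-- The kernel turning a mark into a colour and a deletion coin: the colour is kept, and a deleted
mark shows `true` with probability `p`. -/
noncomputable def coinKernel (m : ℕ) (p : ℝ) (a : Mark C N) (b : Fin C × Bool) : ℝ :=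
  uniformWeight {a.1} b.1 * bernoulliWeight (ind (Deleted m a) * p) b.2

lemma isMarkovKernel_coinKernel {p : ℝ} (h₀ : 0 ≤ p) (h₁ : p ≤ 1) :
    IsMarkovKernel (coinKernel m p : Mark C N → Fin C × Bool → ℝ) where
  nonneg a b := mul_nonneg (uniformWeight_nonneg _ _) (bernoulliWeight_nonneg
    (mul_nonneg (ind_nonneg _) h₀) (mul_le_one₀ (ind_le_one _) h₀ h₁) _)
  sum_eq_one a := by
    simp only [coinKernel]
    rw [Fintype.sum_prod_type, ← Fintype.sum_mul_sum,
      sum_uniformWeight (Finset.singleton_nonempty a.1)]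
    simp [bernoulliWeight]

lemma fst_eq_of_coinKernel_ne_zero {p : ℝ} {a : Mark C N} {b : Fin C × Bool}
    (h : coinKernel m p a b ≠ 0) : b.1 = a.1 :=
  Finset.mem_singleton.mp (mem_of_uniformWeight_ne_zero (left_ne_zero_of_mul h))

lemma snd_eq_false_of_coinKernel_ne_zero {p : ℝ} {a : Mark C N} {b : Fin C × Bool}
    (h : coinKernel m p a b ≠ 0) (ha : ¬Deleted m a) : b.2 = false := by
  have hcoin := right_ne_zero_of_mul h
  rw [ind_false ha, zero_mul] at hcoin
  cases hb : b.2
  · rfl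
  · simp [bernoulliWeight, hb] at hcoin

lemma expect_coinKernel (p : ℝ) (hN : 0 < N) (hm : m ≤ N) (b : Fin C × Bool) :
    𝔼 a : Mark C N, coinKernel m p a b =
      uniformWeight Finset.univ b.1 * bernoulliWeight (m / N * p) b.2 := by
  have : Nonempty (Fin N) := ⟨⟨0, hN⟩⟩
  have hdeleted : 𝔼 i : Fin N, ind (Deleted m (b.1, i)) * p = m / N * p := by
    rw [← Finset.expect_mul]
    refine congrArg (· * p) ((prob_eq_card_filter_div fun i : Fin N => i.val < m).trans ?_)
    rw [Fin.card_filter_val_lt, min_eq_right hm, Fintype.card_fin]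
  have hcolour : 𝔼 c : Fin C, uniformWeight {c} b.1 = uniformWeight Finset.univ b.1 := by
    simp [uniformWeight, Finset.expect, eq_comm, NNRat.smul_def]
  rw [← hcolour, ← hdeleted, ← expect_bernoulliWeight, expect_prod_type, Finset.expect_mul_expect]
  rfl

end Coins

end Couplings

section TransferToGamma

open Equiv
open scoped BigOperators

lemma IsFullCycle.apply_ne {V : Type*} [Nontrivial V] {M : Perm V} (h : IsFullCycle M) (v : V) :
    M v ≠ v :=
  Perm.IsCycleOn.apply_ne h Set.nontrivial_univ (Set.mem_univ v)

lemma HasRainbowCycle.of_forall_ne {V K : Type*} [Nontrivial V] {A B : Set (V × V)}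
    {χ : V × V → K} (h : HasRainbowCycle A χ) (hAB : ∀ e ∈ A, e.1 ≠ e.2 → e ∈ B) :
    HasRainbowCycle B χ :=
  let ⟨M, hM, hcycle⟩ := h
  ⟨M, ⟨fun v => hAB _ (hM.arc_mem v) (hcycle.apply_ne v).symm, hM.rainbow⟩, hcycle⟩

lemma IsFullCycle.exists_bijective_zmod {V : Type*} [Fintype V] [Nonempty V] {M : Perm V}
    (h : IsFullCycle M) :
    ∃ f : ZMod (Fintype.card V) → V, Function.Bijective f ∧ ∀ i, f (i + 1) = M (f i) := by
  obtain ⟨v⟩ := ‹Nonempty V›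
  have : NeZero (Fintype.card V) := ⟨Fintype.card_ne_zero⟩
  have hcycle : M.IsCycleOn (Finset.univ : Finset V) := by rwa [Finset.coe_univ]
  have hpow (a b : ℕ) : (M ^ a) v = (M ^ b) v ↔ (a : ZMod (Fintype.card V)) = b := by
    rw [hcycle.pow_apply_eq_pow_apply (Finset.mem_univ v), Finset.card_univ,
      ZMod.natCast_eq_natCast_iff]
  refine ⟨fun i => (M ^ i.val) v, (Fintype.bijective_iff_injective_and_card _).mpr ⟨?_, ?_⟩, ?_⟩
  · intro i j hij
    simpa only [ZMod.natCast_val, ZMod.cast_id] using (hpow i.val j.val).mp hij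
  · exact ZMod.card _
  · intro i
    rw [← Perm.mul_apply, ← pow_succ', hpow]
    simp

variable {r g C N m : ℕ} {Q : Type*}

/-- The arcs chosen by the neighbour sets `S`, out-neighbours on the left half vertices and
in-neighbours on the right ones, except those in the set `D` of deleted arcs. -/
def keptArcs (S : HalfVertex r → Finset (Fin r)) (D : Set (Fin r × Fin r)) :
    Set (Fin r × Fin r) :=
  {e | (e.2 ∈ S (Sum.inl e.1) ∨ e.1 ∈ S (Sum.inr e.2)) ∧ e ∉ D}

section SetCoupling

/-- The part of the choices `t` used as the main choices. -/
def mainChoices (t : HalfVertex r → Q ⊕ Fin g → Fin r) (l : HalfVertex r × Q) : Fin r :=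
  t l.1 (Sum.inl l.2)

/-- The part of the choices `t` used as the spare choices, all of them out-choices. -/
def spareChoices (t : HalfVertex r → Q ⊕ Fin g → Fin r) (p : Fin r × Fin g) : Fin r :=
  t (Sum.inl p.1) (Sum.inr p.2)

lemma expect_mainChoices_spareChoices [Fintype Q] [DecidableEq Q] [Nonempty (Fin r)]
    (H : (HalfVertex r × Q → Fin r) → (Fin r × Fin g → Fin r) → ℝ) :
    𝔼 t, H (mainChoices t) (spareChoices t) = 𝔼 T, 𝔼 R, H T R := by
  let ι : HalfVertex r × Q ⊕ Fin r × Fin g → HalfVertex r × (Q ⊕ Fin g) :=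
    Sum.elim (fun l => (l.1, Sum.inl l.2)) fun p => (Sum.inl p.1, Sum.inr p.2)
  have hι : Function.Injective ι := by
    rintro (⟨x, y⟩ | ⟨v, j⟩) (⟨x', y'⟩ | ⟨v', j'⟩) h <;> simp_all [ι]
  have hprod := expect_prod_type fun p : (HalfVertex r × Q → Fin r) × (Fin r × Fin g → Fin r) =>
    H p.1 p.2
  rw [← hprod, ← Fintype.expect_equiv (sumArrowEquivProdArrow _ _ _) _ _ fun _ => rfl,
    ← expect_comp_injective hι,
    ← Fintype.expect_equiv (curry (HalfVertex r) (Q ⊕ Fin g) (Fin r)) _ _ fun _ => rfl]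
  rfl

lemma mem_keptArcs_of_mem_liveArcs [Fintype Q] {δ : HalfVertex r → ℕ}
    {t : HalfVertex r → Q ⊕ Fin g → Fin r} {S : HalfVertex r → Finset (Fin r)}
    {κ : Fin r × Fin r → Mark C N}
    (hS : ∀ x, S x ∈ compatibleSets (δ x) (baseVertex x) (t x)) {e : Fin r × Fin r}
    (he : e ∈ liveArcs m (mainChoices t) (spareChoices t) κ) (hne : e.1 ≠ e.2) :
    e ∈ keptArcs S {e | Deleted m (κ e)} := by
  have hmem (x : HalfVertex r) (j : Q ⊕ Fin g) (h : t x j ≠ baseVertex x) : t x j ∈ S x :=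
    (mem_compatibleSets.mp (hS x)).2 j h
  obtain ⟨⟨⟨u | u, q⟩, rfl⟩ | ⟨j, hj⟩, hdel⟩ := he
  · exact ⟨Or.inl (hmem (Sum.inl u) (Sum.inl q) hne.symm), hdel⟩
  · exact ⟨Or.inr (hmem (Sum.inr u) (Sum.inl q) hne), hdel⟩
  · exact ⟨Or.inl (hj ▸ hmem (Sum.inl e.1) (Sum.inr j) (hj.trans_ne hne.symm)), hdel⟩

variable {G k : ℕ}

lemma prob_hasRainbowCycle_liveArcs_le (hr : 2 ≤ r) {δ : HalfVertex r → ℕ}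
    (hδ : ∀ x, G * k * k + g ≤ δ x) (hδr : ∀ x, δ x + 1 ≤ r) :
    (prob fun ω : Outcome r G k C N g =>
      HasRainbowCycle (liveArcs m ω.1 ω.2.1 ω.2.2) fun e => (ω.2.2 e).1) ≤
    ∑ S : HalfVertex r → Finset (Fin r),
      (prob fun κ : Fin r × Fin r → Mark C N =>
        HasRainbowCycle (keptArcs S {e | Deleted m (κ e)}) fun e => (κ e).1) *
      ∏ x, uniformWeight (validSets r (δ x) (baseVertex x)) (S x) := by
  have : Nontrivial (Fin r) := Fin.nontrivial_iff_two_le.mpr hr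
  have hcard (x : HalfVertex r) : Fintype.card ((Fin G × Fin k × Fin k) ⊕ Fin g) ≤ δ x := by
    simpa [mul_assoc] using hδ x
  rw [prob_prod_type]
  simp only [prob_prod_type]
  rw [← expect_mainChoices_spareChoices]
  exact expect_le_sum_mul_prod
    (fun x => isMarkovKernel_uniformWeight_compatibleSets (baseVertex x) (hcard x) (hδr x))
    (fun x S => expect_uniformWeight_compatibleSets (baseVertex x) (hcard x) (hδr x) S)
    fun t S hK => prob_mono fun κ h => h.of_forall_ne fun e he hne =>
      mem_keptArcs_of_mem_liveArcs (fun x => mem_of_uniformWeight_ne_zero (hK x)) he hne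

end SetCoupling

lemma prob_hasRainbowCycle_keptArcs_le (hm₀ : 0 < m) (hm : m ≤ N) {q₀ : ℝ} (hq₀ : 0 ≤ q₀)
    (hq : q₀ ≤ m / N) (S : HalfVertex r → Finset (Fin r)) :
    (prob fun κ : Fin r × Fin r → Mark C N =>
      HasRainbowCycle (keptArcs S {e | Deleted m (κ e)}) fun e => (κ e).1) ≤
    ∑ b : Fin r × Fin r → Fin C × Bool,
      ind (HasRainbowCycle (keptArcs S {e | (b e).2 = true}) fun e => (b e).1) *
      ∏ e, uniformWeight Finset.univ (b e).1 * bernoulliWeight q₀ (b e).2 := by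
  have hN : 0 < N := hm₀.trans_le hm
  have hN' : (0 : ℝ) < N := by exact_mod_cast hN
  have hm' : (0 : ℝ) < m := by exact_mod_cast hm₀
  have hrate : (m / N : ℝ) * (q₀ * N / m) = q₀ := by field_simp
  have hrate_le : q₀ * N / m ≤ 1 := by
    rw [div_le_one hm']
    exact (le_div_iff₀ hN').mp hq
  have hmean (b : Fin C × Bool) : 𝔼 a : Mark C N, coinKernel m (q₀ * N / m) a b =
      uniformWeight Finset.univ b.1 * bernoulliWeight q₀ b.2 := by
    rw [expect_coinKernel _ hN hm, hrate]
  refine expect_le_sum_mul_prod (fun _ => isMarkovKernel_coinKernel (by positivity) hrate_le)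
    (fun _ => hmean) fun κ b hK => ind_mono fun h => ?_
  have hcolour (e : Fin r × Fin r) : (b e).1 = (κ e).1 := fst_eq_of_coinKernel_ne_zero (hK e)
  simp only [hcolour]
  exact h.mono fun e he => ⟨he.1, fun hb => absurd
    (snd_eq_false_of_coinKernel_ne_zero (hK e) he.2) (by simpa using hb)⟩

end TransferToGamma

section GammaMeasure

open Equiv
open scoped BigOperators

lemma uniformOn_singleton {α : Type*} [MeasurableSpace α] [MeasurableSingletonClass α]
    {s : Finset α} (hs : s.Nonempty) (a : α) :
    uniformOn s {a} = ENNReal.ofReal (uniformWeight s a) := by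
  rw [uniformOn, dif_pos hs, PMF.toMeasure_apply_singleton _ _ (measurableSet_singleton a),
    PMF.uniformOfFinset_apply, uniformWeight]
  split_ifs
  · rw [one_div, ENNReal.ofReal_inv_of_pos (by exact_mod_cast hs.card_pos),
      ENNReal.ofReal_natCast]
  · exact ENNReal.ofReal_zero.symm

lemma uniformOn_prod_singleton {α β : Type*} [MeasurableSpace α] [MeasurableSingletonClass α]
    [MeasurableSpace β] [MeasurableSingletonClass β] {s : Finset α} {t : Finset β}
    (hs : s.Nonempty) (ht : t.Nonempty) (a : α) (b : β) :
    (uniformOn s).prod (uniformOn t) {(a, b)} =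
      ENNReal.ofReal (uniformWeight s a * uniformWeight t b) := by
  rw [← Set.singleton_prod_singleton, Measure.prod_prod, uniformOn_singleton hs,
    uniformOn_singleton ht, ENNReal.ofReal_mul (uniformWeight_nonneg _ _)]

lemma isProbabilityMeasure_uniformOn {α : Type*} [MeasurableSpace α] {s : Finset α}
    (hs : s.Nonempty) : IsProbabilityMeasure (uniformOn s) := by
  rw [uniformOn, dif_pos hs]
  infer_instance

lemma bernoulliM_singleton {q : ℝ} (h₀ : 0 ≤ q) (h₁ : q ≤ 1) (b : Bool) :
    bernoulliM q {b} = ENNReal.ofReal (bernoulliWeight q b) := by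
  have hclamp : min (Real.toNNReal q) 1 = Real.toNNReal q := min_eq_left (by simpa using h₁)
  rw [bernoulliM, PMF.toMeasure_apply_singleton _ _ (measurableSet_singleton b)]
  refine (PMF.ofFintype_apply _ b).trans ?_
  rw [hclamp]
  cases b
  · change 1 - ENNReal.ofReal q = ENNReal.ofReal (1 - q)
    rw [ENNReal.ofReal_sub 1 h₀, ENNReal.ofReal_one]
  · rfl

lemma validSets_nonempty {r d : ℕ} (v : Fin r) (h : d + 1 ≤ r) : (validSets r d v).Nonempty :=
  let ⟨S, hS⟩ := compatibleSets_nonempty v (Empty.elim : Empty → Fin r) (Nat.zero_le d) h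
  ⟨S, (mem_compatibleSets.mp hS).1⟩

variable {r C : ℕ}

/-- The sample space of `Γ`, reindexed with one neighbour set per half vertex and one
(colour, coin) pair per arc. -/
def gammaEquiv (r C : ℕ) :
    (HalfVertex r → Finset (Fin r)) × (Fin r × Fin r → Fin C × Bool) ≃ GammaSpace r C where
  toFun p := (fun v => (p.1 (Sum.inl v), p.1 (Sum.inr v)), fun e => (p.2 e).1, fun e => (p.2 e).2)
  invFun ω := (Sum.elim (fun v => (ω.1 v).1) fun v => (ω.1 v).2, fun e => (ω.2.1 e, ω.2.2 e))
  left_inv p := Prod.ext (funext fun x => by cases x <;> rfl) rfl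
  right_inv _ := rfl

/-- The mass of a family of neighbour sets whose sizes are given by `δ`. -/
noncomputable def neighbourWeight (δ : HalfVertex r → ℕ) (S : HalfVertex r → Finset (Fin r)) : ℝ :=
  ∏ x, uniformWeight (validSets r (δ x) (baseVertex x)) (S x)

lemma neighbourWeight_nonneg (δ : HalfVertex r → ℕ) (S : HalfVertex r → Finset (Fin r)) :
    0 ≤ neighbourWeight δ S :=
  Finset.prod_nonneg fun _ _ => uniformWeight_nonneg _ _

/-- The mass of a family of uniform colours and deletion coins of success probability `q`. -/
noncomputable def coinWeight (q : ℝ) (b : Fin r × Fin r → Fin C × Bool) : ℝ :=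
  ∏ e, uniformWeight Finset.univ (b e).1 * bernoulliWeight q (b e).2

lemma coinWeight_nonneg {q : ℝ} (h₀ : 0 ≤ q) (h₁ : q ≤ 1) (b : Fin r × Fin r → Fin C × Bool) :
    0 ≤ coinWeight q b :=
  Finset.prod_nonneg fun _ _ =>
    mul_nonneg (uniformWeight_nonneg _ _) (bernoulliWeight_nonneg h₀ h₁ _)

lemma pi_uniformOn_validSets_singleton {δ : HalfVertex r → ℕ} (hδ : ∀ x, δ x + 1 ≤ r)
    (S : HalfVertex r → Finset (Fin r)) :
    (Measure.pi fun v => (uniformOn (validSets r (δ (Sum.inl v)) v)).prod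
      (uniformOn (validSets r (δ (Sum.inr v)) v))) {fun v => (S (Sum.inl v), S (Sum.inr v))} =
      ENNReal.ofReal (neighbourWeight δ S) := by
  rw [Measure.pi_singleton, neighbourWeight, Fintype.prod_sum_type, ← Finset.prod_mul_distrib,
    ENNReal.ofReal_prod_of_nonneg fun v _ =>
      mul_nonneg (uniformWeight_nonneg _ _) (uniformWeight_nonneg _ _)]
  exact Finset.prod_congr rfl fun v _ => uniformOn_prod_singleton
    (validSets_nonempty v (hδ (Sum.inl v))) (validSets_nonempty v (hδ (Sum.inr v))) _ _

lemma pi_uniformOn_prod_pi_bernoulliM_singleton [Nonempty (Fin C)] {q : ℝ} (h₀ : 0 ≤ q)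
    (h₁ : q ≤ 1) (b : Fin r × Fin r → Fin C × Bool) :
    ((Measure.pi fun _ : Fin r × Fin r => uniformOn (Finset.univ : Finset (Fin C))).prod
      (Measure.pi fun _ : Fin r × Fin r => bernoulliM q)) {(fun e => (b e).1, fun e => (b e).2)} =
      ENNReal.ofReal (coinWeight q b) := by
  rw [← Set.singleton_prod_singleton, Measure.prod_prod, Measure.pi_singleton,
    Measure.pi_singleton, ← Finset.prod_mul_distrib, coinWeight,
    ENNReal.ofReal_prod_of_nonneg fun e _ =>
      mul_nonneg (uniformWeight_nonneg _ _) (bernoulliWeight_nonneg h₀ h₁ _)]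
  refine Finset.prod_congr rfl fun e _ => ?_
  rw [uniformOn_singleton Finset.univ_nonempty, bernoulliM_singleton h₀ h₁,
    ENNReal.ofReal_mul (uniformWeight_nonneg _ _)]

lemma gammaM_singleton [Nonempty (Fin C)] {δ : HalfVertex r → ℕ} (hδ : ∀ x, δ x + 1 ≤ r) {q : ℝ}
    (h₀ : 0 ≤ q) (h₁ : q ≤ 1)
    (p : (HalfVertex r → Finset (Fin r)) × (Fin r × Fin r → Fin C × Bool)) :
    gammaM r C (δ ∘ Sum.inl) (δ ∘ Sum.inr) q {gammaEquiv r C p} =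
      ENNReal.ofReal (neighbourWeight δ p.1 * coinWeight q p.2) := by
  rw [ENNReal.ofReal_mul (neighbourWeight_nonneg _ _), ← pi_uniformOn_validSets_singleton hδ,
    ← pi_uniformOn_prod_pi_bernoulliM_singleton h₀ h₁, ← Measure.prod_prod,
    Set.singleton_prod_singleton]
  rfl

lemma hasRainbowDirHamCycle_gammaEquiv [Nonempty (Fin r)] {S : HalfVertex r → Finset (Fin r)}
    {b : Fin r × Fin r → Fin C × Bool}
    (h : HasRainbowCycle (keptArcs S {e | (b e).2 = true}) fun e => (b e).1) :
    HasRainbowDirHamCycle (gammaEquiv r C (S, b)) := by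
  obtain ⟨M, hM, hcycle⟩ := h
  have henum := hcycle.exists_bijective_zmod
  rw [Fintype.card_fin] at henum
  obtain ⟨f, hf, hsucc⟩ := henum
  refine ⟨f, hf, fun i => ?_, ?_⟩
  · obtain ⟨hchosen, hkept⟩ := hM.arc_mem (f i)
    rw [hsucc]
    exact ⟨hchosen, Or.inr (Bool.eq_false_iff.mpr hkept)⟩
  · simp only [hsucc]
    exact hM.rainbow.comp hf.injective

lemma ofReal_sum_ind_mul_le_gammaM [Nonempty (Fin r)] [Nonempty (Fin C)] {δ : HalfVertex r → ℕ}
    (hδ : ∀ x, δ x + 1 ≤ r) {q : ℝ} (h₀ : 0 ≤ q) (h₁ : q ≤ 1) :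
    ENNReal.ofReal (∑ S : HalfVertex r → Finset (Fin r),
      (∑ b : Fin r × Fin r → Fin C × Bool,
        ind (HasRainbowCycle (keptArcs S {e | (b e).2 = true}) fun e => (b e).1) *
          coinWeight q b) * neighbourWeight δ S) ≤
    gammaM r C (δ ∘ Sum.inl) (δ ∘ Sum.inr) q {ω | HasRainbowDirHamCycle ω} := by
  classical
  let good : Finset ((HalfVertex r → Finset (Fin r)) × (Fin r × Fin r → Fin C × Bool)) :=
    Finset.univ.filter fun p =>
      HasRainbowCycle (keptArcs p.1 {e | (p.2 e).2 = true}) fun e => (p.2 e).1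
  have hgood : (good.map (gammaEquiv r C).toEmbedding : Set (GammaSpace r C)) ⊆
      {ω | HasRainbowDirHamCycle ω} := by
    rintro ω hω
    obtain ⟨p, hp, rfl⟩ := Finset.mem_map.mp hω
    exact hasRainbowDirHamCycle_gammaEquiv (Finset.mem_filter.mp hp).2
  refine le_trans (le_of_eq ?_) (measure_mono hgood)
  rw [← sum_measure_singleton, Finset.sum_map]
  simp only [Equiv.coe_toEmbedding, gammaM_singleton hδ h₀ h₁]
  rw [← ENNReal.ofReal_sum_of_nonneg fun p _ =>
    mul_nonneg (neighbourWeight_nonneg _ _) (coinWeight_nonneg h₀ h₁ _), Finset.sum_filter,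
    Fintype.sum_prod_type]
  refine congrArg ENNReal.ofReal (Finset.sum_congr rfl fun S _ => ?_)
  rw [Finset.sum_mul]
  refine Finset.sum_congr rfl fun b _ => ?_
  rw [ind]
  split_ifs <;> ring

lemma gammaM_le_one [Nonempty (Fin C)] {δp δm : Fin r → ℕ} (hp : ∀ v, δp v + 1 ≤ r)
    (hm : ∀ v, δm v + 1 ≤ r) (q : ℝ) (A : Set (GammaSpace r C)) : gammaM r C δp δm q A ≤ 1 := by
  have hout (v : Fin r) := isProbabilityMeasure_uniformOn (validSets_nonempty v (hp v))
  have hin (v : Fin r) := isProbabilityMeasure_uniformOn (validSets_nonempty v (hm v))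
  have hcolour := isProbabilityMeasure_uniformOn (Finset.univ_nonempty (α := Fin C))
  have : IsProbabilityMeasure (gammaM r C δp δm q) := by
    rw [gammaM]
    infer_instance
  exact MeasureTheory.prob_le_one

variable {G k N m g : ℕ}

theorem ofReal_prob_hasRainbowCycle_le_gammaM [Nonempty (Fin C)] (hr : 2 ≤ r)
    {δ : HalfVertex r → ℕ} (hδ : ∀ x, G * k * k + g ≤ δ x) (hδr : ∀ x, δ x + 1 ≤ r)
    (hm₀ : 0 < m) (hm : m ≤ N) {q : ℝ} (h₀ : 0 ≤ q) (hq : q ≤ m / N) :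
    ENNReal.ofReal (prob fun ω : Outcome r G k C N g =>
      HasRainbowCycle (liveArcs m ω.1 ω.2.1 ω.2.2) fun e => (ω.2.2 e).1) ≤
    gammaM r C (δ ∘ Sum.inl) (δ ∘ Sum.inr) q {ω | HasRainbowDirHamCycle ω} := by
  have : Nonempty (Fin r) := ⟨⟨0, by lia⟩⟩
  have hq₁ : q ≤ 1 := hq.trans (div_le_one_of_le₀ (by exact_mod_cast hm) (Nat.cast_nonneg N))
  refine le_trans (ENNReal.ofReal_le_ofReal ?_) (ofReal_sum_ind_mul_le_gammaM hδr h₀ hq₁)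
  refine (prob_hasRainbowCycle_liveArcs_le hr hδ hδr).trans (Finset.sum_le_sum fun S _ => ?_)
  exact mul_le_mul_of_nonneg_right (prob_hasRainbowCycle_keptArcs_le hm₀ hm h₀ hq S)
    (neighbourWeight_nonneg δ S)

theorem ofReal_div_secondMomentBound_le_gammaM (hk : 40 ≤ k) (hG : 0 < G) (hg : 0 < g)
    (hC : 20 ≤ C) (hrC : 4 * r * k ≤ C) (hm₀ : 0 < m) (hm : 10 * m ≤ N)
    (hr : 5 + 8 * (G * k * k) ≤ r) {q s : ℕ} (hs : 0 < s) (hsq : s + q + 4 ≤ r) {η : ℝ} (hη : η < 1)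
    {δ : HalfVertex r → ℕ} (hδ : ∀ x, G * k * k + g ≤ δ x) (hδr : ∀ x, δ x + 1 ≤ r)
    {q₀ : ℝ} (h₀ : 0 ≤ q₀) (hq₀ : q₀ ≤ m / N) :
    ENNReal.ofReal ((1 - 2 * patternFailureBound r G k C N m g) /
      secondMomentBound (r - 1) G q s η) ≤
    gammaM r C (δ ∘ Sum.inl) (δ ∘ Sum.inr) q₀ {ω | HasRainbowDirHamCycle ω} := by
  obtain ⟨n, rfl⟩ : ∃ n, r = n + 1 := ⟨r - 1, by lia⟩
  have : Nonempty (Fin C) := ⟨⟨0, by lia⟩⟩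
  have : Nonempty (Mark C N) := ⟨⟨0, by lia⟩, ⟨0, by lia⟩⟩
  refine le_trans (ENNReal.ofReal_le_ofReal ?_)
    (ofReal_prob_hasRainbowCycle_le_gammaM (by lia) hδ hδr hm₀ (by lia) h₀ hq₀)
  refine le_trans ?_ expect_prob_exists_isLiveRainbow_mul_le
  exact div_le_of_le_mul₀ (secondMomentBound_pos hη).le
    (Finset.expect_nonneg fun _ _ => prob_nonneg _)
    (one_sub_le_expect_prob_exists_isLiveRainbow_mul hk hG hg (by lia) hC hrC hm hr hs hsq hη)

end GammaMeasure

section Asymptotics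

lemma tendsto_natCast_mul_exp_neg_mul {c : ℝ} (hc : 0 < c) :
    Tendsto (fun r : ℕ => (r : ℝ) * Real.exp (-(c * r))) atTop (nhds 0) := by
  have hcr : Tendsto (fun r : ℕ => c * (r : ℝ)) atTop atTop :=
    tendsto_natCast_atTop_atTop.const_mul_atTop hc
  have hlim := ((Real.tendsto_pow_mul_exp_neg_atTop_nhds_zero 1).comp hcr).const_mul c⁻¹
  rw [mul_zero] at hlim
  refine hlim.congr fun r => ?_
  simp only [Function.comp_apply, pow_one]
  field_simp

lemma two_pow_div_four_pow_pow_le {r h q : ℕ} (hrq : r ≤ h * q) :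
    (2 : ℝ) ^ r / ((4 ^ h : ℕ) : ℝ) ^ q ≤ (1 / 2) ^ r := by
  calc (2 : ℝ) ^ r / ((4 ^ h : ℕ) : ℝ) ^ q = 2 ^ r / 4 ^ (h * q) := by push_cast; rw [pow_mul]
    _ ≤ 2 ^ r / 4 ^ r := by gcongr; norm_num
    _ = (1 / 2) ^ r := by rw [← div_pow]; norm_num

lemma secondMomentBound_four_pow_le {r h q s : ℕ} (hr : 0 < r) (hh : 4 ≤ h) (hrq : r ≤ h * q)
    (hs : (r : ℝ) * (1 - 2 / h) ≤ s) :
    secondMomentBound (r - 1) (4 ^ h) q s (1 / h) ≤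
      1 / (1 - 2 / (h : ℝ)) ^ 2 +
        (r * Real.exp (-(1 / (4 * h) * r)) / 2 + 4 * (r * (1 / 2 : ℝ) ^ r)) := by
  have : (0 : ℝ) < r := by exact_mod_cast hr
  have hh' : (4 : ℝ) ≤ h := by exact_mod_cast hh
  have hhalf : 2 / (h : ℝ) ≤ 1 / 2 := by rw [div_le_div_iff₀] <;> linarith
  have hgap : 0 < 1 - 2 / (h : ℝ) := by linarith
  have hinv : 1 / (h : ℝ) ≤ 2 / h := by gcongr; norm_num
  have hmain : 2 / ((s : ℝ) * (1 - 1 / h)) ≤ 2 / (r * (1 - 2 / h) ^ 2) := by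
    rw [sq, ← mul_assoc]
    gcongr
  have hexp : Real.exp (-((s : ℝ) * (1 / h) / 2)) ≤ Real.exp (-(1 / (4 * h) * r)) := by
    have hrs : (r : ℝ) * (1 / 2) ≤ s := le_trans (by gcongr; linarith) hs
    rw [Real.exp_le_exp, neg_le_neg_iff]
    calc 1 / (4 * (h : ℝ)) * r = r * (1 / 2) * (1 / h) / 2 := by field_simp; norm_num
      _ ≤ s * (1 / h) / 2 := by gcongr
  have hcast : ((r - 1 : ℕ) : ℝ) + 1 = r := by exact_mod_cast Nat.sub_add_cancel hr
  rw [secondMomentBound, hcast, Nat.sub_add_cancel hr]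
  calc (r : ℝ) * (2 / (s * (1 - 1 / h)) + Real.exp (-(s * (1 / h) / 2))) / 2 +
        4 * r * (2 ^ r / ((4 ^ h : ℕ) : ℝ) ^ q)
      ≤ r * (2 / (r * (1 - 2 / h) ^ 2) + Real.exp (-(1 / (4 * h) * r))) / 2 +
        4 * r * (1 / 2) ^ r := by gcongr; exact two_pow_div_four_pow_pow_le hrq
    _ = _ := by field_simp; ring

lemma exists_secondMomentBound_parameters {r h : ℕ} (hh : 4 ≤ h) (hr : 5 * h ≤ r) :
    ∃ q s : ℕ, 0 < s ∧ s + q + 4 ≤ r ∧ r ≤ h * q ∧ (r : ℝ) * (1 - 2 / h) ≤ s := by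
  have hh' : (4 : ℝ) ≤ h := by exact_mod_cast hh
  have hdiv : (5 : ℝ) ≤ r / h := by rw [le_div_iff₀ (by linarith)]; exact_mod_cast hr
  have hquarter : (r : ℝ) / h ≤ r / 4 := by gcongr
  have hfloor : ((r / h : ℕ) : ℝ) ≤ r / h := Nat.cast_div_le
  have hroom : r / h + 1 + 4 < r := by
    have : ((r / h : ℕ) : ℝ) + 1 + 4 < r := by linarith
    exact_mod_cast this
  refine ⟨r / h + 1, r - (r / h + 1) - 4, by lia, by lia, ?_, ?_⟩
  · exact (Nat.lt_mul_div_succ r (by lia)).le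
  · have hcast : ((r - (r / h + 1) - 4 : ℕ) : ℝ) = r - ((r / h : ℕ) + 1) - 4 := by
      rw [Nat.cast_sub (by lia), Nat.cast_sub (by lia)]
      push_cast
      rfl
    calc (r : ℝ) * (1 - 2 / h) = r - 2 * (r / h) := by ring
      _ ≤ _ := by rw [hcast]; linarith

lemma eventually_exists_secondMomentBound_le {h : ℕ} (hh : 4 ≤ h) {β : ℝ} (hβ : 0 < β) :
    ∀ᶠ r : ℕ in atTop, ∃ q s : ℕ, 0 < s ∧ s + q + 4 ≤ r ∧
      secondMomentBound (r - 1) (4 ^ h) q s (1 / h) ≤ 1 / (1 - 2 / (h : ℝ)) ^ 2 + β := by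
  have herror : Tendsto (fun r : ℕ =>
      (r : ℝ) * Real.exp (-(1 / (4 * h) * r)) / 2 + 4 * (r * (1 / 2 : ℝ) ^ r)) atTop (nhds 0) := by
    have hc : 0 < 1 / (4 * (h : ℝ)) := by positivity
    simpa using ((tendsto_natCast_mul_exp_neg_mul hc).div_const 2).add
      ((tendsto_self_mul_const_pow_of_lt_one (r := (1 / 2 : ℝ)) (by norm_num)
        (by norm_num)).const_mul 4)
  filter_upwards [herror.eventually_le_const hβ, eventually_ge_atTop (5 * h)] with r hsmall hr
  obtain ⟨q, s, hs₀, hsq, hrq, hs⟩ := exists_secondMomentBound_parameters hh hr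
  refine ⟨q, s, hs₀, hsq, (secondMomentBound_four_pow_le (by lia) hh hrq hs).trans ?_⟩
  gcongr

lemma patternFailureBound_le {r G k C m g : ℕ} (hr : 0 < r) (hrC : r ≤ C) {q : ℝ} (hq : 0 ≤ q)
    (hm : (m : ℝ) ≤ r * q + 2) :
    patternFailureBound r G k C r m g ≤
      (12 * ((G * k * k : ℕ) : ℝ) ^ 4 + 16 * G * k ^ 3 + 1299) * (1 / (r : ℝ)) +
        4 * G * k ^ 3 * (r * q ^ 2) + 36 / g := by
  have hr' : (1 : ℝ) ≤ r := by exact_mod_cast hr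
  have hcolor : (1 : ℝ) / C ≤ 1 / r := by gcongr
  have hsquare : 1296 / (r : ℝ) ^ 2 ≤ 1296 / r := by gcongr; exact le_self_pow₀ hr' two_ne_zero
  have hdelete : (r : ℝ) * (m / r) ^ 2 ≤ 2 * (r * q ^ 2) + 8 * (1 / r) := by
    calc (r : ℝ) * (m / r) ^ 2 ≤ r * ((r * q + 2) / r) ^ 2 := by gcongr
      _ = (r * q + 2) ^ 2 / r := by field_simp
      _ ≤ (2 * ((r * q) ^ 2 + 2 ^ 2)) / r := by gcongr; exact add_sq_le
      _ = _ := by field_simp; ring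
  calc patternFailureBound r G k C r m g
      = 12 * ((G * k * k : ℕ) : ℝ) ^ 4 / r + 2 / r +
          (2 * G * k ^ 3 * (r * (m / r : ℝ) ^ 2) + 1 / C) +
          (36 / g + 1296 / (r : ℝ) ^ 2) := by rw [patternFailureBound]; ring
    _ ≤ 12 * ((G * k * k : ℕ) : ℝ) ^ 4 / r + 2 / r +
          (2 * G * k ^ 3 * (2 * (r * q ^ 2) + 8 * (1 / r)) + 1 / r) +
          (36 / g + 1296 / r) := by gcongr
    _ = _ := by ring

variable {ι : Type*} {l : Filter ι} {r C : ι → ℕ} {q₀ : ι → ℝ}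

lemma eventually_patternFailureBound_le (hr : Tendsto r l atTop) (hrC : ∀ᶠ i in l, r i ≤ C i)
    (hq₀ : ∀ᶠ i in l, 0 ≤ q₀ i) (hrq : Tendsto (fun i => r i * q₀ i ^ 2) l (nhds 0))
    (G k g : ℕ) {β : ℝ} (hβ : 0 < β) :
    ∀ᶠ i in l, patternFailureBound (r i) G k (C i) (r i) (⌈r i * q₀ i⌉₊ + 1) g ≤ 36 / g + β := by
  have hinv : Tendsto (fun i => 1 / (r i : ℝ)) l (nhds 0) :=
    tendsto_one_div_atTop_nhds_zero_nat.comp hr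
  have herror := (hinv.const_mul (12 * ((G * k * k : ℕ) : ℝ) ^ 4 + 16 * G * k ^ 3 + 1299)).add
    (hrq.const_mul (4 * G * k ^ 3 : ℝ))
  rw [mul_zero, mul_zero, add_zero] at herror
  filter_upwards [herror.eventually_le_const hβ, hrC, hq₀, hr.eventually_gt_atTop 0]
    with i hsmall hrC hq₀ hr
  have hceil : ((⌈r i * q₀ i⌉₊ + 1 : ℕ) : ℝ) ≤ r i * q₀ i + 2 := by
    have := Nat.ceil_lt_add_one (mul_nonneg (r i).cast_nonneg hq₀)
    push_cast
    linarith
  linarith [patternFailureBound_le (G := G) (k := k) (g := g) hr hrC hq₀ hceil]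

lemma eventually_ten_mul_ceil_le (hr : Tendsto r l atTop) (hq₀ : ∀ᶠ i in l, 0 ≤ q₀ i)
    (hrq : Tendsto (fun i => r i * q₀ i ^ 2) l (nhds 0)) :
    ∀ᶠ i in l, 10 * (⌈r i * q₀ i⌉₊ + 1) ≤ r i := by
  filter_upwards [hrq.eventually_le_const (by norm_num : (0 : ℝ) < 1 / 400), hq₀,
    hr.eventually_ge_atTop 40] with i hsmall hq₀ hr
  have hr' : (40 : ℝ) ≤ r i := by exact_mod_cast hr
  have hq : q₀ i ≤ 1 / 20 := by
    refine le_of_sq_le_sq ?_ (by norm_num)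
    nlinarith [sq_nonneg (q₀ i)]
  have hceil := Nat.ceil_lt_add_one (mul_nonneg (r i).cast_nonneg hq₀)
  have : (10 : ℝ) * (⌈r i * q₀ i⌉₊ + 1) ≤ r i := by nlinarith
  exact_mod_cast this

lemma one_div_one_sub_sq_le {x : ℝ} (hx₀ : 0 ≤ x) (hx : x ≤ 1 / 8) :
    1 / (1 - x) ^ 2 ≤ 1 + 4 * x := by
  rw [div_le_iff₀ (by have : 0 < 1 - x := by linarith
                      positivity)]
  nlinarith [mul_nonneg hx₀ (mul_nonneg hx₀ hx₀), mul_nonneg hx₀ (by linarith : 0 ≤ 2 - 7 * x)]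

lemma one_sub_le_one_sub_two_mul_div {τ h g d D : ℝ} (hτ₀ : 0 < τ) (hτ₁ : τ < 1)
    (hh : 16 / τ ≤ h) (hg : 576 / τ ≤ g) (hD₀ : 0 < D) (hd : d ≤ 36 / g + τ / 16)
    (hD : D ≤ 1 / (1 - 2 / h) ^ 2 + τ / 16) : 1 - τ ≤ (1 - 2 * d) / D := by
  have hh₀ : 0 < h := lt_of_lt_of_le (by positivity) hh
  have hg₀ : 0 < g := lt_of_lt_of_le (by positivity) hg
  rw [div_le_iff₀ hτ₀] at hh hg
  have hg' : 36 / g ≤ τ / 16 := by rw [div_le_div_iff₀] <;> linarith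
  have hh' : 2 / h ≤ τ / 8 := by rw [div_le_div_iff₀] <;> linarith
  have hD' : D ≤ 1 + 9 * τ / 16 := by
    linarith [one_div_one_sub_sq_le (x := 2 / h) (by positivity) (by linarith)]
  rw [le_div_iff₀ hD₀]
  calc (1 - τ) * D ≤ (1 - τ) * (1 + 9 * τ / 16) := by gcongr
    _ ≤ 1 - 2 * d := by nlinarith [mul_pos hτ₀ hτ₀]

variable {δp δm : ∀ i, Fin (r i) → ℕ}

theorem eventually_ofReal_one_sub_le_gammaM (hr : Tendsto r l atTop)
    (hrC : ∀ᶠ i in l, 160 * r i ≤ C i)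
    (hδ : ∀ d, ∀ᶠ i in l, ∀ v, d ≤ δp i v ∧ d ≤ δm i v)
    (hδr : ∀ᶠ i in l, ∀ v, δp i v + 1 ≤ r i ∧ δm i v + 1 ≤ r i)
    (hq₀ : ∀ᶠ i in l, 0 ≤ q₀ i) (hrq : Tendsto (fun i => r i * q₀ i ^ 2) l (nhds 0))
    {τ : ℝ} (hτ₀ : 0 < τ) (hτ₁ : τ < 1) :
    ∀ᶠ i in l, ENNReal.ofReal (1 - τ) ≤
      gammaM (r i) (C i) (δp i) (δm i) (q₀ i) {ω | HasRainbowDirHamCycle ω} := by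
  obtain ⟨h, hh⟩ := exists_nat_ge (16 / τ)
  obtain ⟨g, hg⟩ := exists_nat_ge (576 / τ)
  have hh₄ : 4 ≤ h := by
    have : (4 : ℝ) ≤ h := le_trans (by rw [le_div_iff₀ hτ₀]; linarith) hh
    exact_mod_cast this
  have hg₀ : 0 < g := by
    have : (0 : ℝ) < g := lt_of_lt_of_le (by positivity) hg
    exact_mod_cast this
  have hη : 1 / (h : ℝ) < 1 := by
    rw [div_lt_one (by positivity)]
    exact_mod_cast (by lia : 1 < h)
  have hrC' : ∀ᶠ i in l, r i ≤ C i := hrC.mono fun i hi => by lia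
  have hβ : 0 < τ / 16 := by positivity
  filter_upwards [hr.eventually (eventually_exists_secondMomentBound_le hh₄ hβ),
    eventually_patternFailureBound_le hr hrC' hq₀ hrq (4 ^ h) 40 g hβ,
    eventually_ten_mul_ceil_le hr hq₀ hrq, hr.eventually_ge_atTop (5 + 8 * (4 ^ h * 40 * 40)),
    hrC, hδ (4 ^ h * 40 * 40 + g), hδr, hq₀]
    with i ⟨q, s, hs, hsq, hsecond⟩ hfailure hceil hr hrC hδ hδr hq₀
  have hrate : q₀ i ≤ ((⌈r i * q₀ i⌉₊ + 1 : ℕ) : ℝ) / (r i : ℕ) := by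
    rw [le_div_iff₀ (by exact_mod_cast (by lia : 0 < r i)), mul_comm]
    push_cast
    linarith [Nat.le_ceil (r i * q₀ i)]
  refine (ENNReal.ofReal_le_ofReal (one_sub_le_one_sub_two_mul_div hτ₀ hτ₁ hh hg
    (secondMomentBound_pos hη) hfailure hsecond)).trans ?_
  exact ofReal_div_secondMomentBound_le_gammaM (δ := Sum.elim (δp i) (δm i)) le_rfl
    (by positivity) hg₀ (by lia) (by lia) (Nat.succ_pos _) hceil hr hs hsq hη
    (Sum.rec (fun v => (hδ v).1) fun v => (hδ v).2)
    (Sum.rec (fun v => (hδr v).1) fun v => (hδr v).2) hq₀ hrate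

theorem gamma_rainbow_dir_ham_whp_general (hr : Tendsto r l atTop)
    (hrC : ∀ᶠ i in l, 160 * r i ≤ C i)
    (hδ : ∀ d, ∀ᶠ i in l, ∀ v, d ≤ δp i v ∧ d ≤ δm i v)
    (hδr : ∀ᶠ i in l, ∀ v, δp i v + 1 ≤ r i ∧ δm i v + 1 ≤ r i)
    (hq₀ : ∀ᶠ i in l, 0 ≤ q₀ i) (hrq : Tendsto (fun i => r i * q₀ i ^ 2) l (nhds 0)) :
    Tendsto (fun i => gammaM (r i) (C i) (δp i) (δm i) (q₀ i) {ω | HasRainbowDirHamCycle ω})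
      l (nhds 1) := by
  refine tendsto_order.mpr ⟨fun a ha => ?_, fun a ha => ?_⟩
  · have ha' : a.toReal < 1 := by simpa using ENNReal.toReal_strict_mono ENNReal.one_ne_top ha
    have ha₀ : 0 ≤ a.toReal := ENNReal.toReal_nonneg
    filter_upwards [eventually_ofReal_one_sub_le_gammaM hr hrC hδ hδr hq₀ hrq
      (τ := (1 - a.toReal) / 2) (by linarith) (by linarith)] with i hi
    refine lt_of_lt_of_le ?_ hi
    rw [ENNReal.lt_ofReal_iff_toReal_lt ha.ne_top]
    linarith
  · filter_upwards [hrC, hδr, hr.eventually_gt_atTop 0] with i hrC hδr hr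
    have : Nonempty (Fin (C i)) := Fin.pos_iff_nonempty.mp (by lia)
    exact (gammaM_le_one (fun v => (hδr v).1) (fun v => (hδr v).2) _ _).trans_lt ha

end Asymptotics

section Parameters

/-- The range of the paper's parameters, `100/√ℓ < ε, θ` and `ε ≤ 1`, where `ℓ` stands for
`log log n`. -/
structure IsAdmissible (ℓ ε θ : ℝ) : Prop where
  pos : 0 < ℓ
  lt_eps : 100 / √ℓ < ε
  eps_le_one : ε ≤ 1
  lt_theta : 100 / √ℓ < θ

namespace IsAdmissible

variable {ℓ ε θ : ℝ} (h : IsAdmissible ℓ ε θ)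

include h

lemma eps_pos : 0 < ε := lt_of_le_of_lt (by positivity) h.lt_eps

lemma theta_pos : 0 < θ := lt_of_le_of_lt (by positivity) h.lt_theta

lemma th1_pos : 0 < th1 ε θ := by
  have hε := h.eps_pos
  have hθ := h.theta_pos
  exact lt_min (by positivity) (by positivity)

lemma eps_mul_th1_pos : 0 < ε / 3 * th1 ε θ :=
  mul_pos (div_pos h.eps_pos three_pos) h.th1_pos

lemma div_le_eps_mul_th1 : 277 / ℓ ≤ ε / 3 * th1 ε θ := by
  have hℓ := h.pos
  have hε := h.lt_eps
  have hθ := h.lt_theta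
  have hpos : 0 < 100 / √ℓ := by positivity
  have hth1 : 100 / √ℓ / 12 ≤ th1 ε θ := le_min (by linarith) (by linarith)
  calc 277 / ℓ ≤ 10000 / ℓ / 36 := by rw [div_div, div_le_div_iff₀ hℓ (by positivity)]; linarith
    _ = 100 / √ℓ / 3 * (100 / √ℓ / 12) := by
      nth_rw 1 [← Real.mul_self_sqrt hℓ.le]
      field_simp
      norm_num
    _ ≤ ε / 3 * th1 ε θ := by gcongr; linarith [h.eps_pos]

lemma Lparam_eq : Lparam ε θ = 15 * Real.exp (40 / (ε / 3 * th1 ε θ)) := by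
  refine max_eq_left ?_
  have hth1 := h.th1_pos
  have hprod := h.eps_mul_th1_pos
  calc 7 / th1 ε θ ≤ 40 / (ε / 3 * th1 ε θ) := by
        rw [div_le_div_iff₀ hth1 hprod]
        nlinarith [h.eps_le_one]
    _ ≤ 15 * Real.exp (40 / (ε / 3 * th1 ε θ)) := by
        linarith [Real.add_one_le_exp (40 / (ε / 3 * th1 ε θ)),
          Real.exp_pos (40 / (ε / 3 * th1 ε θ))]

lemma one_le_Lparam : 1 ≤ Lparam ε θ := by
  rw [h.Lparam_eq]
  linarith [Real.one_le_exp (div_pos (by norm_num : (0 : ℝ) < 40) h.eps_mul_th1_pos).le]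

lemma Lparam_le : Lparam ε θ ≤ 15 * Real.exp (ℓ / 4) := by
  have hlower := h.div_le_eps_mul_th1
  rw [div_le_iff₀ h.pos] at hlower
  have hexponent : 40 / (ε / 3 * th1 ε θ) ≤ ℓ / 4 := by
    rw [div_le_iff₀ h.eps_mul_th1_pos]
    linarith
  rw [h.Lparam_eq]
  gcongr

lemma le_th1_mul_Lparam : 1800 ≤ th1 ε θ * Lparam ε θ := by
  have hε := h.eps_pos
  have hth1 := h.th1_pos
  rw [h.Lparam_eq]
  calc (1800 : ℝ) ≤ 1800 / ε := by rw [le_div_iff₀ hε]; linarith [h.eps_le_one]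
    _ = th1 ε θ * (15 * (40 / (ε / 3 * th1 ε θ))) := by field_simp; norm_num
    _ ≤ th1 ε θ * (15 * Real.exp (40 / (ε / 3 * th1 ε θ))) := by
      gcongr
      linarith [Real.add_one_le_exp (40 / (ε / 3 * th1 ε θ))]

lemma div_le_degree : ℓ / 1000 ≤ ε / 3 * th1 ε θ / (200 * Lparam ε θ) * Real.exp ℓ := by
  have hℓ := h.pos
  have hL : 0 < Lparam ε θ := one_pos.trans_le h.one_le_Lparam
  have hexp : Real.exp ℓ = Real.exp (ℓ / 4) ^ 4 := by rw [← Real.exp_nat_mul]; congr 1; ring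
  have hE₁ : 1 ≤ Real.exp (ℓ / 4) := Real.one_le_exp (by linarith)
  have hE₂ : ℓ ≤ 4 * Real.exp (ℓ / 4) := by linarith [Real.add_one_le_exp (ℓ / 4)]
  have hE₃ : ℓ * ℓ ≤ 16 * Real.exp (ℓ / 4) ^ 3 := by
    calc ℓ * ℓ ≤ 4 * Real.exp (ℓ / 4) * (4 * Real.exp (ℓ / 4)) := by gcongr
      _ = 16 * Real.exp (ℓ / 4) ^ 2 := by ring
      _ ≤ 16 * Real.exp (ℓ / 4) ^ 3 := by gcongr; norm_num
  calc ℓ / 1000 ≤ 277 * Real.exp (ℓ / 4) ^ 3 / (3000 * ℓ) := by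
        rw [div_le_div_iff₀ (by norm_num) (by positivity)]
        nlinarith [Real.exp_pos (ℓ / 4)]
    _ = 277 / ℓ / (200 * (15 * Real.exp (ℓ / 4))) * Real.exp ℓ := by
        rw [hexp]; field_simp; norm_num
    _ ≤ ε / 3 * th1 ε θ / (200 * Lparam ε θ) * Real.exp ℓ := by
        gcongr
        exacts [h.eps_mul_th1_pos.le, h.div_le_eps_mul_th1, h.Lparam_le]

lemma mul_le_floor_th1_mul {n : ℝ} {r : ℕ} (hr : (r : ℝ) ≤ n / Lparam ε θ) :
    160 * r ≤ ⌊th1 ε θ * n⌋₊ := by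
  have hth1 := h.th1_pos
  rw [le_div_iff₀ (one_pos.trans_le h.one_le_Lparam)] at hr
  refine Nat.le_floor ?_
  push_cast
  calc 160 * (r : ℝ) ≤ 1800 * r := by gcongr; norm_num
    _ ≤ th1 ε θ * Lparam ε θ * r := by gcongr; exact h.le_th1_mul_Lparam
    _ = th1 ε θ * (r * Lparam ε θ) := by ring
    _ ≤ th1 ε θ * n := by gcongr

lemma six_mul_exp_le {n r : ℝ} (hn : 1000 * Real.exp ℓ ^ 2 ≤ n) (hr : n / (2 * Lparam ε θ) ≤ r) :
    6 * Real.exp ℓ ≤ r := by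
  have hL : Lparam ε θ ≤ 15 * Real.exp ℓ := h.Lparam_le.trans (by gcongr; linarith [h.pos])
  refine le_trans ?_ hr
  rw [le_div_iff₀ (by linarith [h.one_le_Lparam])]
  nlinarith [Real.exp_pos ℓ]

end IsAdmissible

lemma tendsto_log_natCast_atTop : Tendsto (fun n : ℕ => Real.log n) atTop atTop :=
  Real.tendsto_log_atTop.comp tendsto_natCast_atTop_atTop

lemma tendsto_log_log_natCast_atTop :
    Tendsto (fun n : ℕ => Real.log (Real.log n)) atTop atTop :=
  Real.tendsto_log_atTop.comp tendsto_log_natCast_atTop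

lemma eventually_exp_log_log_natCast :
    ∀ᶠ n : ℕ in atTop, Real.exp (Real.log (Real.log n)) = Real.log n :=
  (tendsto_log_natCast_atTop.eventually_gt_atTop 0).mono fun _ => Real.exp_log

lemma tendsto_log_sq_div_natCast :
    Tendsto (fun n : ℕ => Real.log n ^ 2 / n) atTop (nhds 0) :=
  (Real.isLittleO_pow_log_id_atTop (n := 2)).tendsto_div_nhds_zero.comp tendsto_natCast_atTop_atTop

variable {ε θ q₀ : ℕ → ℝ} {r : ℕ → ℕ} {δ : ∀ n : ℕ, Fin (r n) → ℕ}

lemma eventually_isAdmissible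
    (hε : ∀ᶠ n : ℕ in atTop, 100 / √(Real.log (Real.log n)) < ε n ∧ ε n ≤ 1)
    (hθ : ∀ᶠ n : ℕ in atTop, 100 / √(Real.log (Real.log n)) < θ n) :
    ∀ᶠ n : ℕ in atTop, IsAdmissible (Real.log (Real.log n)) (ε n) (θ n) := by
  filter_upwards [hε, hθ, tendsto_log_log_natCast_atTop.eventually_gt_atTop 0] with n hε hθ hlog
  exact ⟨hlog, hε.1, hε.2, hθ⟩

section

variable (h : ∀ᶠ n : ℕ in atTop, IsAdmissible (Real.log (Real.log n)) (ε n) (θ n))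

include h

lemma eventually_six_mul_log_le
    (hr : ∀ᶠ n : ℕ in atTop, (n : ℝ) / (2 * Lparam (ε n) (θ n)) ≤ r n) :
    ∀ᶠ n : ℕ in atTop, 6 * Real.log n ≤ r n := by
  filter_upwards [h, hr, eventually_exp_log_log_natCast, eventually_gt_atTop 0,
    tendsto_log_sq_div_natCast.eventually_le_const (by norm_num : (0 : ℝ) < 1 / 1000)]
    with n h hr hexp hn hsmall
  rw [div_le_iff₀ (by exact_mod_cast hn)] at hsmall
  rw [← hexp]
  exact h.six_mul_exp_le (by rw [hexp]; linarith) hr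

lemma eventually_le_degree (hδ : ∀ᶠ n : ℕ in atTop, ∀ v,
      ε n / 3 * th1 (ε n) (θ n) / (200 * Lparam (ε n) (θ n)) * Real.log n ≤ δ n v) (d : ℕ) :
    ∀ᶠ n : ℕ in atTop, ∀ v, d ≤ δ n v := by
  filter_upwards [h, hδ, eventually_exp_log_log_natCast,
    tendsto_log_log_natCast_atTop.eventually_ge_atTop (1000 * d : ℝ)] with n h hδ hexp hlog v
  have hlower := h.div_le_degree
  rw [hexp] at hlower
  have : (d : ℝ) ≤ δ n v := by linarith [hδ v]
  exact_mod_cast this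

lemma tendsto_mul_sq_of_le_log_div
    (hr : ∀ᶠ n : ℕ in atTop, (r n : ℝ) ≤ n / Lparam (ε n) (θ n))
    (hq₀ : ∀ᶠ n : ℕ in atTop, 0 ≤ q₀ n ∧ q₀ n ≤ Real.log n / n) :
    Tendsto (fun n => r n * q₀ n ^ 2) atTop (nhds 0) := by
  refine squeeze_zero' (.of_forall fun n => by positivity) ?_ tendsto_log_sq_div_natCast
  filter_upwards [h, hr, hq₀, eventually_gt_atTop 0] with n h hr ⟨hq₀, hq⟩ hn
  have hrn : (r n : ℝ) ≤ n := hr.trans (div_le_self n.cast_nonneg h.one_le_Lparam)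
  calc (r n : ℝ) * q₀ n ^ 2 ≤ n * (Real.log n / n) ^ 2 := by gcongr
    _ = Real.log n ^ 2 / n := by field_simp

end

lemma eventually_degree_add_one_le (hr : ∀ᶠ n : ℕ in atTop, 6 * Real.log n ≤ r n)
    (hδ : ∀ᶠ n : ℕ in atTop, ∀ v, (δ n v : ℝ) ≤ 5 * Real.log n) :
    ∀ᶠ n : ℕ in atTop, ∀ v, δ n v + 1 ≤ r n := by
  filter_upwards [hr, hδ, tendsto_log_natCast_atTop.eventually_ge_atTop 1] with n hr hδ hlog v
  have : (δ n v : ℝ) + 1 ≤ r n := by linarith [hδ v]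
  exact_mod_cast this

end Parameters

/-- With the parameters of the paper
(`100/√(log log n) < ε, θ ≤ 1`, `θ₁ = θ₃ = min(θ/3, ε₂/4)`,
`L = max(15·e^{40/(ε₃θ₃)}, 7/θ₁)`, `n/(2L) ≤ r ≤ n/L`, all degrees `δ±` between
`(ε₁θ₁/(200L))·log n` and `5·log n`, palette of `⌊θ₁·n⌋` colors, deletion probability
`q₀ ≤ log n / n`), the random colored digraph `Γ` contains a rainbow directed Hamilton
cycle with high probability. -/
theorem gamma_rainbow_dir_ham_whp (ε θ : ℕ → ℝ) (r : ℕ → ℕ)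
    (δp δm : ∀ n : ℕ, Fin (r n) → ℕ) (q₀ : ℕ → ℝ)
    (hε : ∀ᶠ n : ℕ in atTop,
      100 / Real.sqrt (Real.log (Real.log n)) < ε n ∧ ε n ≤ 1)
    (hθ : ∀ᶠ n : ℕ in atTop,
      100 / Real.sqrt (Real.log (Real.log n)) < θ n ∧ θ n ≤ 1)
    (hr : ∀ᶠ n : ℕ in atTop,
      (n : ℝ) / (2 * Lparam (ε n) (θ n)) ≤ r n ∧ (r n : ℝ) ≤ n / Lparam (ε n) (θ n))
    (hδp : ∀ᶠ n : ℕ in atTop, ∀ k : Fin (r n),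
      ε n / 3 * th1 (ε n) (θ n) / (200 * Lparam (ε n) (θ n)) * Real.log n ≤ δp n k ∧
      (δp n k : ℝ) ≤ 5 * Real.log n)
    (hδm : ∀ᶠ n : ℕ in atTop, ∀ k : Fin (r n),
      ε n / 3 * th1 (ε n) (θ n) / (200 * Lparam (ε n) (θ n)) * Real.log n ≤ δm n k ∧
      (δm n k : ℝ) ≤ 5 * Real.log n)
    (hq₀ : ∀ᶠ n : ℕ in atTop, 0 ≤ q₀ n ∧ q₀ n ≤ Real.log n / n) :
    Tendsto
      (fun n : ℕ =>
        gammaM (r n) ⌊th1 (ε n) (θ n) * n⌋₊ (δp n) (δm n) (q₀ n)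
          {ω | HasRainbowDirHamCycle ω})
      atTop (nhds 1) := by
  have hadm := eventually_isAdmissible hε (hθ.mono fun _ h => h.1)
  have hlog := eventually_six_mul_log_le hadm (hr.mono fun _ h => h.1)
  have hr_atTop : Tendsto r atTop atTop := tendsto_natCast_atTop_iff.mp <|
    tendsto_atTop_mono' _ hlog (tendsto_log_natCast_atTop.const_mul_atTop (by norm_num))
  refine gamma_rainbow_dir_ham_whp_general hr_atTop ?_ (fun d => ?_) ?_ (hq₀.mono fun _ h => h.1)
    (tendsto_mul_sq_of_le_log_div hadm (hr.mono fun _ h => h.2) hq₀)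
  · filter_upwards [hadm, hr] with n hadm hr using hadm.mul_le_floor_th1_mul hr.2
  · filter_upwards [eventually_le_degree hadm (hδp.mono fun _ h k => (h k).1) d,
      eventually_le_degree hadm (hδm.mono fun _ h k => (h k).1) d] with n hp hm v
    exact ⟨hp v, hm v⟩
  · filter_upwards [eventually_degree_add_one_le hlog (hδp.mono fun _ h k => (h k).2),
      eventually_degree_add_one_le hlog (hδm.mono fun _ h k => (h k).2)] with n hp hm v
    exact ⟨hp v, hm v⟩
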